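/- Let X = ℝ² or X = Q = [−1,1]², equipped with the maximum metric d_m, and let p ≥ 1. Then the Wasserstein space 𝒲_p(X) is isometrically rigid: for every isometry Φ : 𝒲_p(X) → 𝒲_p(X) there exists a unique isometry T : (X,d_m) → (X,d_m) such that Φ(μ) = T_#μ for all μ ∈ 𝒲_p(X), where T_#μ denotes the push-forward of μ by T. -/

import Mathlib

open MeasureTheory

/-- The `p`-Wasserstein distance between two measures, defined as the infimum over all
couplings `π` of `μ` and `ν` of `(∬ d(x,y)^p dπ)^(1/p)`. -/
noncomputable def Wdist {X : Type*} [MeasurableSpace X] [PseudoMetricSpace X] (p : ℝ)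
    (μ ν : Measure X) : ℝ :=
  (⨅ π ∈ {π : Measure (X × X) | π.map Prod.fst = μ ∧ π.map Prod.snd = ν},
    (∫⁻ q, edist q.1 q.2 ^ p ∂π) ^ (1 / p)).toReal

/-- The `p`-Wasserstein space over `X`: Borel probability measures on `X` with finite
`p`-th moment. -/
def WSet (X : Type*) [MeasurableSpace X] [PseudoMetricSpace X] (p : ℝ) : Set (Measure X) :=
  {μ | IsProbabilityMeasure μ ∧ ∃ x₀ : X, ∫⁻ x, edist x x₀ ^ p ∂μ < ⊤}

/-- An isometry of the underlying metric space: a distance-preserving bijection. -/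
def IsIsom {X : Type*} [PseudoMetricSpace X] (T : X → X) : Prop :=
  Function.Bijective T ∧ ∀ x y, dist (T x) (T y) = dist x y

/-- An isometry of the `p`-Wasserstein space over `X`: a bijection of the space of
probability measures with finite `p`-th moment preserving the Wasserstein distance. -/
def IsWIsometry (X : Type*) [MeasurableSpace X] [PseudoMetricSpace X] (p : ℝ)
    (Φ : Measure X → Measure X) : Prop :=
  Set.BijOn Φ (WSet X p) (WSet X p) ∧
    ∀ μ ∈ WSet X p, ∀ ν ∈ WSet X p, Wdist p (Φ μ) (Φ ν) = Wdist p μ ν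

/-- The (topological) support of a measure. -/
def msupport {X : Type*} [TopologicalSpace X] [MeasurableSpace X] (μ : Measure X) : Set X :=
  {x | ∀ U : Set X, IsOpen U → x ∈ U → μ U ≠ 0}

def diagLine (ε a : ℝ) : Set (ℝ × ℝ) := {z | z.2 = ε * z.1 + a}

def Lplus : Set (ℝ × ℝ) := {z | z.2 = z.1}

def Lminus : Set (ℝ × ℝ) := {z | z.2 = -z.1}

/-- The closed square `Q = [-1,1]²`. -/
abbrev Qs : Set (ℝ × ℝ) := Set.Icc (-1, -1) (1, 1)

def LplusQ : Set ↥Qs := {q | (q : ℝ × ℝ).2 = (q : ℝ × ℝ).1}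

def LminusQ : Set ↥Qs := {q | (q : ℝ × ℝ).2 = -(q : ℝ × ℝ).1}


set_option linter.unusedSectionVars false
set_option linter.unusedSectionVars false

namespace WR

open Set Filter Topology
open scoped ENNReal NNReal

section Basic

variable {X : Type*} [MetricSpace X] [MeasurableSpace X] [BorelSpace X]
  [SecondCountableTopology X]

/-- couplings -/
def Cpl (π : Measure (X × X)) (μ ν : Measure X) : Prop :=
  π.map Prod.fst = μ ∧ π.map Prod.snd = ν

/-- optimal transport cost -/
noncomputable def K (p : ℝ) (μ ν : Measure X) : ℝ≥0∞ :=
  ⨅ π ∈ {π : Measure (X × X) | π.map Prod.fst = μ ∧ π.map Prod.snd = ν},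
    ∫⁻ q, edist q.1 q.2 ^ p ∂π

lemma K_le {p : ℝ} {μ ν : Measure X} {π : Measure (X × X)} (h : Cpl π μ ν) :
    K p μ ν ≤ ∫⁻ q, edist q.1 q.2 ^ p ∂π := iInf₂_le π h

lemma le_K {p : ℝ} {μ ν : Measure X} {a : ℝ≥0∞}
    (h : ∀ π, Cpl π μ ν → a ≤ ∫⁻ q, edist q.1 q.2 ^ p ∂π) : a ≤ K p μ ν :=
  le_iInf₂ h

lemma exists_of_K_lt {p : ℝ} {μ ν : Measure X} {b : ℝ≥0∞} (h : K p μ ν < b) :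
    ∃ π, Cpl π μ ν ∧ ∫⁻ q, edist q.1 q.2 ^ p ∂π < b := by
  simp only [K, iInf_lt_iff] at h
  obtain ⟨π, h1, h2⟩ := h
  exact ⟨π, h1, h2⟩

lemma Wdist_eq {p : ℝ} (hp : 1 ≤ p) (μ ν : Measure X) :
    Wdist p μ ν = ((K p μ ν) ^ (1 / p)).toReal := by
  have h0 : 0 < 1 / p := by positivity
  unfold Wdist K
  congr 1
  have := fun (f : Measure (X × X) → ℝ≥0∞) (s : Set (Measure (X × X))) =>
    (ENNReal.orderIsoRpow (1 / p) h0).map_iInf₂ (fun π (_ : π ∈ s) => f π)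
  exact (this (fun π => ∫⁻ q, edist q.1 q.2 ^ p ∂π) _).symm

lemma meas_edist (p : ℝ) : Measurable fun q : X × X => edist q.1 q.2 ^ p :=
  (measurable_edist).pow_const p

lemma meas_edist_left (p : ℝ) (w : X) : Measurable fun z : X => edist z w ^ p :=
  (measurable_id.edist measurable_const).pow_const p

lemma prod_cpl (μ ν : Measure X) [IsProbabilityMeasure μ] [IsProbabilityMeasure ν] :
    Cpl (μ.prod ν) μ ν := by
  constructor
  · have := Measure.fst_prod (μ := μ) (ν := ν); exact this
  · have := Measure.snd_prod (μ := μ) (ν := ν); exact this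

lemma Cpl.lint_fst {π : Measure (X × X)} {μ ν : Measure X} (h : Cpl π μ ν) {f : X → ℝ≥0∞}
    (hf : Measurable f) : ∫⁻ q, f q.1 ∂π = ∫⁻ z, f z ∂μ := by
  rw [← h.1, lintegral_map hf measurable_fst]

lemma Cpl.lint_snd {π : Measure (X × X)} {μ ν : Measure X} (h : Cpl π μ ν) {f : X → ℝ≥0∞}
    (hf : Measurable f) : ∫⁻ q, f q.2 ∂π = ∫⁻ z, f z ∂ν := by
  rw [← h.2, lintegral_map hf measurable_snd]

lemma Cpl.ae_fst {π : Measure (X × X)} {μ ν : Measure X} (h : Cpl π μ ν) {P : X → Prop}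
    (hP : ∀ᵐ z ∂μ, P z) : ∀ᵐ q ∂π, P q.1 := by
  rw [← h.1] at hP
  exact ae_of_ae_map measurable_fst.aemeasurable hP

lemma Cpl.ae_snd {π : Measure (X × X)} {μ ν : Measure X} (h : Cpl π μ ν) {P : X → Prop}
    (hP : ∀ᵐ z ∂ν, P z) : ∀ᵐ q ∂π, P q.2 := by
  rw [← h.2] at hP
  exact ae_of_ae_map measurable_snd.aemeasurable hP

lemma Cpl.swap {π : Measure (X × X)} {μ ν : Measure X} (h : Cpl π μ ν) :
    Cpl (π.map Prod.swap) ν μ := by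
  constructor
  · rw [Measure.map_map measurable_fst measurable_swap]; exact h.2
  · rw [Measure.map_map measurable_snd measurable_swap]; exact h.1

lemma K_comm (p : ℝ) (μ ν : Measure X) : K p μ ν = K p ν μ := by
  have key : ∀ μ ν : Measure X, K p μ ν ≤ K p ν μ := by
    intro μ ν
    refine le_K fun π hπ => (K_le hπ.swap).trans_eq ?_
    rw [lintegral_map (meas_edist p) measurable_swap]
    simp [edist_comm]
  exact le_antisymm (key _ _) (key _ _)

lemma ae_dirac_eq' (x : X) : ∀ᵐ z ∂(Measure.dirac x), z = x := by
  rw [ae_dirac_eq]; rfl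

lemma K_dirac (p : ℝ) (μ : Measure X) [IsProbabilityMeasure μ] (x : X) :
    K p μ (Measure.dirac x) = ∫⁻ z, edist z x ^ p ∂μ := by
  have key : ∀ π, Cpl π μ (Measure.dirac x) →
      ∫⁻ q, edist q.1 q.2 ^ p ∂π = ∫⁻ z, edist z x ^ p ∂μ := by
    intro π hπ
    rw [← hπ.lint_fst (meas_edist_left p x)]
    refine lintegral_congr_ae ?_
    filter_upwards [hπ.ae_snd (ae_dirac_eq' x)] with q hq
    rw [hq]
  apply le_antisymm
  · exact (K_le (prod_cpl _ _)).trans_eq (key _ (prod_cpl _ _))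
  · exact le_K fun π hπ => (key π hπ).ge

lemma K_dirac' (p : ℝ) (μ : Measure X) [IsProbabilityMeasure μ] (x : X) :
    K p (Measure.dirac x) μ = ∫⁻ z, edist z x ^ p ∂μ := by
  rw [K_comm, K_dirac]

lemma rpow_add_le {p : ℝ} (hp : 1 ≤ p) (a b : ℝ≥0∞) :
    (a + b) ^ p ≤ 2 ^ (p - 1) * (a ^ p + b ^ p) :=
  ENNReal.rpow_add_le_mul_rpow_add_rpow a b hp

lemma WSet.moment {p : ℝ} (hp : 1 ≤ p) {μ : Measure X} (h : μ ∈ WSet X p) (w : X) :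
    ∫⁻ z, edist z w ^ p ∂μ < ⊤ := by
  obtain ⟨hμ, x₀, hx⟩ := h
  have h0 : 0 ≤ p := by linarith
  calc ∫⁻ z, edist z w ^ p ∂μ
      ≤ ∫⁻ z, 2 ^ (p - 1) * (edist z x₀ ^ p + edist x₀ w ^ p) ∂μ := by
        refine lintegral_mono fun z => ?_
        exact (ENNReal.rpow_le_rpow (edist_triangle z x₀ w) h0).trans (rpow_add_le hp _ _)
    _ = 2 ^ (p - 1) * (∫⁻ z, edist z x₀ ^ p ∂μ + edist x₀ w ^ p) := by
        rw [lintegral_const_mul _ (by fun_prop), lintegral_add_right _ measurable_const]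
        simp
    _ < ⊤ := by
        refine ENNReal.mul_lt_top (ENNReal.rpow_lt_top_of_nonneg (by linarith) (by simp)) ?_
        exact ENNReal.add_lt_top.2 ⟨hx, ENNReal.rpow_lt_top_of_nonneg h0 (edist_ne_top _ _)⟩

lemma K_lt_top {p : ℝ} (hp : 1 ≤ p) {μ ν : Measure X} (h : μ ∈ WSet X p) (h' : ν ∈ WSet X p) :
    K p μ ν < ⊤ := by
  have h0 : 0 ≤ p := by linarith
  have := h.1
  have := h'.1
  obtain ⟨x⟩ : Nonempty X := μ.nonempty_of_neZero
  refine (K_le (prod_cpl μ ν)).trans_lt ?_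
  calc ∫⁻ q, edist q.1 q.2 ^ p ∂(μ.prod ν)
      ≤ ∫⁻ q, 2 ^ (p - 1) * (edist q.1 x ^ p + edist q.2 x ^ p) ∂(μ.prod ν) := by
        refine lintegral_mono fun z => ?_
        refine (ENNReal.rpow_le_rpow (edist_triangle_right z.1 z.2 x) h0).trans (rpow_add_le hp _ _)
    _ = 2 ^ (p - 1) * (∫⁻ z, edist z x ^ p ∂μ + ∫⁻ z, edist z x ^ p ∂ν) := by
        rw [lintegral_const_mul _ (by fun_prop), lintegral_add_right _ (by fun_prop),
          (prod_cpl μ ν).lint_fst (meas_edist_left p x),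
          (prod_cpl μ ν).lint_snd (meas_edist_left p x)]
    _ < ⊤ := by
        refine ENNReal.mul_lt_top (ENNReal.rpow_lt_top_of_nonneg (by linarith) (by simp)) ?_
        exact ENNReal.add_lt_top.2 ⟨WSet.moment hp h x, WSet.moment hp h' x⟩

/-- A bijection of the Wasserstein space preserving the cost. -/
structure WI (p : ℝ) (Φ : Measure X → Measure X) : Prop where
  maps : ∀ μ ∈ WSet X p, Φ μ ∈ WSet X p
  inj : ∀ μ ∈ WSet X p, ∀ ν ∈ WSet X p, Φ μ = Φ ν → μ = ν
  surj : ∀ μ ∈ WSet X p, ∃ ν ∈ WSet X p, Φ ν = μ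
  K : ∀ μ ∈ WSet X p, ∀ ν ∈ WSet X p, K p (Φ μ) (Φ ν) = K p μ ν

lemma WI.of {p : ℝ} (hp : 1 ≤ p) {Φ : Measure X → Measure X} (h : IsWIsometry X p Φ) :
    WI p Φ := by
  obtain ⟨⟨h1, h2, h3⟩, h4⟩ := h
  refine ⟨h1, fun μ hμ ν hν => h2 hμ hν, fun μ hμ => h3 hμ, ?_⟩
  intro μ hμ ν hν
  have := h4 μ hμ ν hν
  rw [Wdist_eq hp, Wdist_eq hp] at this
  have h0 : 0 < 1 / p := by positivity
  have a := (K_lt_top hp (h1 hμ) (h1 hν)).ne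
  have b := (K_lt_top hp hμ hν).ne
  rw [ENNReal.toReal_eq_toReal_iff' (ENNReal.rpow_ne_top_of_nonneg h0.le a)
    (ENNReal.rpow_ne_top_of_nonneg h0.le b)] at this
  exact (ENNReal.rpow_left_injective h0.ne') this

lemma dirac_mem (p : ℝ) (hp : 1 ≤ p) (x : X) : Measure.dirac x ∈ WSet X p := by
  refine ⟨inferInstance, x, ?_⟩
  have : 0 < p := by linarith
  rw [lintegral_dirac]
  simp [this]

lemma mix_mem {p : ℝ} (hp : 1 ≤ p) {μ ν : Measure X} (h : μ ∈ WSet X p) (h' : ν ∈ WSet X p)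
    {a b : ℝ≥0∞} (hab : a + b = 1) : a • μ + b • ν ∈ WSet X p := by
  have := h.1
  have := h'.1
  obtain ⟨x⟩ : Nonempty X := μ.nonempty_of_neZero
  refine ⟨⟨by simp [hab]⟩, x, ?_⟩
  have ha : a ≠ ⊤ := by rintro rfl; simp at hab
  have hb : b ≠ ⊤ := by rintro rfl; simp at hab
  rw [lintegral_add_measure, lintegral_smul_measure, lintegral_smul_measure]
  exact ENNReal.add_lt_top.2 ⟨ENNReal.mul_lt_top ha.lt_top (WSet.moment hp h x),
    ENNReal.mul_lt_top hb.lt_top (WSet.moment hp h' x)⟩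

/-- real potentials -/
lemma integrable_pot {p : ℝ} (hp : 1 ≤ p) {μ : Measure X} (h : μ ∈ WSet X p) (w : X) :
    Integrable (fun z => dist z w ^ p) μ := by
  have h0 : 0 ≤ p := by linarith
  refine ⟨by fun_prop (disch := assumption), ?_⟩
  have := WSet.moment hp h w
  rw [HasFiniteIntegral]
  convert this using 2 with z
  funext z
  rw [edist_dist, ENNReal.ofReal_rpow_of_nonneg dist_nonneg h0, Real.enorm_of_nonneg (by positivity)]

lemma pot_eq {p : ℝ} (hp : 1 ≤ p) {μ : Measure X} (h : μ ∈ WSet X p) (w : X) :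
    ∫⁻ z, edist z w ^ p ∂μ = ENNReal.ofReal (∫ z, dist z w ^ p ∂μ) := by
  have h0 : 0 ≤ p := by linarith
  rw [ofReal_integral_eq_lintegral_ofReal (integrable_pot hp h w)
    (ae_of_all _ fun z => by positivity)]
  simp_rw [edist_dist, ENNReal.ofReal_rpow_of_nonneg dist_nonneg h0]

lemma WI.pot {p : ℝ} (hp : 1 ≤ p) {Φ : Measure X → Measure X} (h : WI p Φ) {w w' : X}
    (hw : Φ (Measure.dirac w) = Measure.dirac w') {μ : Measure X} (hμ : μ ∈ WSet X p) :
    ∫⁻ z, edist z w' ^ p ∂(Φ μ) = ∫⁻ z, edist z w ^ p ∂μ := by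
  have := h.K μ hμ _ (dirac_mem p hp w)
  have i1 := hμ.1
  have i2 := (h.maps μ hμ).1
  rwa [hw, K_dirac, K_dirac] at this

lemma WI.potR {p : ℝ} (hp : 1 ≤ p) {Φ : Measure X → Measure X} (h : WI p Φ) {w w' : X}
    (hw : Φ (Measure.dirac w) = Measure.dirac w') {μ : Measure X} (hμ : μ ∈ WSet X p) :
    ∫ z, dist z w' ^ p ∂(Φ μ) = ∫ z, dist z w ^ p ∂μ := by
  have := h.pot hp hw hμ
  rw [pot_eq hp hμ, pot_eq hp (h.maps μ hμ)] at this
  rwa [ENNReal.ofReal_eq_ofReal_iff] at this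
  all_goals exact integral_nonneg fun z => by positivity

lemma eq_dirac_of_ae {μ : Measure X} [IsProbabilityMeasure μ] {x : X}
    (h : ∀ᵐ z ∂μ, z = x) : μ = Measure.dirac x := by
  have : μ.map id = μ.map (fun _ => x) := Measure.map_congr h
  simpa using this

lemma ext_fin {μ ν : Measure X} (F : Finset X) (hμ : ∀ᵐ z ∂μ, z ∈ F) (hν : ∀ᵐ z ∂ν, z ∈ F)
    (h : ∀ z ∈ F, μ {z} = ν {z}) : μ = ν := by
  classical
  have key : ∀ (μ : Measure X), (∀ᵐ z ∂μ, z ∈ F) → ∀ s : Set X,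
      μ s = ∑ z ∈ F.filter (· ∈ s), μ {z} := by
    intro μ hμ s
    rw [sum_measure_singleton]
    refine measure_congr ?_
    filter_upwards [hμ] with z hz
    apply propext
    change s z ↔ z ∈ (↑(F.filter (· ∈ s)) : Set X)
    simp [hz]; rfl
  ext s hs
  rw [key μ hμ, key ν hν]
  refine Finset.sum_congr rfl fun z hz => h z (Finset.mem_filter.1 hz).1

end Basic

end WR

namespace WR

open Set Filter Topology
open scoped ENNReal NNReal

/-- the one dimensional profile of the cost -/
noncomputable def prof (p x m h : ℝ) : ℝ := ((|x + h| + m) / 2) ^ p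

lemma prof_convex {p : ℝ} (hp : 1 ≤ p) (x : ℝ) {m : ℝ} (hm : 0 ≤ m) :
    ConvexOn ℝ univ (prof p x m) := by
  refine ⟨convex_univ, ?_⟩
  intro a _ b _ α β hα hβ hαβ
  simp only [smul_eq_mul, prof]
  have h1 := (convexOn_rpow hp).2 (x := (|x + a| + m) / 2) (y := (|x + b| + m) / 2)
    (by simp only [mem_Ici]; positivity) (by simp only [mem_Ici]; positivity) hα hβ hαβ
  simp only [smul_eq_mul] at h1
  refine le_trans ?_ h1
  refine Real.rpow_le_rpow (by positivity) ?_ (by linarith)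
  have h2 : |x + (α * a + β * b)| ≤ α * |x + a| + β * |x + b| := by
    have : x + (α * a + β * b) = α * (x + a) + β * (x + b) := by
      linear_combination (-x) * hαβ
    rw [this]
    refine (abs_add_le _ _).trans ?_
    rw [abs_mul, abs_mul, abs_of_nonneg hα, abs_of_nonneg hβ]
  have h3 : m = (α + β) * m := by rw [hαβ, one_mul]
  nlinarith

lemma prof_nonneg (p x : ℝ) {m : ℝ} (hm : 0 ≤ m) (h : ℝ) : 0 ≤ prof p x m h := by
  unfold prof; positivity

lemma prof_quot {p : ℝ} (hp : 1 ≤ p) (x : ℝ) {m : ℝ} (hm : 0 ≤ m) {h h0 : ℝ} (hh : 0 < h)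
    (hh0 : h ≤ h0) :
    0 ≤ h⁻¹ * (prof p x m h + prof p x m (-h) - 2 * prof p x m 0) ∧
    h⁻¹ * (prof p x m h + prof p x m (-h) - 2 * prof p x m 0) ≤
      h0⁻¹ * (prof p x m h0 + prof p x m (-h0) - 2 * prof p x m 0) := by
  have hc := prof_convex hp x hm
  have h00 : 0 < h0 := by linarith
  constructor
  · have := hc.2 (mem_univ h) (mem_univ (-h)) (by norm_num : (0:ℝ) ≤ 1/2)
      (by norm_num : (0:ℝ) ≤ 1/2) (by norm_num)
    simp only [smul_eq_mul] at this
    ring_nf at this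
    refine mul_nonneg (by positivity) ?_
    linarith
  · have key : ∀ e : ℝ, prof p x m (h * e) ≤ (1 - h / h0) * prof p x m 0
        + h / h0 * prof p x m (h0 * e) := by
      intro e
      have := hc.2 (mem_univ 0) (mem_univ (h0 * e))
        (by rw [sub_nonneg, div_le_one h00]; exact hh0 : 0 ≤ 1 - h / h0)
        (by positivity : 0 ≤ h / h0) (by ring)
      simp only [smul_eq_mul] at this
      have e2 : (1 - h / h0) * 0 + h / h0 * (h0 * e) = h * e := by field_simp; ring
      rwa [e2] at this
    have k1 := key 1
    have k2 := key (-1)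
    simp only [mul_one, mul_neg] at k1 k2
    have : prof p x m h + prof p x m (-h) - 2 * prof p x m 0 ≤
      h / h0 * (prof p x m h0 + prof p x m (-h0) - 2 * prof p x m 0) := by linarith
    calc _ ≤ h⁻¹ * (h / h0 * (prof p x m h0 + prof p x m (-h0) - 2 * prof p x m 0)) := by
          gcongr
      _ = _ := by field_simp

lemma prof_tendsto {p : ℝ} (hp : 1 ≤ p) (x m : ℝ) :
    Tendsto (fun h => h⁻¹ * (prof p x m h + prof p x m (-h) - 2 * prof p x m 0)) (𝓝[>] 0)
      (𝓝 (if x = 0 then p * (m / 2) ^ (p - 1) else 0)) := by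
  split_ifs with hx
  · subst hx
    have h1 : HasDerivAt (fun h : ℝ => ((h + m) / 2) ^ p)
        (1 / 2 * p * ((0 + m) / 2) ^ (p - 1)) 0 := by
      have := (((hasDerivAt_id (0:ℝ)).add_const m).div_const 2).rpow_const (p := p) (Or.inr hp)
      simpa using this
    have h2 := (h1.tendsto_slope_zero_right).const_mul 2
    simp only [zero_add, smul_eq_mul] at h2
    have e : p * (m / 2) ^ (p - 1) = 2 * (1 / 2 * p * (m / 2) ^ (p - 1)) := by ring
    rw [e]
    refine h2.congr' ?_
    filter_upwards [self_mem_nhdsWithin] with h hh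
    have : (0:ℝ) < h := hh
    simp only [prof, zero_add, abs_neg, abs_of_pos this, abs_zero]
    ring
  · have h1 : ∃ D, HasDerivAt (prof p x m) D 0 := by
      have a1 : DifferentiableAt ℝ (fun h : ℝ => |x + h|) 0 := by
        have : DifferentiableAt ℝ (fun h : ℝ => x + h) 0 := by fun_prop
        exact this.abs (by simpa using hx)
      have a2 : DifferentiableAt ℝ (fun h : ℝ => (|x + h| + m) / 2) 0 := by fun_prop
      exact ⟨_, (a2.hasDerivAt.rpow_const (p := p) (Or.inr hp))⟩
    obtain ⟨D, hD⟩ := h1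
    have h2 := hD.tendsto_slope_zero_right
    have h3 : HasDerivAt (fun h => prof p x m (-h)) (-D) 0 := by
      have := HasDerivAt.comp (0:ℝ) (h₂ := prof p x m) (h := fun h : ℝ => -h) (h₂' := D)
        (by simpa using hD) (hasDerivAt_neg (0:ℝ))
      simpa [Function.comp_def] using this
    have h4 := h3.tendsto_slope_zero_right
    have h5 := h2.add h4
    simp only [add_neg_cancel, zero_add, smul_eq_mul, neg_zero] at h5
    refine h5.congr fun h => ?_
    ring

section Ch

variable {X : Type*} [MetricSpace X] [MeasurableSpace X] [BorelSpace X]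
  [SecondCountableTopology X]

/-- A chart: rotated coordinates in which the metric is half the `ℓ¹` metric. -/
structure Chart (U V : X → ℝ) (S : Set (ℝ × ℝ)) : Prop where
  d : ∀ x y, dist x y = (|U x - U y| + |V x - V y|) / 2
  mem : ∀ x, (U x, V x) ∈ S
  surj : ∀ q ∈ S, ∃ x, U x = q.1 ∧ V x = q.2
  conv : Convex ℝ S

/-- interior points, via boxes -/
def Inn (S : Set (ℝ × ℝ)) (s t : ℝ) : Prop :=
  ∃ h > 0, ∀ a b, |a - s| ≤ h → |b - t| ≤ h → (a, b) ∈ S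

lemma Inn.swap {S : Set (ℝ × ℝ)} {s t : ℝ} (h : Inn S s t) : Inn (Prod.swap ⁻¹' S) t s := by
  obtain ⟨h0, hpos, H⟩ := h
  exact ⟨h0, hpos, fun a b ha hb => H b a hb ha⟩

lemma Inn.mem {S : Set (ℝ × ℝ)} {s t : ℝ} (h : Inn S s t) : (s, t) ∈ S := by
  obtain ⟨h0, hpos, H⟩ := h
  exact H s t (by simpa using hpos.le) (by simpa using hpos.le)

namespace Chart

variable {U V : X → ℝ} {S : Set (ℝ × ℝ)}

lemma swap (c : Chart U V S) : Chart V U (Prod.swap ⁻¹' S) where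
  d x y := by rw [c.d]; ring
  mem x := c.mem x
  surj q hq := by
    obtain ⟨x, h1, h2⟩ := c.surj q.swap hq
    exact ⟨x, h2, h1⟩
  conv := c.conv.is_linear_preimage ⟨by intros; rfl, by intros; rfl⟩

lemma negU (c : Chart U V S) : Chart (fun x => -U x) V ((fun q => (-q.1, q.2)) ⁻¹' S) where
  d x y := by
    rw [c.d, ← abs_neg (U x - U y)]
    ring_nf
  mem x := by simpa using c.mem x
  surj q hq := by
    obtain ⟨x, h1, h2⟩ := c.surj _ hq
    exact ⟨x, by simp at h1; linarith, h2⟩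
  conv := c.conv.is_linear_preimage ⟨fun _ _ => by ext <;> simp [add_comm], fun _ _ => by ext <;> simp⟩

lemma inj (c : Chart U V S) {x y : X} (h1 : U x = U y) (h2 : V x = V y) : x = y := by
  rw [← dist_eq_zero, c.d, h1, h2]; simp

lemma contU (c : Chart U V S) : Continuous U := by
  refine (LipschitzWith.of_dist_le_mul (K := 2) fun x y => ?_).continuous
  rw [Real.dist_eq, c.d]
  have := abs_nonneg (V x - V y)
  push_cast; linarith

lemma contV (c : Chart U V S) : Continuous V := c.swap.contU

lemma measU (c : Chart U V S) : Measurable U := c.contU.measurable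

lemma measV (c : Chart U V S) : Measurable V := c.contV.measurable

lemma dist_eq_prof (c : Chart U V S) (p : ℝ) {w : X} {s h t : ℝ} (h1 : U w = s - h) (h2 : V w = t)
    (z : X) : dist z w ^ p = prof p (U z - s) |V z - t| h := by
  rw [c.d, h1, h2, prof]
  congr 4; ring

lemma prof_integrable (c : Chart U V S) {p : ℝ} (hp : 1 ≤ p) {μ : Measure X} (hμ : μ ∈ WSet X p)
    {s t h : ℝ} (hm : (s - h, t) ∈ S) :
    Integrable (fun z => prof p (U z - s) |V z - t| h) μ := by
  obtain ⟨w, h1, h2⟩ := c.surj _ hm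
  have := integrable_pot hp hμ w
  simpa only [c.dist_eq_prof p h1 h2] using this

/-- the jump integrand -/
noncomputable def jmp (U V : X → ℝ) (p s t : ℝ) (z : X) : ℝ :=
  if U z - s = 0 then p * (|V z - t| / 2) ^ (p - 1) else 0

lemma jmp_meas (c : Chart U V S) (p s t : ℝ) : Measurable (jmp U V p s t) := by
  have h1 := c.measU
  have h2 := c.measV
  unfold jmp
  refine Measurable.ite (measurableSet_eq_fun (by fun_prop) (by fun_prop)) ?_ measurable_const
  have : Measurable fun z => |V z - t| := (continuous_abs.measurable).comp (h2.sub_const t)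
  fun_prop

lemma jmp_nonneg {p : ℝ} (hp : 1 ≤ p) (s t : ℝ) (z : X) : 0 ≤ jmp U V p s t z := by
  unfold jmp; split_ifs
  · positivity
  · rfl

lemma jmp_tendsto (c : Chart U V S) {p : ℝ} (hp : 1 ≤ p) {μ : Measure X} (hμ : μ ∈ WSet X p)
    {s t : ℝ} (hst : Inn S s t) :
    Integrable (jmp U V p s t) μ ∧
    Tendsto (fun h => h⁻¹ * (∫ z, prof p (U z - s) |V z - t| h ∂μ
      + ∫ z, prof p (U z - s) |V z - t| (-h) ∂μ - 2 * ∫ z, prof p (U z - s) |V z - t| 0 ∂μ))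
      (𝓝[>] 0) (𝓝 (∫ z, jmp U V p s t z ∂μ)) := by
  obtain ⟨h0, hpos, H⟩ := hst
  have hm : ∀ h, |h| ≤ h0 → (s - h, t) ∈ S := fun h hh => H _ _ (by
    rw [show s - h - s = -h by ring, abs_neg]; exact hh) (by simpa using hpos.le)
  have hi := fun h hh => c.prof_integrable hp hμ (hm h hh)
  have i0 := hi 0 (by simpa using hpos.le)
  have hF : ∀ h, 0 < h → h ≤ h0 → Integrable (fun z => h⁻¹ * (prof p (U z - s) |V z - t| h
      + prof p (U z - s) |V z - t| (-h) - 2 * prof p (U z - s) |V z - t| 0)) μ := by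
    intro h h1 h2
    exact (((hi h (by rw [abs_of_pos h1]; exact h2)).add
      (hi (-h) (by rw [abs_neg, abs_of_pos h1]; exact h2))).sub (i0.const_mul 2)).const_mul _
  have hev : ∀ᶠ h in 𝓝[>] (0:ℝ), 0 < h ∧ h ≤ h0 := by
    filter_upwards [Ioc_mem_nhdsGT hpos] with h hh using hh
  have hlim : ∀ z, Tendsto (fun h => h⁻¹ * (prof p (U z - s) |V z - t| h
      + prof p (U z - s) |V z - t| (-h) - 2 * prof p (U z - s) |V z - t| 0)) (𝓝[>] 0)
      (𝓝 (jmp U V p s t z)) := fun z => prof_tendsto hp _ _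
  constructor
  · refine (hF h0 hpos le_rfl).mono' (c.jmp_meas p s t).aestronglyMeasurable (ae_of_all _ ?_)
    intro z
    rw [Real.norm_of_nonneg (jmp_nonneg hp s t z)]
    refine le_of_tendsto (hlim z) ?_
    filter_upwards [hev] with h hh
    exact (prof_quot hp _ (abs_nonneg _) hh.1 hh.2).2
  · have := tendsto_integral_filter_of_dominated_convergence (μ := μ) (l := 𝓝[>] (0:ℝ))
      (F := fun h z => h⁻¹ * (prof p (U z - s) |V z - t| h
      + prof p (U z - s) |V z - t| (-h) - 2 * prof p (U z - s) |V z - t| 0))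
      (f := jmp U V p s t) _
      (by filter_upwards [hev] with h hh using (hF h hh.1 hh.2).aestronglyMeasurable)
      (by
        filter_upwards [hev] with h hh
        refine ae_of_all _ fun z => ?_
        have := prof_quot hp (U z - s) (abs_nonneg (V z - t)) hh.1 hh.2
        rw [Real.norm_of_nonneg this.1]
        exact this.2)
      (hF h0 hpos le_rfl) (ae_of_all _ hlim)
    refine this.congr' ?_
    filter_upwards [hev] with h hh
    have j1 := hi h (by rw [abs_of_pos hh.1]; exact hh.2)
    have j2 := hi (-h) (by rw [abs_neg, abs_of_pos hh.1]; exact hh.2)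
    have j3 : Integrable (fun z => prof p (U z - s) |V z - t| h
      + prof p (U z - s) |V z - t| (-h)) μ := j1.add j2
    rw [integral_const_mul, integral_sub j3 (i0.const_mul 2), integral_add j1 j2,
      integral_const_mul]

/-- equal potentials imply equal jumps -/
lemma jmp_eq (c : Chart U V S) {p : ℝ} (hp : 1 ≤ p) {μ ν : Measure X} (hμ : μ ∈ WSet X p)
    (hν : ν ∈ WSet X p) (h : ∀ w, ∫ z, dist z w ^ p ∂μ = ∫ z, dist z w ^ p ∂ν)
    {s t : ℝ} (hst : Inn S s t) : ∫ z, jmp U V p s t z ∂μ = ∫ z, jmp U V p s t z ∂ν := by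
  refine tendsto_nhds_unique (c.jmp_tendsto hp hμ hst).2
    ((c.jmp_tendsto hp hν hst).2.congr' ?_)
  obtain ⟨h0, hpos, H⟩ := hst
  have hm : ∀ h, |h| ≤ h0 → (s - h, t) ∈ S := fun h hh => H _ _ (by
    rw [show s - h - s = -h by ring, abs_neg]; exact hh) (by simpa using hpos.le)
  have key : ∀ k, |k| ≤ h0 → ∫ z, prof p (U z - s) |V z - t| k ∂ν
      = ∫ z, prof p (U z - s) |V z - t| k ∂μ := by
    intro k hk
    obtain ⟨w, h1, h2⟩ := c.surj _ (hm k hk)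
    have := h w
    simp only [c.dist_eq_prof p h1 h2] at this
    exact this.symm
  filter_upwards [Ioc_mem_nhdsGT hpos] with k hk
  rw [key k (by rw [abs_of_pos hk.1]; exact hk.2),
    key (-k) (by rw [abs_neg, abs_of_pos hk.1]; exact hk.2), key 0 (by simpa using hpos.le)]

end Chart

end Ch

end WR

namespace WR

open Set Filter Topology
open scoped ENNReal NNReal

section TwoPoint

variable {X : Type*} [MetricSpace X] [MeasurableSpace X] [BorelSpace X]
  [SecondCountableTopology X]

lemma ae_of_le {ν : Measure X} [IsFiniteMeasure ν] {A B : Set X} (hA : MeasurableSet A)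
    (hAB : A ⊆ B) (h : ν B ≤ ν A) : ∀ᵐ z ∂ν, z ∈ B → z ∈ A := by
  have := ae_eq_of_subset_of_measure_ge hAB h hA.nullMeasurableSet (measure_ne_top _ _)
  filter_upwards [this] with z hz hB
  exact (iff_of_eq hz).2 hB

lemma ae_union2 {ν : Measure X} [IsProbabilityMeasure ν] {A B : Set X} (hA : MeasurableSet A)
    (hB : MeasurableSet B) (hd : Disjoint A B) (h : ν A + ν B = 1) :
    ∀ᵐ z ∂ν, z ∈ A ∨ z ∈ B := by
  rw [← measure_union hd hB] at h
  have := (prob_compl_eq_zero_iff (hA.union hB)).2 h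
  exact measure_eq_zero_iff_ae_notMem.1 this |>.mono fun z hz => by
    simpa [or_iff_not_imp_left] using hz

lemma ae_union3 {ν : Measure X} [IsProbabilityMeasure ν] {A B C : Set X} (hA : MeasurableSet A)
    (hB : MeasurableSet B) (hC : MeasurableSet C) (hd : Disjoint A B) (hd' : Disjoint A C)
    (hd'' : Disjoint B C) (h : ν A + ν B + ν C = 1) :
    ∀ᵐ z ∂ν, z ∈ A ∨ z ∈ B ∨ z ∈ C := by
  rw [← measure_union hd hB] at h
  have := ae_union2 (hA.union hB) hC (by rw [disjoint_union_left]; exact ⟨hd', hd''⟩) h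
  filter_upwards [this] with z hz
  simpa [or_assoc] using hz

lemma measure_eq_of_ae {ν : Measure X} {A B : Set X} (h : ∀ᵐ z ∂ν, z ∈ A ↔ z ∈ B) : ν A = ν B :=
  measure_congr (h.mono fun z hz => propext hz)

lemma Inn.mid {S : Set (ℝ × ℝ)} (hS : Convex ℝ S) {s t s' t' : ℝ} (h : Inn S s t)
    (h' : Inn S s' t') : Inn S ((s + s') / 2) ((t + t') / 2) := by
  obtain ⟨k, hk, H⟩ := h
  obtain ⟨k', hk', H'⟩ := h'
  refine ⟨min k k', lt_min hk hk', fun a b ha hb => ?_⟩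
  have h1 := H (a - (s + s') / 2 + s) (b - (t + t') / 2 + t)
    (by simpa using ha.trans (min_le_left _ _)) (by simpa using hb.trans (min_le_left _ _))
  have h2 := H' (a - (s + s') / 2 + s') (b - (t + t') / 2 + t')
    (by simpa using ha.trans (min_le_right _ _)) (by simpa using hb.trans (min_le_right _ _))
  have := hS h1 h2 (by norm_num : (0:ℝ) ≤ 1/2) (by norm_num : (0:ℝ) ≤ 1/2) (by norm_num)
  convert this using 1
  simp
  constructor <;> ring

lemma mid_mem {S : Set (ℝ × ℝ)} (hS : Convex ℝ S) {s t s' t' : ℝ} (h : (s, t) ∈ S)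
    (h' : (s', t') ∈ S) : ((s + s') / 2, (t + t') / 2) ∈ S := by
  have := hS h h' (by norm_num : (0:ℝ) ≤ 1/2) (by norm_num : (0:ℝ) ≤ 1/2) (by norm_num)
  convert this using 1
  simp
  constructor <;> ring

variable {U V : X → ℝ} {S : Set (ℝ × ℝ)}

/-- For `p > 1`, lone atoms are determined by potentials. -/
lemma Chart.atom (c : Chart U V S) {p : ℝ} (hp : 1 < p) {μ ν : Measure X} (hμ : μ ∈ WSet X p)
    (hν : ν ∈ WSet X p) (h : ∀ w, ∫ z, dist z w ^ p ∂μ = ∫ z, dist z w ^ p ∂ν) {x : X}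
    (hx : Inn S (U x) (V x)) (ha : ∀ᵐ z ∂μ, U z = U x → z = x) : ν {x} = μ {x} := by
  have := hμ.1
  have := hν.1
  have hp1 : p - 1 ≠ 0 := by linarith
  have hb : ∀ᵐ z ∂ν, U z = U x → z = x := by
    have h0 := c.jmp_eq hp.le hμ hν h hx
    have h1 : ∫ z, Chart.jmp U V p (U x) (V x) z ∂μ = 0 := by
      rw [integral_eq_zero_of_ae]
      filter_upwards [ha] with z hz
      simp only [Chart.jmp, Pi.zero_apply]
      split_ifs with hu
      · rw [hz (by linarith)]; simp [Real.zero_rpow hp1]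
      · rfl
    rw [h1] at h0
    have h2 := (integral_eq_zero_iff_of_nonneg (Chart.jmp_nonneg hp.le _ _)
      (c.jmp_tendsto hp.le hν hx).1).1 h0.symm
    filter_upwards [h2] with z hz hu
    simp only [Chart.jmp, Pi.zero_apply, hu, sub_self, if_true] at hz
    have h3 : (|V z - V x| / 2) ^ (p - 1) = 0 := by
      rcases mul_eq_zero.1 hz with h | h
      · linarith
      · exact h
    rw [Real.rpow_eq_zero (by positivity) hp1] at h3
    refine c.inj hu ?_
    have : |V z - V x| = 0 := by linarith
    rw [abs_eq_zero] at this; linarith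
  obtain ⟨k, hk, H⟩ := hx
  have hx' : Inn S (U x) (V x + k / 2) := by
    refine ⟨k / 2, by positivity, fun a b h1 h2 => H a b (h1.trans (by linarith)) ?_⟩
    have := abs_add_le (b - (V x + k / 2)) (k / 2)
    rw [abs_of_pos (by positivity : 0 < k / 2)] at this
    ring_nf at this h2 ⊢
    linarith
  have key : ∀ ρ : Measure X, IsProbabilityMeasure ρ → (∀ᵐ z ∂ρ, U z = U x → z = x) →
      ∫ z, Chart.jmp U V p (U x) (V x + k / 2) z ∂ρ
        = ρ.real {x} * (p * (k / 2 / 2) ^ (p - 1)) := by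
    intro ρ hρ hae
    have : ∫ z, Chart.jmp U V p (U x) (V x + k / 2) z ∂ρ
        = ∫ z, Set.indicator {x} (fun _ => (p * (k / 2 / 2) ^ (p - 1))) z ∂ρ := by
      refine integral_congr_ae ?_
      filter_upwards [hae] with z hz
      simp only [Chart.jmp, indicator, mem_singleton_iff]
      by_cases hzx : z = x
      · subst hzx
        simp [abs_of_pos (by positivity : 0 < k / 2)]
      · have : U z - U x ≠ 0 := fun hu => hzx (hz (by linarith))
        simp [hzx, this]
    rw [this, integral_indicator (measurableSet_singleton x), setIntegral_const, smul_eq_mul]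
  have h0 := c.jmp_eq hp.le hμ hν h hx'
  rw [key μ inferInstance ha, key ν inferInstance hb] at h0
  have hpos : 0 < p * (k / 2 / 2) ^ (p - 1) := by positivity
  have h1 := mul_right_cancel₀ hpos.ne' h0
  rw [Measure.real, Measure.real, ENNReal.toReal_eq_toReal_iff' (measure_ne_top _ _)
    (measure_ne_top _ _)] at h1
  exact h1.symm

/-- For `p = 1`, marginal atoms are determined by potentials. -/
lemma Chart.marg (c : Chart U V S) {μ ν : Measure X} (hμ : μ ∈ WSet X 1)
    (hν : ν ∈ WSet X 1) (h : ∀ w, ∫ z, dist z w ^ (1:ℝ) ∂μ = ∫ z, dist z w ^ (1:ℝ) ∂ν) {s t : ℝ}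
    (hx : Inn S s t) : ν {z | U z = s} = μ {z | U z = s} := by
  have := hμ.1
  have := hν.1
  have hm : MeasurableSet {z | U z = s} := measurableSet_eq_fun c.measU measurable_const
  have key : ∀ ρ : Measure X, IsProbabilityMeasure ρ →
      ∫ z, Chart.jmp U V 1 s t z ∂ρ = ρ.real {z | U z = s} := by
    intro ρ hρ
    have : ∀ z, Chart.jmp U V 1 s t z = Set.indicator {z | U z = s} (fun _ => (1:ℝ)) z := by
      intro z
      simp [Chart.jmp, indicator, sub_eq_zero]
    simp_rw [this]
    rw [integral_indicator hm, setIntegral_const]; simp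
  have h0 := c.jmp_eq le_rfl hμ hν h hx
  rw [key μ inferInstance, key ν inferInstance, Measure.real, Measure.real,
    ENNReal.toReal_eq_toReal_iff' (measure_ne_top _ _) (measure_ne_top _ _)] at h0
  exact h0.symm

lemma K1_move (θ : Measure X) (κ : ℝ≥0∞) (a b : X) :
    K 1 (θ + κ • Measure.dirac a) (θ + κ • Measure.dirac b) ≤ κ * edist a b := by
  have hd : Measurable fun z : X => (z, z) := measurable_id.prodMk measurable_id
  have hc : Cpl (θ.map (fun z => (z, z)) + κ • Measure.dirac (a, b)) (θ + κ • Measure.dirac a)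
      (θ + κ • Measure.dirac b) := by
    constructor
    · rw [Measure.map_add _ _ measurable_fst, Measure.map_smul, Measure.map_dirac' measurable_fst,
        Measure.map_map measurable_fst hd]
      simp [Function.comp_def]
    · rw [Measure.map_add _ _ measurable_snd, Measure.map_smul, Measure.map_dirac' measurable_snd,
        Measure.map_map measurable_snd hd]
      simp [Function.comp_def]
  refine (K_le hc).trans_eq ?_
  rw [lintegral_add_measure, lintegral_map (meas_edist 1) hd, lintegral_smul_measure,
    lintegral_dirac' _ (meas_edist 1)]
  simp

lemma K1_between_move {θ : Measure X} {κ : ℝ≥0∞} {x a b : X}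
    (h1 : IsProbabilityMeasure (θ + κ • Measure.dirac a))
    (h2 : IsProbabilityMeasure (θ + κ • Measure.dirac b))
    (h : edist a x + edist a b ≤ edist b x) :
    K 1 (Measure.dirac x) (θ + κ • Measure.dirac a)
      + K 1 (θ + κ • Measure.dirac a) (θ + κ • Measure.dirac b)
      ≤ K 1 (Measure.dirac x) (θ + κ • Measure.dirac b) := by
  rw [K_dirac', K_dirac', lintegral_add_measure, lintegral_add_measure, lintegral_smul_measure,
    lintegral_smul_measure, lintegral_dirac' _ (meas_edist_left 1 x),
    lintegral_dirac' _ (meas_edist_left 1 x), add_assoc]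
  gcongr
  refine (add_le_add_right (K1_move θ κ a b) _).trans ?_
  simp only [ENNReal.rpow_one, smul_eq_mul]
  rw [← mul_add]
  gcongr

/-- In `W₁`, measures between `δ_x` and `μ` have at least the atom of `μ` at `x`. -/
lemma K1_between_atom {η μ : Measure X} (hη : η ∈ WSet X 1) (hμ : μ ∈ WSet X 1) {x : X}
    (h : K 1 (Measure.dirac x) η + K 1 η μ ≤ K 1 (Measure.dirac x) μ) :
    η {x}ᶜ ≤ μ {x}ᶜ := by
  have := hη.1
  have := hμ.1
  have hmin : ∀ δ : ℝ≥0∞, Measurable fun z : X => min (edist z x) δ := fun δ =>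
    (measurable_id.edist measurable_const).min measurable_const
  have me : Measurable fun z : X => edist z x := measurable_id.edist measurable_const
  have step : ∀ δ : ℝ≥0∞, δ ≠ ⊤ → ∫⁻ z, min (edist z x) δ ∂η ≤ ∫⁻ z, min (edist z x) δ ∂μ := by
    intro δ hδ
    lift δ to ℝ≥0 using hδ
    have h1 : ∫⁻ z, edist z x ∂μ + 2 * ∫⁻ z, min (edist z x) δ ∂η
        ≤ K 1 η μ + (∫⁻ z, edist z x ∂η + 2 * ∫⁻ z, min (edist z x) δ ∂μ) := by
      rw [← tsub_le_iff_right]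
      · refine le_K fun π hπ => ?_
        rw [tsub_le_iff_right]
        · rw [← hπ.lint_snd me, ← hπ.lint_fst (hmin δ), ← hπ.lint_fst me, ← hπ.lint_snd (hmin δ),
            ← lintegral_const_mul _ (by fun_prop), ← lintegral_const_mul _ (by fun_prop),
            ← lintegral_add_left (by fun_prop), ← lintegral_add_left (by fun_prop),
            ← lintegral_add_left (by fun_prop)]
          refine lintegral_mono fun q => ?_
          simp only [ENNReal.rpow_one]
          rw [edist_nndist, edist_nndist, edist_nndist]
          norm_cast
          rw [← NNReal.coe_le_coe]
          push_cast
          have t1 := dist_triangle q.2 q.1 x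
          have t2 := dist_triangle q.1 q.2 x
          rw [dist_comm q.2 q.1] at t1
          rcases min_cases (dist q.1 x) δ with h | h <;>
          rcases min_cases (dist q.2 x) δ with h' | h' <;> rw [h.1, h'.1] <;> linarith
    have h2 : K 1 (Measure.dirac x) μ ≠ ⊤ := (K_lt_top le_rfl (dirac_mem 1 le_rfl x) hμ).ne
    rw [K_dirac', K_dirac'] at h
    rw [K_dirac'] at h2
    simp only [ENNReal.rpow_one] at h h2
    have h3 : ∫⁻ z, edist z x ∂μ + 2 * ∫⁻ z, min (edist z x) δ ∂η
        ≤ ∫⁻ z, edist z x ∂μ + 2 * ∫⁻ z, min (edist z x) δ ∂μ := by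
      refine h1.trans ?_
      rw [← add_assoc, add_comm (K 1 η μ)]
      gcongr
    have h4 := (ENNReal.add_le_add_iff_left h2).1 h3
    exact (ENNReal.mul_le_mul_iff_right (by simp) (by simp)).1 h4
  have step2 : ∀ n : ℕ, η {z | ((n : ℝ≥0∞) + 1)⁻¹ ≤ edist z x} ≤ μ {x}ᶜ := by
    intro n
    set δ : ℝ≥0∞ := ((n : ℝ≥0∞) + 1)⁻¹
    have hδ : δ ≠ ⊤ := by simp [δ]
    have hδ0 : δ ≠ 0 := by simp [δ]
    have a1 : δ * η {z | δ ≤ edist z x} ≤ ∫⁻ z, min (edist z x) δ ∂η := by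
      refine le_trans (mul_le_mul_right (measure_mono ?_) _)
        (mul_meas_ge_le_lintegral (hmin δ) δ)
      intro z hz
      exact le_min (mem_ofPred_eq ▸ hz) le_rfl
    have a2 : ∫⁻ z, min (edist z x) δ ∂μ ≤ δ * μ {x}ᶜ := by
      rw [← setLIntegral_const, ← lintegral_indicator (measurableSet_singleton x).compl]
      refine lintegral_mono fun z => ?_
      by_cases hz : z = x <;> simp [hz]
    exact (ENNReal.mul_le_mul_iff_right hδ0 hδ).1 (a1.trans ((step δ hδ).trans a2))
  have hU : ({x}ᶜ : Set X) = ⋃ n : ℕ, {z | ((n : ℝ≥0∞) + 1)⁻¹ ≤ edist z x} := by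
    ext z
    simp only [mem_compl_iff, mem_singleton_iff, mem_iUnion, mem_ofPred_eq]
    constructor
    · intro hz
      have : edist z x ≠ 0 := by simpa using hz
      obtain ⟨n, hn⟩ := ENNReal.exists_inv_nat_lt this
      refine ⟨n, le_trans ?_ hn.le⟩
      exact ENNReal.inv_le_inv.2 (by simp)
    · rintro ⟨n, hn⟩ rfl
      simp at hn
  rw [hU]
  refine le_of_tendsto (tendsto_measure_iUnion_atTop ?_) (Eventually.of_forall fun n => ?_)
  · intro n m hnm z hz
    rw [mem_ofPred_eq] at hz ⊢
    refine le_trans ?_ hz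
    refine ENNReal.inv_le_inv.2 ?_
    gcongr
  · rw [← hU]; exact step2 n

lemma split_atom {μ : Measure X} [IsFiniteMeasure μ] {x : X} {κ : ℝ≥0∞} (h : κ ≤ μ {x}) :
    ∃ θ : Measure X, μ = θ + κ • Measure.dirac x := by
  refine ⟨μ.restrict {x}ᶜ + (μ {x} - κ) • Measure.dirac x, ?_⟩
  rw [add_assoc, ← add_smul, tsub_add_cancel_of_le h, ← Measure.restrict_singleton,
    add_comm, Measure.restrict_add_restrict_compl (measurableSet_singleton x)]

end TwoPoint

end WR

namespace WR

open Set Filter Topology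
open scoped ENNReal NNReal

section TwoPoint2

variable {X : Type*} [MetricSpace X] [MeasurableSpace X] [BorelSpace X]
  [SecondCountableTopology X]

/-- Wasserstein isometries fixing all Dirac measures -/
structure Fx (p : ℝ) (Φ : Measure X → Measure X) : Prop extends WI p Φ where
  fix : ∀ x, Φ (Measure.dirac x) = Measure.dirac x

lemma Fx.potR {p : ℝ} (hp : 1 ≤ p) {Φ : Measure X → Measure X} (h : Fx p Φ) {μ : Measure X}
    (hμ : μ ∈ WSet X p) (w : X) : ∫ z, dist z w ^ p ∂μ = ∫ z, dist z w ^ p ∂(Φ μ) :=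
  (h.toWI.potR hp (h.fix w) hμ).symm

lemma tp_ext {ν : Measure X} [IsProbabilityMeasure ν] {x y : X} (hxy : x ≠ y) {a b : ℝ≥0∞}
    (hab : a + b = 1) (h1 : ν {x} = a) (h2 : ν {y} = b) :
    ν = a • Measure.dirac x + b • Measure.dirac y := by
  classical
  refine ext_fin {x, y} ?_ ?_ ?_
  · have := ae_union2 (ν := ν) (measurableSet_singleton x) (measurableSet_singleton y)
      (by simpa using hxy) (by rw [h1, h2, hab])
    filter_upwards [this] with z hz
    simpa using hz
  · rw [ae_add_measure_iff]
    constructor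
    · refine Measure.ae_smul_measure ?_ a
      filter_upwards [ae_dirac_eq' x] with z hz
      simp [hz]
    · refine Measure.ae_smul_measure ?_ b
      filter_upwards [ae_dirac_eq' y] with z hz
      simp [hz]
  · intro z hz
    rcases (by simpa using hz : z = x ∨ z = y) with rfl | rfl
    · simp [h1, hxy.symm]
    · simp [h2, hxy]

variable {U V : X → ℝ} {S : Set (ℝ × ℝ)} {Φ : Measure X → Measure X}

lemma tp_mem {p : ℝ} (hp : 1 ≤ p) (x y : X) {a b : ℝ≥0∞} (hab : a + b = 1) :
    a • Measure.dirac x + b • Measure.dirac y ∈ WSet X p :=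
  mix_mem hp (dirac_mem p hp x) (dirac_mem p hp y) hab

lemma tp_eval (x y : X) (a b : ℝ≥0∞) {A : Set X} (hA : MeasurableSet A) :
    (a • Measure.dirac x + b • Measure.dirac y) A
      = a * A.indicator 1 x + b * A.indicator 1 y := by
  simp [hA]

lemma tp_ae (x y : X) (a b : ℝ≥0∞) :
    ∀ᵐ z ∂(a • Measure.dirac x + b • Measure.dirac y), z = x ∨ z = y := by
  rw [ae_add_measure_iff]
  constructor
  · refine Measure.ae_smul_measure ?_ a
    filter_upwards [ae_dirac_eq' x] with z hz using Or.inl hz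
  · refine Measure.ae_smul_measure ?_ b
    filter_upwards [ae_dirac_eq' y] with z hz using Or.inr hz

lemma Chart.tp_gt (c : Chart U V S) {p : ℝ} (hp : 1 < p) (h : Fx p Φ) {x y : X}
    (hx : Inn S (U x) (V x)) (hy : Inn S (U y) (V y)) (hU : U x ≠ U y) {a b : ℝ≥0∞}
    (hab : a + b = 1) :
    Φ (a • Measure.dirac x + b • Measure.dirac y) = a • Measure.dirac x + b • Measure.dirac y := by
  have hm := tp_mem hp.le x y hab
  have hm' := h.maps _ hm
  have := hm'.1
  have hxy : x ≠ y := fun e => hU (by rw [e])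
  refine tp_ext hxy hab ?_ ?_
  · rw [c.atom hp hm hm' (h.potR hp.le hm) hx]
    · simp [hxy.symm]
    · filter_upwards [tp_ae x y a b] with z hz hu
      rcases hz with rfl | rfl
      · rfl
      · exact absurd hu.symm hU
  · rw [c.atom hp hm hm' (h.potR hp.le hm) hy]
    · simp [hxy]
    · filter_upwards [tp_ae x y a b] with z hz hu
      rcases hz with rfl | rfl
      · exact absurd hu hU
      · rfl

lemma rep_mem {θ : Measure X} {κ : ℝ≥0∞} {x y : X} (h : θ + κ • Measure.dirac x ∈ WSet X 1) :
    θ + κ • Measure.dirac y ∈ WSet X 1 := by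
  obtain ⟨h1, h2⟩ := h
  have h3 := h1.measure_univ
  rw [Measure.add_apply, Measure.smul_apply, measure_univ (μ := Measure.dirac x), smul_eq_mul,
    mul_one] at h3
  have hk : κ ≤ 1 := by
    rw [← h3]; exact le_add_self
  refine ⟨⟨by simp [h3]⟩, ?_⟩
  obtain ⟨w, hw⟩ := h2
  refine ⟨w, ?_⟩
  rw [lintegral_add_measure] at hw ⊢
  refine ENNReal.add_lt_top.2 ⟨(ENNReal.add_lt_top.1 hw).1, ?_⟩
  rw [lintegral_smul_measure, lintegral_dirac' _ (meas_edist_left 1 w)]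
  exact ENNReal.mul_lt_top (hk.trans_lt (by simp)) (by simp [edist_lt_top])

lemma Chart.tp1_main (c : Chart U V S) (h : Fx 1 Φ) {x y : X}
    (hx : Inn S (U x) (V x)) (hy : Inn S (U y) (V y)) (hU : U x ≠ U y) (hV : V x ≠ V y)
    {a b : ℝ≥0∞} (hab : a + b = 1) (hle : a ≤ b) :
    Φ (a • Measure.dirac x + b • Measure.dirac y) = a • Measure.dirac x + b • Measure.dirac y ∨
    (a = b ∧ ∀ᵐ z ∂(Φ (a • Measure.dirac x + b • Measure.dirac y)),
      (U z = U x ∧ V z = V y) ∨ (U z = U y ∧ V z = V x)) := by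
  have hm := tp_mem le_rfl x y hab
  have hm' := h.maps _ hm
  have hpot := h.potR le_rfl hm
  set μ := a • Measure.dirac x + b • Measure.dirac y with hμ
  set ν := Φ μ with hν
  have iν := hm'.1
  have iμ := hm.1
  have hxy : x ≠ y := fun e => hU (by rw [e])
  have mU : ∀ s, MeasurableSet {z | U z = s} := fun s =>
    measurableSet_eq_fun c.measU measurable_const
  have mV : ∀ s, MeasurableSet {z | V z = s} := fun s =>
    measurableSet_eq_fun c.measV measurable_const
  have m1 : ν {z | U z = U x} = a := by
    rw [c.marg hm hm' hpot hx, hμ, tp_eval _ _ _ _ (mU _)]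
    simp [indicator, hU.symm]
  have m2 : ν {z | U z = U y} = b := by
    rw [c.marg hm hm' hpot hy, hμ, tp_eval _ _ _ _ (mU _)]
    simp [indicator, hU]
  have m3 : ν {z | V z = V x} = a := by
    rw [c.swap.marg hm hm' hpot hx.swap, hμ, tp_eval _ _ _ _ (mV _)]
    simp [indicator, hV.symm]
  have m4 : ν {z | V z = V y} = b := by
    rw [c.swap.marg hm hm' hpot hy.swap, hμ, tp_eval _ _ _ _ (mV _)]
    simp [indicator, hV]
  have aeU : ∀ᵐ z ∂ν, U z = U x ∨ U z = U y := by
    refine ae_union2 (A := {z | U z = U x}) (B := {z | U z = U y}) (mU _) (mU _) ?_ (by rw [m1, m2, hab])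
    rw [Set.disjoint_left]; intro z h1 h2; exact hU (h1.symm.trans h2)
  have aeV : ∀ᵐ z ∂ν, V z = V x ∨ V z = V y := by
    refine ae_union2 (A := {z | V z = V x}) (B := {z | V z = V y}) (mV _) (mV _) ?_ (by rw [m3, m4, hab])
    rw [Set.disjoint_left]; intro z h1 h2; exact hV (h1.symm.trans h2)
  set R := {z | U z = U x} ∩ {z | V z = V y} with hR
  set R' := {z | U z = U y} ∩ {z | V z = V x} with hR'
  have mR : MeasurableSet R := (mU _).inter (mV _)
  have mR' : MeasurableSet R' := (mU _).inter (mV _)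
  have e1 : ν {x} + ν R = a := by
    rw [← m1, ← measure_union _ mR]
    · refine measure_eq_of_ae ?_
      filter_upwards [aeV] with z hz
      simp only [hR, mem_union, mem_singleton_iff, mem_inter_iff, mem_ofPred_eq]
      constructor
      · rintro (rfl | h); exacts [rfl, h.1]
      · intro hu
        rcases hz with h | h
        · exact Or.inl (c.inj hu h)
        · exact Or.inr ⟨hu, h⟩
    · rw [Set.disjoint_singleton_left]; exact fun h => hV h.2
  have e2 : ν {x} + ν R' = a := by
    rw [← m3, ← measure_union _ mR']
    · refine measure_eq_of_ae ?_
      filter_upwards [aeU] with z hz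
      simp only [hR', mem_union, mem_singleton_iff, mem_inter_iff, mem_ofPred_eq]
      constructor
      · rintro (rfl | h); exacts [rfl, h.2]
      · intro hu
        rcases hz with h | h
        · exact Or.inl (c.inj h hu)
        · exact Or.inr ⟨h, hu⟩
    · rw [Set.disjoint_singleton_left]; exact fun h => hU h.1
  have e3 : ν {y} + ν R = b := by
    rw [← m4, ← measure_union _ mR]
    · refine measure_eq_of_ae ?_
      filter_upwards [aeU] with z hz
      simp only [hR, mem_union, mem_singleton_iff, mem_inter_iff, mem_ofPred_eq]
      constructor
      · rintro (rfl | h); exacts [rfl, h.2]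
      · intro hu
        rcases hz with h | h
        · exact Or.inr ⟨h, hu⟩
        · exact Or.inl (c.inj h hu)
    · rw [Set.disjoint_singleton_left]; exact fun h => hU h.1.symm
  have hRR : ν R = ν R' := by
    rw [← e2] at e1
    exact (ENNReal.add_right_inj (measure_ne_top _ _)).1 e1
  by_cases hr0 : ν R = 0
  · left
    rw [hr0, add_zero] at e1 e3
    exact tp_ext hxy hab e1 e3
  by_cases hy0 : ν {y} = 0
  · right
    rw [hy0, zero_add] at e3
    have hba : b ≤ a := by rw [← e3, ← e1]; exact le_add_self
    have hab' : a = b := le_antisymm hle hba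
    refine ⟨hab', ?_⟩
    have hx0 : ν {x} = 0 := by
      have h5 : ν {x} + ν R = 0 + ν R := by rw [e1, hab', e3, zero_add]
      exact (ENNReal.add_left_inj (measure_ne_top _ _)).1 h5
    have hx1 := measure_eq_zero_iff_ae_notMem.1 hx0
    have hy1 := measure_eq_zero_iff_ae_notMem.1 hy0
    filter_upwards [aeU, aeV, hx1, hy1] with z h1 h2 h3 h4
    rcases h1 with h1 | h1 <;> rcases h2 with h2 | h2
    · exact absurd (c.inj h1 h2) h3
    · exact Or.inl ⟨h1, h2⟩
    · exact Or.inr ⟨h1, h2⟩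
    · exact absurd (c.inj h1 h2) h4
  -- main contradiction
  exfalso
  obtain ⟨x01, hx01⟩ := nonempty_of_measure_ne_zero hr0
  obtain ⟨x10, hx10⟩ := nonempty_of_measure_ne_zero (hRR ▸ hr0)
  have hRs : R = {x01} := by
    ext z
    simp only [mem_singleton_iff]
    exact ⟨fun hz => c.inj (hz.1.trans hx01.1.symm) (hz.2.trans hx01.2.symm), fun hz => hz ▸ hx01⟩
  obtain ⟨u01, v01⟩ : U x01 = U x ∧ V x01 = V y := hx01
  obtain ⟨u10, v10⟩ : U x10 = U y ∧ V x10 = V x := hx10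
  set b1 := (V x + V y) / 2 with hb1
  have hb1x : b1 ≠ V x := fun e => hV (by linarith)
  have hb1y : b1 ≠ V y := fun e => hV (by linarith)
  obtain ⟨xm, um, vm⟩ : ∃ xm, U xm = U x ∧ V xm = b1 := by
    have := mid_mem c.conv (c.mem x) (c.mem x01)
    rw [u01, v01] at this
    obtain ⟨w, h1, h2⟩ := c.surj _ this
    exact ⟨w, by simpa using h1, h2⟩
  obtain ⟨ym, uym, vym⟩ : ∃ ym, U ym = U y ∧ V ym = b1 := by
    have := mid_mem c.conv (c.mem x10) (c.mem y)
    rw [u10, v10] at this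
    obtain ⟨w, h1, h2⟩ := c.surj _ this
    exact ⟨w, by simpa using h1, h2⟩
  set κ := min (ν R) (ν {y}) with hκ
  have hκ0 : κ ≠ 0 := by
    rw [hκ]; intro h0
    rcases min_eq_bot.1 (h0 : min (ν R) (ν {y}) = ⊥) with h | h
    exacts [hr0 h, hy0 h]
  obtain ⟨θ1, hθ1⟩ := split_atom (μ := ν) (x := x01) (κ := κ) (by rw [← hRs]; exact min_le_left _ _)
  have hx01y : x01 ≠ y := fun e => hU (by rw [← e, u01])
  have iθ1 : IsFiniteMeasure θ1 := by
    refine isFiniteMeasure_of_le ν ?_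
    rw [hθ1]; exact Measure.le_add_right le_rfl
  have hθy : θ1 {y} = ν {y} := by
    rw [hθ1]; simp [hx01y]
  obtain ⟨θ, hθ⟩ := split_atom (μ := θ1) (x := y) (κ := κ) (by rw [hθy]; exact min_le_right _ _)
  have d1 : ν = (θ + κ • Measure.dirac y) + κ • Measure.dirac x01 := by rw [hθ1, hθ]
  have d2 : ν = (θ + κ • Measure.dirac x01) + κ • Measure.dirac y := by
    rw [d1, add_right_comm]
  set ηA := (θ + κ • Measure.dirac y) + κ • Measure.dirac xm with hηA
  set ηB := (θ + κ • Measure.dirac x01) + κ • Measure.dirac ym with hηB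
  have hA : ηA ∈ WSet X 1 := by
    have := hm'; rw [d1] at this; exact rep_mem this
  have hB : ηB ∈ WSet X 1 := by
    have := hm'; rw [d2] at this; exact rep_mem this
  have iA := hA.1
  have iB := hB.1
  have habs1 : |V x - b1| = |V x - V y| / 2 := by
    rw [hb1, show V x - (V x + V y) / 2 = (V x - V y) / 2 by ring, abs_div]; simp
  have habs2 : |V y - b1| = |V x - V y| / 2 := by
    rw [hb1, show V y - (V x + V y) / 2 = -((V x - V y) / 2) by ring, abs_neg, abs_div]; simp
  have bA : K 1 (Measure.dirac x) ηA + K 1 ηA ν ≤ K 1 (Measure.dirac x) ν := by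
    have i1 : IsProbabilityMeasure ((θ + κ • Measure.dirac y) + κ • Measure.dirac x01) := by
      rw [← d1]; exact iν
    have := K1_between_move (x := x) iA i1 (by
      rw [edist_dist, edist_dist, edist_dist, ← ENNReal.ofReal_add dist_nonneg dist_nonneg]
      apply ENNReal.ofReal_le_ofReal
      rw [c.d, c.d, c.d, um, vm, u01, v01, abs_sub_comm b1, abs_sub_comm b1, habs1, habs2,
        abs_sub_comm (V y)]
      simp)
    rwa [← d1] at this
  have bB : K 1 (Measure.dirac x) ηB + K 1 ηB ν ≤ K 1 (Measure.dirac x) ν := by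
    have i1 : IsProbabilityMeasure ((θ + κ • Measure.dirac x01) + κ • Measure.dirac y) := by
      rw [← d2]; exact iν
    have := K1_between_move (x := x) iB i1 (by
      rw [edist_dist, edist_dist, edist_dist, ← ENNReal.ofReal_add dist_nonneg dist_nonneg]
      apply ENNReal.ofReal_le_ofReal
      rw [c.d, c.d, c.d, uym, vym, abs_sub_comm b1, abs_sub_comm b1, habs1, habs2,
        abs_sub_comm (V y)]
      simp; linarith)
    rwa [← d2] at this
  have evU : ∀ s, ηA {z | U z = s} = ν {z | U z = s} ∧ ηB {z | U z = s} = ν {z | U z = s} := by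
    intro s
    constructor
    · rw [d1, hηA]; simp [mU s, indicator, um, u01]
    · rw [d2, hηB]; simp [mU s, indicator, uym]
  have evV : ∀ s, ηA {z | V z = s} = ηB {z | V z = s} := by
    intro s
    rw [hηA, hηB]; simp [mV s, indicator, vm, v01, vym]
  have evVx : ηA {z | V z = V x} = a := by
    rw [← m3, d1, hηA]; simp [mV, indicator, vm, v01, hb1x, hV.symm]
  have ν0 : ν {z | V z = b1} = 0 := by
    rw [measure_eq_zero_iff_ae_notMem]
    filter_upwards [aeV] with z hz hz'
    rcases hz with h | h
    exacts [hb1x (hz'.symm.trans h), hb1y (hz'.symm.trans h)]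
  have θ0 : θ {z | V z = b1} = 0 := by
    have := ν0; rw [d1] at this; simp at this; exact this.1.1
  have evVm : ηA {z | V z = V y} + ηA {z | V z = b1} = b := by
    rw [← m4]
    conv_rhs => rw [d1]
    rw [hηA]; simp [mV, indicator, vm, v01, hb1y, hb1y.symm, θ0]
  obtain ⟨η1, h1, f1⟩ := h.surj ηA hA
  obtain ⟨η2, h2, f2⟩ := h.surj ηB hB
  have three : ∀ η ∈ WSet X 1, (∀ s, Φ η {z | U z = s} = ν {z | U z = s}) →
      (∀ s, Φ η {z | V z = s} = ηA {z | V z = s}) →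
      (K 1 (Measure.dirac x) (Φ η) + K 1 (Φ η) ν ≤ K 1 (Measure.dirac x) ν) →
      (∀ᵐ z ∂η, z = x ∨ z = ym ∨ z = y) ∧ η {x} = a ∧ η {ym} = ηA {z | V z = b1} ∧
        η {y} = ηA {z | V z = V y} := by
    intro η hη p1 p2 p3
    have iη := hη.1
    have hmη := h.maps _ hη
    have hpη := h.potR le_rfl hη
    have q1 : η {z | U z = U x} = a := by rw [← c.marg hη hmη hpη hx, p1, m1]
    have q2 : η {z | U z = U y} = b := by rw [← c.marg hη hmη hpη hy, p1, m2]
    have q3 : η {z | V z = V x} = a := by rw [← c.swap.marg hη hmη hpη hx.swap, p2, evVx]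
    have q4 : η {z | V z = V y} = ηA {z | V z = V y} := by
      rw [← c.swap.marg hη hmη hpη hy.swap, p2]
    have q5 : η {z | V z = b1} = ηA {z | V z = b1} := by
      rw [← c.swap.marg hη hmη hpη (Inn.mid c.conv hx hy).swap, p2]
    have q6 : a ≤ η {x} := by
      rw [hν, ← h.fix x, h.K _ (dirac_mem 1 le_rfl x) _ hη, h.K _ hη _ hm,
        h.K _ (dirac_mem 1 le_rfl x) _ hm] at p3
      have := K1_between_atom hη hm p3
      have hax : μ {x} = a := by rw [hμ]; simp [hxy.symm]
      rw [prob_compl_eq_one_sub (measurableSet_singleton x),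
        prob_compl_eq_one_sub (measurableSet_singleton x), hax] at this
      rw [tsub_le_iff_right] at this
      have h7 := this
      have ha1 : a ≤ 1 := by rw [← hab]; exact le_self_add
      calc a = 1 - (1 - a) := (ENNReal.sub_sub_cancel (by simp) ha1).symm
        _ ≤ η {x} := by
          rw [tsub_le_iff_right]
          rw [add_comm]; exact h7
    have r1 : ∀ᵐ z ∂η, U z = U x → z = x :=
      ae_of_le (A := {x}) (B := {z | U z = U x}) (measurableSet_singleton x)
        (by rintro z rfl; rfl) (by rw [q1]; exact q6)
    have r2 : ∀ᵐ z ∂η, V z = V x → z = x :=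
      ae_of_le (A := {x}) (B := {z | V z = V x}) (measurableSet_singleton x)
        (by rintro z rfl; rfl) (by rw [q3]; exact q6)
    have r3 : ∀ᵐ z ∂η, U z = U x ∨ U z = U y := by
      refine ae_union2 (A := {z | U z = U x}) (B := {z | U z = U y}) (mU _) (mU _) ?_ (by rw [q1, q2, hab])
      rw [Set.disjoint_left]; intro z h1 h2; exact hU (h1.symm.trans h2)
    have r4 : ∀ᵐ z ∂η, V z = V x ∨ V z = V y ∨ V z = b1 := by
      refine ae_union3 (A := {z | V z = V x}) (B := {z | V z = V y}) (C := {z | V z = b1}) (mV _) (mV _) (mV _) ?_ ?_ ?_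
        (by rw [q3, q4, q5, add_assoc, evVm, hab])
      · rw [Set.disjoint_left]; intro z h1 h2; exact hV (h1.symm.trans h2)
      · rw [Set.disjoint_left]; intro z h1 h2; exact hb1x (h2.symm.trans h1)
      · rw [Set.disjoint_left]; intro z h1 h2; exact hb1y (h2.symm.trans h1)
    have r5 : ∀ᵐ z ∂η, z = x ∨ z = ym ∨ z = y := by
      filter_upwards [r1, r2, r3, r4] with z s1 s2 s3 s4
      rcases s3 with s3 | s3
      · exact Or.inl (s1 s3)
      rcases s4 with s4 | s4 | s4
      · exact Or.inl (s2 s4)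
      · exact Or.inr (Or.inr (c.inj s3 s4))
      · exact Or.inr (Or.inl (c.inj (s3.trans uym.symm) (s4.trans vym.symm)))
    refine ⟨r5, le_antisymm ?_ q6, ?_, ?_⟩
    · rw [← q1]; exact measure_mono (by rintro z rfl; rfl)
    · rw [← q5]
      refine measure_eq_of_ae ?_
      filter_upwards [r5] with z hz
      simp only [mem_singleton_iff, mem_ofPred_eq]
      constructor
      · rintro rfl; exact vym
      · intro hz'
        rcases hz with rfl | rfl | rfl
        · exact absurd hz'.symm hb1x
        · rfl
        · exact absurd hz'.symm hb1y
    · rw [← q4]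
      refine measure_eq_of_ae ?_
      filter_upwards [r5] with z hz
      simp only [mem_singleton_iff, mem_ofPred_eq]
      constructor
      · rintro rfl; rfl
      · intro hz'
        rcases hz with rfl | rfl | rfl
        · exact absurd hz' hV
        · exact absurd (vym.symm.trans hz') hb1y
        · rfl
  have t1 := three η1 h1 (by rw [f1]; exact fun s => (evU s).1) (by rw [f1]; exact fun s => rfl)
    (by rw [f1]; exact bA)
  have t2 := three η2 h2 (by rw [f2]; exact fun s => (evU s).2)
    (by rw [f2]; exact fun s => (evV s).symm) (by rw [f2]; exact bB)
  have hη : η1 = η2 := by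
    classical
    refine ext_fin {x, ym, y} ?_ ?_ ?_
    · filter_upwards [t1.1] with z hz; simpa using hz
    · filter_upwards [t2.1] with z hz; simpa using hz
    · intro z hz
      rcases (by simpa using hz : z = x ∨ z = ym ∨ z = y) with rfl | rfl | rfl
      · rw [t1.2.1, t2.2.1]
      · rw [t1.2.2.1, t2.2.2.1]
      · rw [t1.2.2.2, t2.2.2.2]
  have hAB : ηA = ηB := by rw [← f1, ← f2, hη]
  have hxm : xm ≠ x01 := fun e => hb1y (by rw [← vm, e, v01])
  have hxm' : xm ≠ ym := fun e => hU (by rw [← um, e, uym])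
  have z1 : ηB {xm} = 0 := by
    have : θ {xm} = 0 := by
      refine measure_mono_null ?_ θ0
      rintro z rfl; exact vm
    rw [hηB]; simp [this, hxm.symm, hxm'.symm]
  rw [← hAB, hηA] at z1
  simp at z1
  exact hκ0 z1.2

end TwoPoint2

end WR

namespace WR

open Set Filter Topology
open scoped ENNReal NNReal

section Vor

variable {X : Type*} [MetricSpace X] [MeasurableSpace X] [BorelSpace X]
  [SecondCountableTopology X]

variable {U V : X → ℝ} {S : Set (ℝ × ℝ)} {Φ : Measure X → Measure X}

lemma Cpl.prob {π : Measure (X × X)} {μ ν : Measure X} [IsProbabilityMeasure μ]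
    (h : Cpl π μ ν) : IsProbabilityMeasure π := by
  constructor
  rw [← measure_univ (μ := μ), ← h.1, Measure.map_apply measurable_fst MeasurableSet.univ]
  simp

lemma Chart.tp1_lt (c : Chart U V S) (h : Fx 1 Φ) {x y : X}
    (hx : Inn S (U x) (V x)) (hy : Inn S (U y) (V y)) (hU : U x ≠ U y) (hV : V x ≠ V y)
    {a b : ℝ≥0∞} (hab : a + b = 1) (hle : a ≤ b) :
    Φ (a • Measure.dirac x + b • Measure.dirac y)
      = a • Measure.dirac x + b • Measure.dirac y := by
  rcases c.tp1_main h hx hy hU hV hab hle with h1 | ⟨rfl, h1⟩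
  · exact h1
  exfalso
  have ha : a = 2⁻¹ := by
    rw [← two_mul] at hab
    exact ENNReal.eq_inv_of_mul_eq_one_left (by rw [mul_comm]; exact hab)
  have hxy : x ≠ y := fun e => hU (by rw [e])
  have hm := tp_mem le_rfl x y hab
  set m : ℝ := min |U x - U y| |V x - V y| / 2 with hmdef
  have hm0 : 0 < m := by
    have h1 : 0 < |U x - U y| := abs_pos.2 (sub_ne_zero.2 hU)
    have h2 : 0 < |V x - V y| := abs_pos.2 (sub_ne_zero.2 hV)
    have := lt_min h1 h2
    positivity
  have hD : 2 * m ≤ dist x y := by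
    rw [c.d, hmdef]
    have h1 := min_le_left |U x - U y| |V x - V y|
    have h2 := min_le_right |U x - U y| |V x - V y|
    linarith
  have hDpos : 0 < dist x y := by linarith
  set κ : ℝ≥0∞ := ENNReal.ofReal (m / (2 * dist x y)) with hκ
  have hκ0 : 0 < κ := by rw [hκ, ENNReal.ofReal_pos]; positivity
  have hκ2 : κ ≤ 2⁻¹ := by
    have : (2⁻¹ : ℝ≥0∞) = ENNReal.ofReal (2⁻¹) := by
      rw [ENNReal.ofReal_inv_of_pos (by norm_num)]; simp
    rw [hκ, this]
    apply ENNReal.ofReal_le_ofReal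
    rw [div_le_iff₀ (by positivity)]
    linarith
  have e1 : (a - κ) + κ = a := tsub_add_cancel_of_le (ha ▸ hκ2)
  have hab' : (a - κ) + (a + κ) = 1 := by
    rw [← hab]; nth_rewrite 3 [← e1]; ring
  have hlt : a - κ ≤ a + κ := tsub_le_self.trans le_self_add
  have hne : a - κ ≠ a + κ := by
    intro e
    have h3 : a + κ ≤ a + 0 := by rw [← e, add_zero]; exact tsub_le_self
    rw [ENNReal.add_le_add_iff_left (by simp [ha])] at h3
    exact absurd h3 (not_le.2 hκ0)
  rcases c.tp1_main h hx hy hU hV hab' hlt with h2 | ⟨h2, -⟩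
  swap
  · exact hne h2
  have hm2 := tp_mem le_rfl x y hab'
  have k1 := h.K _ hm _ hm2
  rw [h2] at k1
  have k2 : K 1 (a • Measure.dirac x + a • Measure.dirac y)
      ((a - κ) • Measure.dirac x + (a + κ) • Measure.dirac y) ≤ κ * edist x y := by
    have := K1_move ((a - κ) • Measure.dirac x + a • Measure.dirac y) κ x y
    convert this using 2
    · nth_rewrite 1 [← e1]
      rw [add_smul, add_right_comm]
    · rw [add_smul, add_assoc]
  have k3 : ENNReal.ofReal m ≤ K 1 (Φ (a • Measure.dirac x + a • Measure.dirac y))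
      ((a - κ) • Measure.dirac x + (a + κ) • Measure.dirac y) := by
    have i1 := (h.maps _ hm).1
    refine le_K fun π hπ => ?_
    have iπ := hπ.prob
    calc ENNReal.ofReal m = ∫⁻ q, ENNReal.ofReal m ∂π := by simp
      _ ≤ _ := by
        refine lintegral_mono_ae ?_
        filter_upwards [hπ.ae_fst h1, hπ.ae_snd (tp_ae x y _ _)] with q q1 q2
        rw [ENNReal.rpow_one, edist_dist]
        apply ENNReal.ofReal_le_ofReal
        rw [c.d, hmdef]
        have n1 := min_le_left |U x - U y| |V x - V y|
        have n2 := min_le_right |U x - U y| |V x - V y|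
        have s1 := abs_sub_comm (U x) (U y)
        have s2 := abs_sub_comm (V x) (V y)
        rcases q1 with ⟨q1, q1'⟩ | ⟨q1, q1'⟩ <;> rcases q2 with q2 | q2 <;>
          rw [q1, q1', q2] <;> simp only [sub_self, abs_zero] <;> linarith
  rw [k1] at k3
  have k4 := k3.trans k2
  rw [hκ, edist_dist, ← ENNReal.ofReal_mul (by positivity), ENNReal.ofReal_le_ofReal_iff
    (by positivity)] at k4
  have : m / (2 * dist x y) * dist x y = m / 2 := by field_simp
  linarith

lemma Chart.tp1_line (c : Chart U V S) (h : Fx 1 Φ) {x y : X}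
    (hx : Inn S (U x) (V x)) (hy : Inn S (U y) (V y)) (hU : U x = U y) (hV : V x ≠ V y)
    {a b : ℝ≥0∞} (hab : a + b = 1) :
    Φ (a • Measure.dirac x + b • Measure.dirac y)
      = a • Measure.dirac x + b • Measure.dirac y := by
  have hm := tp_mem le_rfl x y hab
  have hm' := h.maps _ hm
  have hpot := h.potR le_rfl hm
  set μ := a • Measure.dirac x + b • Measure.dirac y with hμ
  set ν := Φ μ with hν
  have iν := hm'.1
  have iμ := hm.1
  have hxy : x ≠ y := fun e => hV (by rw [e])
  have mU : ∀ s, MeasurableSet {z | U z = s} := fun s =>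
    measurableSet_eq_fun c.measU measurable_const
  have mV : ∀ s, MeasurableSet {z | V z = s} := fun s =>
    measurableSet_eq_fun c.measV measurable_const
  have m1 : ν {z | U z = U x} = 1 := by
    rw [c.marg hm hm' hpot hx, hμ, tp_eval _ _ _ _ (mU _)]
    simp [indicator, hU.symm, hab]
  have aeU : ∀ᵐ z ∂ν, U z = U x := by
    have := (prob_compl_eq_zero_iff (mU (U x))).2 m1
    exact measure_eq_zero_iff_ae_notMem.1 this |>.mono fun z hz => by
      simpa using hz
  have m3 : ν {z | V z = V x} = a := by
    rw [c.swap.marg hm hm' hpot hx.swap, hμ, tp_eval _ _ _ _ (mV _)]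
    simp [indicator, hV.symm]
  have m4 : ν {z | V z = V y} = b := by
    rw [c.swap.marg hm hm' hpot hy.swap, hμ, tp_eval _ _ _ _ (mV _)]
    simp [indicator, hV]
  refine tp_ext hxy hab ?_ ?_
  · rw [← m3]
    refine measure_eq_of_ae ?_
    filter_upwards [aeU] with z hz
    simp only [mem_singleton_iff, mem_ofPred_eq]
    exact ⟨fun e => by rw [e], fun e => c.inj hz e⟩
  · rw [← m4]
    refine measure_eq_of_ae ?_
    filter_upwards [aeU] with z hz
    simp only [mem_singleton_iff, mem_ofPred_eq]
    exact ⟨fun e => by rw [e], fun e => c.inj (hz.trans hU) e⟩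

/-- Two-point measures are fixed. -/
theorem Chart.tp (c : Chart U V S) {p : ℝ} (hp : 1 ≤ p) (h : Fx p Φ) {x y : X}
    (hx : Inn S (U x) (V x)) (hy : Inn S (U y) (V y)) {a b : ℝ≥0∞} (hab : a + b = 1) :
    Φ (a • Measure.dirac x + b • Measure.dirac y)
      = a • Measure.dirac x + b • Measure.dirac y := by
  by_cases hxy : x = y
  · subst hxy
    rw [← add_smul, hab, one_smul]; exact h.fix x
  rcases hp.eq_or_lt with rfl | hp1
  · by_cases hU : U x = U y
    · exact c.tp1_line h hx hy hU (fun hV => hxy (c.inj hU hV)) hab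
    by_cases hV : V x = V y
    · exact c.swap.tp1_line h hx.swap hy.swap hV hU hab
    rcases le_total a b with hle | hle
    · exact c.tp1_lt h hx hy hU hV hab hle
    · rw [add_comm (a • _)]
      exact c.tp1_lt h hy hx (Ne.symm hU) (Ne.symm hV) (by rw [add_comm]; exact hab) hle
  · by_cases hU : U x = U y
    · exact c.swap.tp_gt hp1 h hx.swap hy.swap (fun hV => hxy (c.inj hU hV)) hab
    · exact c.tp_gt hp1 h hx hy hU hab

lemma measure_pos_le {μ : Measure X} {g : X → ℝ≥0∞} (hg : Measurable g) {C : ℝ≥0∞}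
    (h : ∀ δ : ℝ≥0∞, δ ≠ ⊤ → δ ≠ 0 → ∫⁻ z, min (g z) δ ∂μ ≤ δ * C) : μ {z | 0 < g z} ≤ C := by
  have step2 : ∀ n : ℕ, μ {z | ((n : ℝ≥0∞) + 1)⁻¹ ≤ g z} ≤ C := by
    intro n
    set δ : ℝ≥0∞ := ((n : ℝ≥0∞) + 1)⁻¹
    have hδ : δ ≠ ⊤ := by simp [δ]
    have hδ0 : δ ≠ 0 := by simp [δ]
    have a1 : δ * μ {z | δ ≤ g z} ≤ ∫⁻ z, min (g z) δ ∂μ := by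
      refine le_trans (mul_le_mul_right (measure_mono ?_) _)
        (mul_meas_ge_le_lintegral (hg.min measurable_const) δ)
      intro z hz
      exact le_min (mem_ofPred_eq ▸ hz) le_rfl
    exact (ENNReal.mul_le_mul_iff_right hδ0 hδ).1 (a1.trans (h δ hδ hδ0))
  have hU : {z | 0 < g z} = ⋃ n : ℕ, {z | ((n : ℝ≥0∞) + 1)⁻¹ ≤ g z} := by
    ext z
    simp only [mem_iUnion, mem_ofPred_eq]
    constructor
    · intro hz
      obtain ⟨n, hn⟩ := ENNReal.exists_inv_nat_lt hz.ne'
      refine ⟨n, le_trans ?_ hn.le⟩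
      exact ENNReal.inv_le_inv.2 (by simp)
    · rintro ⟨n, hn⟩
      exact lt_of_lt_of_le (by simp) hn
  rw [hU]
  refine le_of_tendsto (tendsto_measure_iUnion_atTop ?_) (Eventually.of_forall fun n => step2 n)
  intro n m hnm z hz
  rw [mem_ofPred_eq] at hz ⊢
  refine le_trans ?_ hz
  refine ENNReal.inv_le_inv.2 ?_
  gcongr

/-- the minimal two-point cost -/
noncomputable def mn (p : ℝ) (x y : X) (z : X) : ℝ≥0∞ := min (edist z y ^ p) (edist z x ^ p)

lemma mn_meas (p : ℝ) (x y : X) : Measurable (mn p x y) :=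
  (meas_edist_left p y).min (meas_edist_left p x)

lemma vor_lb {p : ℝ} (μ : Measure X) (x y : X) (a b : ℝ≥0∞) :
    ∫⁻ z, mn p x y z ∂μ ≤ K p μ (a • Measure.dirac y + b • Measure.dirac x) := by
  refine le_K fun π hπ => ?_
  rw [← hπ.lint_fst (mn_meas p x y)]
  refine lintegral_mono_ae ?_
  filter_upwards [hπ.ae_snd (tp_ae y x _ _)] with q hq
  rcases hq with hq | hq
  · rw [hq]; exact min_le_left _ _
  · rw [hq]; exact min_le_right _ _

lemma vor_set_meas (x y : X) : MeasurableSet {z : X | edist z y < edist z x} :=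
  measurableSet_lt (measurable_id.edist measurable_const) (measurable_id.edist measurable_const)

lemma vor_ub {p : ℝ} (hp : 1 ≤ p) (μ : Measure X) (x y : X) :
    K p μ (μ {z | edist z y < edist z x} • Measure.dirac y
      + μ {z | edist z y < edist z x}ᶜ • Measure.dirac x) ≤ ∫⁻ z, mn p x y z ∂μ := by
  classical
  set A := {z : X | edist z y < edist z x} with hA
  have mA : MeasurableSet A := vor_set_meas x y
  set f : X → X := A.piecewise (fun _ => y) (fun _ => x) with hf
  have mf : Measurable f := Measurable.piecewise mA measurable_const measurable_const
  have mg : Measurable fun z => (z, f z) := measurable_id.prodMk mf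
  have hc : Cpl (μ.map fun z => (z, f z)) μ (μ A • Measure.dirac y + μ Aᶜ • Measure.dirac x) := by
    constructor
    · rw [Measure.map_map measurable_fst mg]
      simp [Function.comp_def]
    · rw [Measure.map_map measurable_snd mg]
      change μ.map f = _
      conv_lhs => rw [← Measure.restrict_add_restrict_compl (μ := μ) mA]
      rw [Measure.map_add _ _ mf]
      congr 1
      · rw [Measure.map_congr (g := fun _ => y), Measure.map_const]
        · simp
        · filter_upwards [ae_restrict_mem mA] with z hz
          simp [hf, hz]
      · rw [Measure.map_congr (g := fun _ => x), Measure.map_const]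
        · simp
        · filter_upwards [ae_restrict_mem mA.compl] with z hz
          have : z ∉ A := hz
          simp [hf, this]
  refine (K_le hc).trans ?_
  rw [lintegral_map (meas_edist p) mg]
  refine lintegral_mono fun z => ?_
  have hp0 : 0 ≤ p := by linarith
  by_cases hz : z ∈ A
  · simp only [hf, piecewise_eq_of_mem _ _ _ hz, mn]
    refine le_min le_rfl (ENNReal.rpow_le_rpow ?_ hp0)
    exact le_of_lt hz
  · simp only [hf, piecewise_eq_of_notMem _ _ _ hz, mn]
    refine le_min (ENNReal.rpow_le_rpow ?_ hp0) le_rfl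
    exact not_lt.1 hz

lemma vor_lower {p : ℝ} (hp : 1 ≤ p) {μ : Measure X} (hμ : μ ∈ WSet X p) {x y : X} (hxy : x ≠ y)
    {a b : ℝ≥0∞}
    (h : K p μ (a • Measure.dirac y + b • Measure.dirac x) ≤ ∫⁻ z, mn p x y z ∂μ) :
    μ {z | edist z y < edist z x} ≤ a := by
  have hp0 : 0 < p := by linarith
  have hfin : ∫⁻ z, mn p x y z ∂μ ≠ ⊤ :=
    ((lintegral_mono fun z => min_le_right _ _).trans_lt (WSet.moment hp hμ x)).ne
  have me := meas_edist_left (X := X) p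
  have mg : Measurable fun z => edist z x ^ p - edist z y ^ p := (me x).sub (me y)
  have hset : {z : X | edist z y < edist z x} = {z | 0 < edist z x ^ p - edist z y ^ p} := by
    ext z
    simp only [mem_ofPred_eq, tsub_pos_iff_lt]
    exact (ENNReal.rpow_lt_rpow_iff hp0).symm
  rw [hset]
  refine measure_pos_le mg fun δ hδ hδ0 => ?_
  have h1 : ∫⁻ z, mn p x y z ∂μ + ∫⁻ z, min (edist z x ^ p - edist z y ^ p) δ ∂μ
      ≤ K p μ (a • Measure.dirac y + b • Measure.dirac x) + δ * a := by
    rw [← tsub_le_iff_right]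
    refine le_K fun π hπ => ?_
    rw [tsub_le_iff_right]
    have ea : δ * a = ∫⁻ q, Set.indicator {y} (fun _ => δ) q.2 ∂π := by
      have ms : Measurable (Set.indicator {y} (fun _ : X => δ)) :=
        measurable_const.indicator (measurableSet_singleton y)
      rw [hπ.lint_snd ms, lintegral_indicator (measurableSet_singleton y), setLIntegral_const]
      simp [hxy]
    have ms : Measurable fun q : X × X => Set.indicator {y} (fun _ : X => δ) q.2 :=
        (measurable_const.indicator (measurableSet_singleton y)).comp measurable_snd
    have mm : Measurable fun z => min (edist z x ^ p - edist z y ^ p) δ := mg.min measurable_const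
    have mf1 : Measurable fun q : X × X => mn p x y q.1 := (mn_meas p x y).comp measurable_fst
    rw [ea, ← hπ.lint_fst (mn_meas p x y), ← hπ.lint_fst mm,
      ← lintegral_add_right _ ms, ← lintegral_add_left mf1]
    refine lintegral_mono_ae ?_
    filter_upwards [hπ.ae_snd (tp_ae y x _ _)] with q hq
    rcases hq with hq | hq
    · rw [hq]
      simp only [mem_singleton_iff, indicator_of_mem]
      exact add_le_add (min_le_left _ _) (min_le_right _ _)
    · rw [hq]
      simp only [mem_singleton_iff, hxy, not_false_eq_true, indicator_of_notMem, add_zero]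
      rcases le_total (edist q.1 x ^ p) (edist q.1 y ^ p) with hle | hle
      · rw [tsub_eq_zero_of_le hle]; simp [mn]
      · refine (add_le_add (min_le_left _ _) (min_le_left _ _)).trans ?_
        rw [add_tsub_cancel_of_le hle]
  have h2 := h1.trans (add_le_add_left h _)
  exact (ENNReal.add_le_add_iff_left hfin).1 h2

/-- measures of Voronoi cells are preserved -/
lemma Chart.vor (c : Chart U V S) {p : ℝ} (hp : 1 ≤ p) (h : Fx p Φ) {μ : Measure X}
    (hμ : μ ∈ WSet X p) {x y : X} (hxy : x ≠ y)
    (hx : Inn S (U x) (V x)) (hy : Inn S (U y) (V y)) :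
    Φ μ {z | edist z y < edist z x} = μ {z | edist z y < edist z x} := by
  have hμ' := h.maps μ hμ
  have i1 := hμ.1
  have i2 := hμ'.1
  have mA := vor_set_meas x y
  have s1 : μ {z | edist z y < edist z x} + μ {z | edist z y < edist z x}ᶜ = 1 :=
    prob_add_prob_compl mA
  have s2 : Φ μ {z | edist z y < edist z x} + Φ μ {z | edist z y < edist z x}ᶜ = 1 :=
    prob_add_prob_compl mA
  have f1 := c.tp hp h hy hx s1
  have f2 := c.tp hp h hy hx s2
  have u1 := vor_ub hp μ x y
  have u2 := vor_ub hp (Φ μ) x y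
  have k1 := h.K _ hμ _ (tp_mem hp y x s1)
  have k2 := h.K _ hμ _ (tp_mem hp y x s2)
  rw [f1] at k1
  rw [f2] at k2
  rw [← k1] at u1
  rw [k2] at u2
  have m1 := (vor_lb (Φ μ) x y _ _).trans u1
  have m2 := (vor_lb μ x y _ _).trans u2
  have e := le_antisymm m1 m2
  rw [← e] at u1
  rw [e] at u2
  exact le_antisymm (vor_lower hp hμ' hxy u1) (vor_lower hp hμ hxy u2)

lemma Inn.shift {S : Set (ℝ × ℝ)} {s t : ℝ} (h : Inn S s t) :
    ∃ k > 0, ∀ a b, |a - s| ≤ k → |b - t| ≤ k → Inn S a b := by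
  obtain ⟨k, hk, H⟩ := h
  refine ⟨k / 2, by positivity, fun a b ha hb => ⟨k / 2, by positivity, fun a' b' ha' hb' => ?_⟩⟩
  refine H a' b' ?_ ?_
  · have := abs_add_le (a' - a) (a - s)
    rw [sub_add_sub_cancel] at this; linarith
  · have := abs_add_le (b' - b) (b - t)
    rw [sub_add_sub_cancel] at this; linarith

lemma edist_lt_iff (z x y : X) : edist z y < edist z x ↔ dist z y < dist z x := by
  rw [edist_dist, edist_dist, ENNReal.ofReal_lt_ofReal_iff_of_nonneg dist_nonneg]

lemma Chart.half (c : Chart U V S) {p : ℝ} (hp : 1 ≤ p) (h : Fx p Φ) {μ : Measure X}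
    (hμ : μ ∈ WSet X p) {s t : ℝ} (hst : Inn S s t) :
    Φ μ {z | s < U z} = μ {z | s < U z} := by
  obtain ⟨k, hk, H⟩ := hst.shift
  have h1 : Inn S (s - k) t := H _ _ (by simp [abs_of_pos hk]) (by simpa using hk.le)
  have h2 : Inn S (s + k) t := H _ _ (by simp [abs_of_pos hk]) (by simpa using hk.le)
  obtain ⟨x, hx1, hx2⟩ := c.surj _ h1.mem
  obtain ⟨y, hy1, hy2⟩ := c.surj _ h2.mem
  simp only at hx1 hx2 hy1 hy2
  have hxy : x ≠ y := by rintro rfl; linarith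
  have := c.vor hp h hμ hxy (by rw [hx1, hx2]; exact h1) (by rw [hy1, hy2]; exact h2)
  have hs : {z | edist z y < edist z x} = {z | s < U z} := by
    ext z
    simp only [mem_ofPred_eq, edist_lt_iff, c.d, hx1, hx2, hy1, hy2]
    constructor
    · intro hz
      by_contra hcon
      rw [not_lt] at hcon
      rw [abs_of_nonpos (by linarith : U z - (s + k) ≤ 0)] at hz
      have := abs_le.2 (⟨by linarith, by linarith⟩ : -(-(U z - (s + k))) ≤ U z - (s - k) ∧
        U z - (s - k) ≤ -(U z - (s + k)))
      linarith
    · intro hz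
      rw [abs_of_pos (by linarith : 0 < U z - (s - k))]
      have := abs_lt.2 (⟨by linarith, by linarith⟩ : -(U z - (s - k)) < U z - (s + k) ∧
        U z - (s + k) < (U z - (s - k)))
      linarith
  rwa [hs] at this

lemma abs_diff_eq {h : ℝ} (hh : 0 < h) (u : ℝ) :
    |u| - |u - h| = if u ≤ 0 then -h else 2 * min u h - h := by
  split_ifs with hu
  · rw [abs_of_nonpos hu, abs_of_nonpos (by linarith)]; ring
  · rw [not_le] at hu
    rw [abs_of_pos hu]
    rcases le_total u h with h1 | h1
    · rw [min_eq_left h1, abs_of_nonpos (by linarith)]; ring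
    · rw [min_eq_right h1, abs_of_nonneg (by linarith)]; ring

lemma Chart.quad (c : Chart U V S) {p : ℝ} (hp : 1 ≤ p) (h : Fx p Φ) {μ : Measure X}
    (hμ : μ ∈ WSet X p) {s t : ℝ} (hst : Inn S s t) :
    Φ μ {z | s < U z ∧ t < V z} = μ {z | s < U z ∧ t < V z} := by
  obtain ⟨k, hk, H⟩ := hst.shift
  set B : ℝ → Set X := fun r =>
    {z | s < U z ∧ t < V z ∧ r < min (U z - s) r + min (V z - t) r} with hB
  have key : ∀ r, 0 < r → r ≤ k → Φ μ (B r) = μ (B r) := by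
    intro r hr hrk
    have h2 : Inn S (s + r) (t + r) := H _ _ (by simpa [abs_of_pos hr] using hrk)
      (by simpa [abs_of_pos hr] using hrk)
    obtain ⟨x, hx1, hx2⟩ := c.surj _ hst.mem
    obtain ⟨y, hy1, hy2⟩ := c.surj _ h2.mem
    simp only at hx1 hx2 hy1 hy2
    have hxy : x ≠ y := by rintro rfl; linarith
    have := c.vor hp h hμ hxy (by rw [hx1, hx2]; exact hst) (by rw [hy1, hy2]; exact h2)
    have hs : {z | edist z y < edist z x} = B r := by
      ext z
      simp only [hB, mem_ofPred_eq, edist_lt_iff, c.d, hx1, hx2, hy1, hy2]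
      have a1 := abs_diff_eq hr (U z - s)
      have a2 := abs_diff_eq hr (V z - t)
      rw [sub_sub] at a1 a2
      have b1 := min_le_right (U z - s) r
      have b2 := min_le_right (V z - t) r
      split_ifs at a1 a2 with c1 c2 c2
      · constructor
        · intro hz; linarith
        · intro hz; linarith
      · constructor
        · intro hz; linarith
        · intro hz; linarith
      · constructor
        · intro hz; linarith
        · intro hz; linarith
      · constructor
        · intro hz; exact ⟨by linarith, by linarith, by linarith⟩
        · intro hz; linarith [hz.2.2]
    rwa [hs] at this
  have hU : {z | s < U z ∧ t < V z} = ⋃ n : ℕ, B (k / (n + 1)) := by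
    ext z
    simp only [hB, mem_iUnion, mem_ofPred_eq]
    constructor
    · rintro ⟨h1, h2⟩
      have hpos : 0 < min (U z - s) (V z - t) / k := by
        have := lt_min (sub_pos.2 h1) (sub_pos.2 h2)
        positivity
      obtain ⟨n, hn⟩ := exists_nat_one_div_lt hpos
      refine ⟨n, h1, h2, ?_⟩
      have hr : 0 < k / ((n : ℝ) + 1) := by positivity
      have : k / ((n : ℝ) + 1) < min (U z - s) (V z - t) := by
        rw [lt_div_iff₀ hk] at hn
        calc k / ((n : ℝ) + 1) = 1 / ((n : ℝ) + 1) * k := by ring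
          _ < _ := hn
      rw [min_eq_right (this.le.trans (min_le_left _ _)),
        min_eq_right (this.le.trans (min_le_right _ _))]
      linarith
    · rintro ⟨n, h1, h2, -⟩
      exact ⟨h1, h2⟩
  have hmono : Monotone fun n : ℕ => B (k / (n + 1)) := by
    intro n m hnm z hz
    simp only [hB, mem_ofPred_eq] at hz ⊢
    obtain ⟨h1, h2, h3⟩ := hz
    refine ⟨h1, h2, ?_⟩
    have hle : k / ((m : ℝ) + 1) ≤ k / ((n : ℝ) + 1) := by gcongr
    have hr : 0 < k / ((m : ℝ) + 1) := by positivity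
    have b1 := min_le_left (U z - s) (k / ((n : ℝ) + 1))
    have b2 := min_le_left (V z - t) (k / ((n : ℝ) + 1))
    rcases min_cases (U z - s) (k / ((m : ℝ) + 1)) with ⟨e1, e2⟩ | ⟨e1, e2⟩ <;>
    rcases min_cases (V z - t) (k / ((m : ℝ) + 1)) with ⟨e3, e4⟩ | ⟨e3, e4⟩ <;>
    rw [e1, e3] <;> linarith
  rw [hU]
  refine tendsto_nhds_unique (tendsto_measure_iUnion_atTop hmono)
    ((tendsto_measure_iUnion_atTop hmono).congr fun n => ?_)
  symm
  refine key _ (by positivity) ?_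
  exact div_le_self hk.le (by simp)

end Vor

end WR

namespace WR

open Set Filter Topology
open scoped ENNReal NNReal

section Core

variable {X : Type*} [MetricSpace X] [MeasurableSpace X] [BorelSpace X]
  [SecondCountableTopology X]

variable {U V : X → ℝ} {S : Set (ℝ × ℝ)} {Φ : Measure X → Measure X}

lemma Chart.inducing (c : Chart U V S) : IsInducing fun x => (U x, V x) := by
  have h1 : Continuous fun x => (U x, V x) := c.contU.prodMk c.contV
  have ha : AntilipschitzWith 1 fun x => (U x, V x) := by
    refine AntilipschitzWith.of_le_mul_dist fun x y => ?_
    rw [c.d, Prod.dist_eq, Real.dist_eq, Real.dist_eq]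
    have := le_max_left |U x - U y| |V x - V y|
    have := le_max_right |U x - U y| |V x - V y|
    push_cast
    linarith
  have hl : LipschitzWith 2 fun x => (U x, V x) := by
    refine LipschitzWith.of_dist_le_mul fun x y => ?_
    rw [c.d, Prod.dist_eq, Real.dist_eq, Real.dist_eq]
    have := abs_nonneg (U x - U y)
    have := abs_nonneg (V x - V y)
    push_cast
    refine max_le ?_ ?_ <;> linarith
  exact (ha.isUniformInducing hl.uniformContinuous).isInducing

lemma span_Ioi : IsCountablySpanning (range (Ioi : ℝ → Set ℝ)) := by
  refine ⟨fun n => Ioi (-(n : ℝ)), fun n => ⟨_, rfl⟩, ?_⟩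
  refine eq_univ_of_forall fun x => ?_
  obtain ⟨n, hn⟩ := exists_nat_gt (-x)
  exact mem_iUnion.2 ⟨n, by simp only [mem_Ioi]; linarith⟩

lemma ext_quad {m m' : Measure (ℝ × ℝ)} [IsProbabilityMeasure m] [IsProbabilityMeasure m']
    (h : ∀ s t, m (Ioi s ×ˢ Ioi t) = m' (Ioi s ×ˢ Ioi t)) : m = m' := by
  refine ext_of_generate_finite (image2 (· ×ˢ ·) (range Ioi) (range Ioi)) ?_ ?_ ?_ (by simp)
  · rw [← generateFrom_prod_eq span_Ioi span_Ioi, ← borel_eq_generateFrom_Ioi,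
      ← BorelSpace.measurable_eq]
  · exact IsPiSystem.prod isPiSystem_Ioi isPiSystem_Ioi
  · rintro _ ⟨_, ⟨s, rfl⟩, _, ⟨t, rfl⟩, rfl⟩
    exact h s t

lemma Chart.ext (c : Chart U V S) {m m' : Measure X} [IsProbabilityMeasure m]
    [IsProbabilityMeasure m']
    (h : ∀ s t, m {z | s < U z ∧ t < V z} = m' {z | s < U z ∧ t < V z}) : m = m' := by
  have hm : Measurable fun x => (U x, V x) := c.measU.prodMk c.measV
  have : IsProbabilityMeasure (m.map fun x => (U x, V x)) :=
    Measure.isProbabilityMeasure_map hm.aemeasurable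
  have : IsProbabilityMeasure (m'.map fun x => (U x, V x)) :=
    Measure.isProbabilityMeasure_map hm.aemeasurable
  have e : m.map (fun x => (U x, V x)) = m'.map fun x => (U x, V x) := by
    refine ext_quad fun s t => ?_
    rw [Measure.map_apply hm (measurableSet_Ioi.prod measurableSet_Ioi),
      Measure.map_apply hm (measurableSet_Ioi.prod measurableSet_Ioi)]
    exact h s t
  ext A hA
  have hb : ‹MeasurableSpace X› = MeasurableSpace.comap (fun x => (U x, V x)) inferInstance := by
    rw [BorelSpace.measurable_eq (α := X), c.inducing.eq_induced, borel_comap,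
      BorelSpace.measurable_eq (α := ℝ × ℝ)]
  rw [hb] at hA
  obtain ⟨B, hB, rfl⟩ := hA
  rw [← Measure.map_apply hm hB, ← Measure.map_apply hm hB, e]

lemma Chart.core_univ (c : Chart U V univ) {p : ℝ} (hp : 1 ≤ p) (h : Fx p Φ) {μ : Measure X}
    (hμ : μ ∈ WSet X p) : Φ μ = μ := by
  have := hμ.1
  have := (h.maps μ hμ).1
  exact c.ext fun s t => c.quad hp h hμ ⟨1, one_pos, fun _ _ _ _ => mem_univ _⟩

lemma lim_gt {m m' : Measure X} (f : X → ℝ) (A : X → Prop) (a k : ℝ) (hk : 0 < k)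
    (h : ∀ τ, 0 < τ → τ < k → m {z | a + τ < f z ∧ A z} = m' {z | a + τ < f z ∧ A z}) :
    m {z | a < f z ∧ A z} = m' {z | a < f z ∧ A z} := by
  obtain ⟨τ, hτ, hτ0, hτl⟩ := exists_seq_strictAnti_tendsto' hk
  have e : {z | a < f z ∧ A z} = ⋃ n, {z | a + τ n < f z ∧ A z} := by
    ext z
    simp only [mem_ofPred_eq, mem_iUnion]
    constructor
    · rintro ⟨h1, h2⟩
      have : ∀ᶠ n in atTop, τ n < f z - a := hτl.eventually_lt_const (by linarith)
      obtain ⟨n, hn⟩ := this.exists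
      exact ⟨n, by linarith, h2⟩
    · rintro ⟨n, h1, h2⟩
      exact ⟨by linarith [(hτ0 n).1], h2⟩
  have hmono : Monotone fun n => {z | a + τ n < f z ∧ A z} := by
    intro i j hij z hz
    simp only [mem_ofPred_eq] at hz ⊢
    exact ⟨by linarith [hτ.antitone hij], hz.2⟩
  rw [e]
  refine tendsto_nhds_unique (tendsto_measure_iUnion_atTop hmono) ?_
  refine (tendsto_measure_iUnion_atTop hmono).congr fun n => ?_
  exact (h _ (hτ0 n).1 (hτ0 n).2).symm

/-- the diamond -/
def Dm : Set (ℝ × ℝ) := {q | |q.1| + |q.2| ≤ 2}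

lemma Dm_swap : Prod.swap ⁻¹' Dm = Dm := by
  ext ⟨a, b⟩; simp [Dm, add_comm]

lemma Dm_inn {s t : ℝ} (h : |s| + |t| < 2) : Inn Dm s t := by
  refine ⟨(2 - |s| - |t|) / 2, by linarith, fun a b ha hb => ?_⟩
  have h1 := abs_sub_abs_le_abs_sub a s
  have h2 := abs_sub_abs_le_abs_sub b t
  simp only [Dm, mem_ofPred_eq]
  linarith

lemma Chart.half_Dm (c : Chart U V Dm) {p : ℝ} (hp : 1 ≤ p) (h : Fx p Φ) {μ : Measure X}
    (hμ : μ ∈ WSet X p) (s : ℝ) : Φ μ {z | s < U z} = μ {z | s < U z} := by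
  have := hμ.1
  have := (h.maps μ hμ).1
  have hin : ∀ s, |s| < 2 → Φ μ {z | s < U z} = μ {z | s < U z} := fun s hs =>
    c.half hp h hμ (Dm_inn (t := 0) (by simpa using hs))
  have hU : ∀ z, |U z| ≤ 2 := fun z => by
    have := c.mem z
    simp only [Dm, mem_ofPred_eq] at this
    linarith [abs_nonneg (V z)]
  rcases lt_trichotomy s (-2) with h1 | h1 | h1
  · have : {z | s < U z} = univ := eq_univ_of_forall fun z => by
      have := neg_le_of_abs_le (hU z)
      simp only [mem_ofPred_eq]; linarith
    rw [this]; simp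
  · have := lim_gt (m := Φ μ) (m' := μ) U (fun _ => True) s 1 one_pos (fun τ h2 h3 => by
      simp only [and_true]
      exact hin _ (by rw [abs_lt]; constructor <;> linarith))
    simpa using this
  · rcases lt_or_ge s 2 with h2 | h2
    · exact hin s (abs_lt.2 ⟨h1, h2⟩)
    · have : {z | s < U z} = ∅ := eq_empty_of_forall_notMem fun z hz => by
        have := le_of_abs_le (hU z)
        simp only [mem_ofPred_eq] at hz; linarith
      rw [this]; simp

lemma Chart.core_Dm (c : Chart U V Dm) {p : ℝ} (hp : 1 ≤ p) (h : Fx p Φ) {μ : Measure X}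
    (hμ : μ ∈ WSet X p) : Φ μ = μ := by
  have := hμ.1
  have := (h.maps μ hμ).1
  have c' : Chart V U Dm := by have := c.swap; rwa [Dm_swap] at this
  have hD : ∀ z, |U z| + |V z| ≤ 2 := fun z => c.mem z
  have hb : ∀ z, U z + V z ≤ 2 ∧ U z - V z ≤ 2 ∧ - U z + V z ≤ 2 ∧ - U z - V z ≤ 2 := fun z => by
    have := hD z
    have := le_abs_self (U z)
    have := le_abs_self (V z)
    have := neg_le_abs (U z)
    have := neg_le_abs (V z)
    refine ⟨?_, ?_, ?_, ?_⟩ <;> linarith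
  refine c.ext fun s t => ?_
  have hin : ∀ s t, |s| + |t| < 2 →
      Φ μ {z | s < U z ∧ t < V z} = μ {z | s < U z ∧ t < V z} := fun s t hs =>
    c.quad hp h hμ (Dm_inn hs)
  rcases lt_or_ge (|s| + |t|) 2 with h1 | h1
  · exact hin s t h1
  rcases le_or_gt 0 s with hs | hs
  · rw [abs_of_nonneg hs] at h1
    rcases le_or_gt 0 t with ht | ht
    · rw [abs_of_nonneg ht] at h1
      have : {z | s < U z ∧ t < V z} = ∅ := eq_empty_of_forall_notMem fun z hz => by
        simp only [mem_ofPred_eq] at hz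
        linarith [hb z]
      rw [this]; simp
    · rw [abs_of_neg ht] at h1
      have : {z | s < U z ∧ t < V z} = {z | s < U z} := by
        ext z
        simp only [mem_ofPred_eq, and_iff_left_iff_imp]
        intro _
        linarith [hb z]
      rw [this, c.half_Dm hp h hμ]
  · rw [abs_of_neg hs] at h1
    rcases le_or_gt 0 t with ht | ht
    · rw [abs_of_nonneg ht] at h1
      have : {z | s < U z ∧ t < V z} = {z | t < V z} := by
        ext z
        simp only [mem_ofPred_eq, and_iff_right_iff_imp]
        intro _
        linarith [hb z]
      rw [this, c'.half_Dm hp h hμ]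
    · rw [abs_of_neg ht] at h1
      rcases h1.lt_or_eq with h1 | h1
      · have key : ∀ m : Measure X, IsProbabilityMeasure m →
            m {z | s < U z ∧ t < V z} + 1 = m {z | s < U z} + m {z | t < V z} := by
          intro m hm
          have hmt : MeasurableSet {z | t < V z} := measurableSet_lt measurable_const c.measV
          have e1 : {z | s < U z} = {z | s < U z ∧ t < V z} ∪ {z | t < V z}ᶜ := by
            ext z
            simp only [mem_ofPred_eq, mem_union, mem_compl_iff]
            constructor
            · intro h; by_cases h2 : t < V z
              · exact Or.inl ⟨h, h2⟩
              · exact Or.inr h2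
            · rintro (h2 | h2)
              · exact h2.1
              · linarith [hb z]
          rw [e1, measure_union (by
            rw [Set.disjoint_left]; intro z hz hz'; exact hz' hz.2) hmt.compl, add_assoc,
            add_comm (m {z | t < V z}ᶜ), measure_add_measure_compl hmt]
          simp
        have k1 := key (Φ μ) inferInstance
        rw [c.half_Dm hp h hμ, c'.half_Dm hp h hμ, ← key μ inferInstance] at k1
        exact (ENNReal.add_left_inj (by simp)).1 k1
      · refine lim_gt U (fun z => t < V z) s (-s) (by linarith) fun τ h2 h3 => ?_
        refine hin _ _ ?_
        rw [abs_of_neg ht, abs_of_neg (by linarith)]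
        linarith

end Core

end WR

namespace WR

open Set Filter Topology
open scoped ENNReal NNReal

section Asm

variable {X : Type*} [MetricSpace X] [MeasurableSpace X] [BorelSpace X]
  [SecondCountableTopology X]

variable {Φ : Measure X → Measure X} {p : ℝ}

lemma isom_edist {T : X → X} (hT : IsIsom T) (x y : X) : edist (T x) (T y) = edist x y := by
  rw [edist_dist, edist_dist, hT.2]

lemma isom_meas {T : X → X} (hT : IsIsom T) : Measurable T :=
  (Isometry.of_dist_eq hT.2).continuous.measurable

lemma isom_inv {T : X → X} (hT : IsIsom T) :
    ∃ R : X → X, IsIsom R ∧ (∀ x, R (T x) = x) ∧ ∀ x, T (R x) = x := by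
  obtain ⟨R, h1, h2⟩ := Function.bijective_iff_has_inverse.1 hT.1
  refine ⟨R, ⟨⟨h2.injective, h1.surjective⟩, fun x y => ?_⟩, h1, h2⟩
  rw [← hT.2, h2, h2]

lemma map_mem (hp : 1 ≤ p) {f : X → X} {μ : Measure X} (hμ : μ ∈ WSet X p) (hf : Measurable f)
    {C : ℝ≥0∞} (hC : C ≠ ⊤) (w w' : X) (h : ∀ z, edist (f z) w' ≤ edist z w + C) :
    μ.map f ∈ WSet X p := by
  have := hμ.1
  have h0 : 0 ≤ p := by linarith
  refine ⟨Measure.isProbabilityMeasure_map hf.aemeasurable, w', ?_⟩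
  rw [lintegral_map (meas_edist_left p w') hf]
  calc ∫⁻ z, edist (f z) w' ^ p ∂μ ≤ ∫⁻ z, 2 ^ (p - 1) * (edist z w ^ p + C ^ p) ∂μ := by
        refine lintegral_mono fun z => ?_
        exact (ENNReal.rpow_le_rpow (h z) h0).trans (rpow_add_le hp _ _)
    _ = 2 ^ (p - 1) * (∫⁻ z, edist z w ^ p ∂μ + C ^ p) := by
        rw [lintegral_const_mul _ (by have := meas_edist_left p w; fun_prop),
          lintegral_add_right _ measurable_const]
        simp
    _ < ⊤ := by
        refine ENNReal.mul_lt_top (ENNReal.rpow_lt_top_of_nonneg (by linarith) (by simp)) ?_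
        exact ENNReal.add_lt_top.2 ⟨WSet.moment hp hμ w, ENNReal.rpow_lt_top_of_nonneg h0 hC⟩

lemma isom_mem (hp : 1 ≤ p) {T : X → X} (hT : IsIsom T) {μ : Measure X} (hμ : μ ∈ WSet X p) :
    μ.map T ∈ WSet X p := by
  obtain ⟨x, -⟩ := hμ.2
  exact map_mem hp hμ (isom_meas hT) (C := 0) (by simp) x (T x) fun z => by
    rw [isom_edist hT]; simp

lemma isom_K_le {T : X → X} (hT : IsIsom T) (μ ν : Measure X) :
    K p (μ.map T) (ν.map T) ≤ K p μ ν := by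
  have hm := isom_meas hT
  refine le_K fun π hπ => ?_
  have hTT : Measurable fun q : X × X => (T q.1, T q.2) :=
    (hm.comp measurable_fst).prodMk (hm.comp measurable_snd)
  have : Cpl (π.map fun q => (T q.1, T q.2)) (μ.map T) (ν.map T) := by
    constructor
    · rw [Measure.map_map measurable_fst hTT, ← hπ.1, Measure.map_map hm measurable_fst]; rfl
    · rw [Measure.map_map measurable_snd hTT, ← hπ.2, Measure.map_map hm measurable_snd]; rfl
  refine (K_le this).trans_eq ?_
  rw [lintegral_map (meas_edist p) hTT]
  simp [isom_edist hT]

lemma map_inv {T R : X → X} (hT : Measurable T) (hR : Measurable R) (h : ∀ x, R (T x) = x)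
    (μ : Measure X) : (μ.map T).map R = μ := by
  rw [Measure.map_map hR hT, show R ∘ T = id from funext h, Measure.map_id]

lemma WI.isom (hp : 1 ≤ p) {T : X → X} (hT : IsIsom T) :
    WI p (fun μ : Measure X => μ.map T) := by
  obtain ⟨R, hR, h1, h2⟩ := isom_inv hT
  have mT := isom_meas hT
  have mR := isom_meas hR
  refine ⟨fun μ hμ => isom_mem hp hT hμ, fun μ _ ν _ h => ?_, fun μ hμ => ?_, fun μ _ ν _ => ?_⟩
  · rw [← map_inv mT mR h1 μ, ← map_inv mT mR h1 ν]
    exact congrArg _ h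
  · exact ⟨μ.map R, isom_mem hp hR hμ, map_inv mR mT h2 μ⟩
  · refine le_antisymm (isom_K_le hT μ ν) ?_
    have := isom_K_le (p := p) hR (μ.map T) (ν.map T)
    rwa [map_inv mT mR h1, map_inv mT mR h1] at this

lemma WI.comp {Ψ : Measure X → Measure X} (h : WI p Φ) (h' : WI p Ψ) :
    WI p fun μ => Φ (Ψ μ) := by
  refine ⟨fun μ hμ => h.maps _ (h'.maps _ hμ), fun μ hμ ν hν e => ?_, fun μ hμ => ?_,
    fun μ hμ ν hν => ?_⟩
  · exact h'.inj _ hμ _ hν (h.inj _ (h'.maps _ hμ) _ (h'.maps _ hν) e)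
  · obtain ⟨ν, hν, rfl⟩ := h.surj μ hμ
    obtain ⟨η, hη, rfl⟩ := h'.surj ν hν
    exact ⟨η, hη, rfl⟩
  · rw [h.K _ (h'.maps _ hμ) _ (h'.maps _ hν), h'.K _ hμ _ hν]

lemma WI.inv (h : WI p Φ) : ∃ Ψ : Measure X → Measure X, WI p Ψ ∧
    (∀ μ ∈ WSet X p, Φ (Ψ μ) = μ) ∧ (∀ μ ∈ WSet X p, Ψ (Φ μ) = μ) := by
  choose! Ψ h1 h2 using h.surj
  have h3 : ∀ μ ∈ WSet X p, Ψ (Φ μ) = μ := fun μ hμ =>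
    h.inj _ (h1 _ (h.maps _ hμ)) _ hμ (h2 _ (h.maps _ hμ))
  refine ⟨Ψ, ⟨h1, fun μ hμ ν hν e => ?_, fun μ hμ => ⟨Φ μ, h.maps _ hμ, h3 μ hμ⟩,
    fun μ hμ ν hν => ?_⟩, h2, h3⟩
  · rw [← h2 μ hμ, ← h2 ν hν, e]
  · rw [← h.K _ (h1 _ hμ) _ (h1 _ hν), h2 _ hμ, h2 _ hν]

lemma K_dd (hp : 1 ≤ p) (x y : X) : K p (Measure.dirac x) (Measure.dirac y) = edist x y ^ p := by
  rw [K_dirac, lintegral_dirac]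

lemma rigid (hp : 1 ≤ p)
    (hcore : ∀ Ψ : Measure X → Measure X, Fx p Ψ → ∀ μ ∈ WSet X p, Ψ μ = μ)
    (H : ∀ Ψ : Measure X → Measure X, WI p Ψ → ∀ x, ∃ y, Ψ (Measure.dirac x) = Measure.dirac y)
    (hΦ : IsWIsometry X p Φ) : ∃! T : X → X, IsIsom T ∧ ∀ μ ∈ WSet X p, Φ μ = μ.map T := by
  have h := WI.of hp hΦ
  have h0 : 0 < p := by linarith
  obtain ⟨Ψ, hΨ, h1, h2⟩ := h.inv
  choose T hT using H Φ h
  choose R hR using H Ψ hΨ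
  have hTR : ∀ x, T (R x) = x := fun x => by
    have := h1 _ (dirac_mem p hp x)
    rw [hR, hT] at this
    exact dirac_eq_dirac_iff.1 this
  have hRT : ∀ x, R (T x) = x := fun x => by
    have := h2 _ (dirac_mem p hp x)
    rw [hT, hR] at this
    exact dirac_eq_dirac_iff.1 this
  have iT : IsIsom T := by
    refine ⟨Function.bijective_iff_has_inverse.2 ⟨R, hRT, hTR⟩, fun x y => ?_⟩
    have := h.K _ (dirac_mem p hp x) _ (dirac_mem p hp y)
    rw [hT, hT, K_dd hp, K_dd hp] at this
    have := (ENNReal.strictMono_rpow_of_pos h0).injective this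
    rw [dist_edist, dist_edist, this]
  obtain ⟨R', hR', k1, k2⟩ := isom_inv iT
  have mT := isom_meas iT
  have mR := isom_meas hR'
  have hF : Fx p fun μ => (Φ μ).map R' := by
    refine ⟨(WI.isom hp hR').comp h, fun x => ?_⟩
    rw [hT, Measure.map_dirac' mR, k1]
  refine ⟨T, ⟨iT, fun μ hμ => ?_⟩, ?_⟩
  · have := hcore _ hF μ hμ
    rw [← map_inv mR mT k2 (Φ μ), this]
  · rintro T' ⟨iT', hT'⟩
    funext x
    have := hT' _ (dirac_mem p hp x)
    rw [hT, Measure.map_dirac' (isom_meas iT')] at this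
    exact (dirac_eq_dirac_iff.1 this).symm

end Asm

end WR

namespace WR

open Set Filter Topology
open scoped ENNReal NNReal

section Ext

variable {X : Type*} [MetricSpace X] [MeasurableSpace X] [BorelSpace X]
  [SecondCountableTopology X]

variable {Φ : Measure X → Measure X} {p : ℝ}

/-- extendability of geodesics starting at `μ` -/
def Ext (p : ℝ) (μ : Measure X) : Prop :=
  ∀ ν ∈ WSet X p, ∃ η ∈ WSet X p, η ≠ ν ∧
    K p μ ν ^ (1 / p) + K p ν η ^ (1 / p) ≤ K p μ η ^ (1 / p)

lemma Ext.image {μ : Measure X} (h : WI p Φ) (hμ : μ ∈ WSet X p) (he : Ext p μ) :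
    Ext p (Φ μ) := by
  intro ν hν'
  obtain ⟨ν, hν, rfl⟩ := h.surj ν hν'
  obtain ⟨η, hη, h1, h2⟩ := he ν hν
  refine ⟨Φ η, h.maps _ hη, fun e => h1 (h.inj _ hη _ hν e), ?_⟩
  rwa [h.K _ hμ _ hν, h.K _ hν _ hη, h.K _ hμ _ hη]

lemma ne_dirac_pos (hp : 1 ≤ p) {η : Measure X} (hη : η ∈ WSet X p) {x : X}
    (h : η ≠ Measure.dirac x) : 0 < ∫ z, dist z x ^ p ∂η := by
  have i := hη.1
  have h0 : p ≠ 0 := by linarith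
  refine lt_of_le_of_ne (integral_nonneg fun z => by positivity) fun e => h ?_
  have := (integral_eq_zero_iff_of_nonneg (fun z => by positivity) (integrable_pot hp hη x)).1 e.symm
  refine eq_dirac_of_ae ?_
  filter_upwards [this] with z hz
  simpa [Real.rpow_eq_zero dist_nonneg h0] using hz

lemma const_of_ext (hp : 1 < p) {μ η : Measure X} (hμ : μ ∈ WSet X p) (hη : η ∈ WSet X p)
    {x : X} (hne : η ≠ Measure.dirac x)
    (h : K p μ (Measure.dirac x) ^ (1 / p) + K p (Measure.dirac x) η ^ (1 / p)
      ≤ K p μ η ^ (1 / p)) : ∃ c, ∀ᵐ z ∂μ, dist z x = c := by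
  have i1 := hμ.1
  have i2 := hη.1
  have hp1 : 1 ≤ p := hp.le
  have h0 : 0 < p := by linarith
  by_cases hne' : μ = Measure.dirac x
  · refine ⟨0, ?_⟩
    rw [hne']
    filter_upwards [ae_dirac_eq' x] with z hz
    simp [hz]
  have ha := ne_dirac_pos hp1 hμ hne'
  have hb := ne_dirac_pos hp1 hη hne
  rw [K_dirac, K_dirac', pot_eq hp1 hμ, pot_eq hp1 hη] at h
  set A := ∫ z, dist z x ^ p ∂μ with hA
  set B := ∫ z, dist z x ^ p ∂η with hB
  set a := A ^ (1 / p) with ha'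
  set b := B ^ (1 / p) with hb'
  have pa : 0 < a := by positivity
  have pb : 0 < b := by positivity
  have aA : a ^ p = A := by rw [ha', ← Real.rpow_mul ha.le]; field_simp; simp
  have bB : b ^ p = B := by rw [hb', ← Real.rpow_mul hb.le]; field_simp; simp
  rw [ENNReal.ofReal_rpow_of_pos ha, ENNReal.ofReal_rpow_of_pos hb, ← ENNReal.ofReal_add pa.le pb.le]
    at h
  have h2 : ENNReal.ofReal ((a + b) ^ p) ≤ K p μ η := by
    have := ENNReal.rpow_le_rpow h h0.le
    rw [← ENNReal.rpow_mul, one_div, inv_mul_cancel₀ h0.ne', ENNReal.rpow_one,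
      ENNReal.ofReal_rpow_of_pos (by positivity)] at this
    exact this
  set l := a / (a + b) with hl
  set m := b / (a + b) with hm
  have pl : 0 < l := by positivity
  have pm : 0 < m := by positivity
  have plm : l + m = 1 := by rw [hl, hm]; field_simp
  have sc := strictConvexOn_rpow hp
  set F : X × X → ℝ := fun q => (dist q.1 x + dist q.2 x) ^ p with hF
  set G : X × X → ℝ := fun q =>
    (a + b) ^ p * (l * (dist q.1 x / a) ^ p + m * (dist q.2 x / b) ^ p) with hG
  have id1 : ∀ q : X × X, F q = (a + b) ^ p * (l * (dist q.1 x / a) + m * (dist q.2 x / b)) ^ p := by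
    intro q
    rw [hF, ← Real.mul_rpow (by positivity) (by positivity), hl, hm]
    congr 1
    field_simp
  have hFG : ∀ q, F q ≤ G q := by
    intro q
    rw [id1, hG]
    have := sc.convexOn.2 (x := dist q.1 x / a) (y := dist q.2 x / b) (by simp; positivity)
      (by simp; positivity) pl.le pm.le plm
    simp only [smul_eq_mul] at this
    exact mul_le_mul_of_nonneg_left this (by positivity)
  have hFG' : ∀ q, F q = G q → dist q.1 x / a = dist q.2 x / b := by
    intro q e
    by_contra hn
    have := sc.2 (x := dist q.1 x / a) (y := dist q.2 x / b) (by simp; positivity)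
      (by simp; positivity) hn pl pm plm
    simp only [smul_eq_mul] at this
    rw [id1, hG] at e
    have pp : 0 < (a + b) ^ p := by positivity
    exact this.ne (mul_left_cancel₀ pp.ne' e)
  have iG1 : Integrable (fun q : X × X => dist q.1 x ^ p) (μ.prod η) :=
    (integrable_pot hp1 hμ x).comp_fst η
  have iG2 : Integrable (fun q : X × X => dist q.2 x ^ p) (μ.prod η) :=
    (integrable_pot hp1 hη x).comp_snd μ
  have eG : ∀ q, G q = (a + b) ^ p * (l * (dist q.1 x ^ p / A) + m * (dist q.2 x ^ p / B)) := by
    intro q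
    rw [hG]
    simp only
    rw [Real.div_rpow (by positivity) (by positivity), Real.div_rpow (by positivity) (by positivity),
      aA, bB]
  have iG : Integrable G (μ.prod η) := by
    rw [show G = _ from funext eG]
    exact (((iG1.div_const _).const_mul _).add ((iG2.div_const _).const_mul _)).const_mul _
  have intG : ∫ q, G q ∂(μ.prod η) = (a + b) ^ p := by
    rw [show G = _ from funext eG, integral_const_mul, integral_add ((iG1.div_const _).const_mul _)
      ((iG2.div_const _).const_mul _), integral_const_mul, integral_const_mul, integral_div,
      integral_div, integral_fun_fst (f := fun z => dist z x ^ p),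
      integral_fun_snd (f := fun z => dist z x ^ p)]
    simp only [probReal_univ, one_smul]
    rw [← hA, ← hB, div_self ha.ne', div_self hb.ne']
    simp [plm]
  have mF : Measurable F := by
    simp only [hF]
    fun_prop
  have pG : ∀ q, 0 ≤ G q := fun q => by simp only [hG]; positivity
  have lG : ∫⁻ q, ENNReal.ofReal (G q) ∂(μ.prod η) = ENNReal.ofReal ((a + b) ^ p) := by
    rw [← ofReal_integral_eq_lintegral_ofReal iG (ae_of_all _ pG), intG]
  have lF : ENNReal.ofReal ((a + b) ^ p) ≤ ∫⁻ q, ENNReal.ofReal (F q) ∂(μ.prod η) := by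
    refine (h2.trans (K_le (prod_cpl μ η))).trans ?_
    refine lintegral_mono fun q => ?_
    rw [edist_dist, ENNReal.ofReal_rpow_of_nonneg dist_nonneg h0.le]
    refine ENNReal.ofReal_le_ofReal ?_
    have := dist_triangle_right q.1 q.2 x
    exact Real.rpow_le_rpow dist_nonneg this h0.le
  have le1 : (fun q => ENNReal.ofReal (F q)) ≤ᵐ[μ.prod η] fun q => ENNReal.ofReal (G q) :=
    ae_of_all _ fun q => ENNReal.ofReal_le_ofReal (hFG q)
  have ae1 := ae_eq_of_ae_le_of_lintegral_le le1
    (((lintegral_mono_ae le1).trans_lt (by rw [lG]; simp)).ne)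
    (iG.1.aemeasurable.ennreal_ofReal) (by rw [lG]; exact lF)
  have ae2 : ∀ᵐ q ∂(μ.prod η), dist q.1 x / a = dist q.2 x / b := by
    filter_upwards [ae1] with q hq
    refine hFG' q ?_
    have : 0 ≤ F q := by simp only [hF]; positivity
    exact (ENNReal.ofReal_eq_ofReal_iff this (pG q)).1 hq
  have ae3 := Measure.ae_ae_of_ae_prod (Measure.prod_swap (μ := μ) (ν := η) ▸ 
    (ae_map_iff measurable_swap.aemeasurable (by
      exact measurableSet_eq_fun (by fun_prop) (by fun_prop))).2 ae2 :
      ∀ᵐ q ∂(η.prod μ), dist q.2 x / a = dist q.1 x / b)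
  obtain ⟨y, hy⟩ := ae3.exists
  refine ⟨dist y x / b * a, ?_⟩
  filter_upwards [hy] with z hz
  rw [← hz]
  field_simp

lemma between_of_ext {μ η : Measure X} (hμ : μ ∈ WSet X 1) (hη : η ∈ WSet X 1)
    {x : X} (hne : η ≠ Measure.dirac x)
    (h : K 1 μ (Measure.dirac x) + K 1 (Measure.dirac x) η ≤ K 1 μ η) :
    ∃ y ≠ x, ∀ᵐ z ∂μ, dist z y = dist z x + dist x y := by
  have i1 := hμ.1
  have i2 := hη.1
  have m1 := meas_edist_left (X := X) 1 x
  have f1 := (prod_cpl μ η).lint_fst m1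
  have f2 := (prod_cpl μ η).lint_snd m1
  have t1 := WSet.moment le_rfl hμ x
  have t2 := WSet.moment le_rfl hη x
  rw [K_dirac, K_dirac', ← f1, ← f2, ← lintegral_add_right _ (by exact m1.comp measurable_snd)] at h
  have le1 : (fun q : X × X => edist q.1 q.2 ^ (1 : ℝ)) ≤ᵐ[μ.prod η]
      fun q => edist q.1 x ^ (1 : ℝ) + edist q.2 x ^ (1 : ℝ) := by
    refine ae_of_all _ fun q => ?_
    simp only [ENNReal.rpow_one]
    exact edist_triangle_right _ _ _
  have fin : ∫⁻ q, (edist q.1 x ^ (1 : ℝ) + edist q.2 x ^ (1 : ℝ)) ∂(μ.prod η) < ⊤ := by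
    rw [lintegral_add_right _ (by exact m1.comp measurable_snd), f1, f2]
    exact ENNReal.add_lt_top.2 ⟨t1, t2⟩
  have ae1 := ae_eq_of_ae_le_of_lintegral_le le1
    (((lintegral_mono_ae le1).trans_lt fin).ne)
    (by have a1 : Measurable fun q : X × X => edist q.1 x ^ (1 : ℝ) := m1.comp measurable_fst
        have a2 : Measurable fun q : X × X => edist q.2 x ^ (1 : ℝ) := m1.comp measurable_snd
        exact (a1.add a2).aemeasurable) (h.trans (K_le (prod_cpl μ η)))
  have ae2 : ∀ᵐ q ∂(μ.prod η), dist q.1 q.2 = dist q.1 x + dist q.2 x := by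
    filter_upwards [ae1] with q hq
    simp only [ENNReal.rpow_one] at hq
    rw [edist_dist, edist_dist, edist_dist, ← ENNReal.ofReal_add dist_nonneg dist_nonneg,
      ENNReal.ofReal_eq_ofReal_iff (by positivity) (by positivity)] at hq
    exact hq
  have ae3 := Measure.ae_ae_of_ae_prod (Measure.prod_swap (μ := μ) (ν := η) ▸ 
    (ae_map_iff measurable_swap.aemeasurable (by
      exact measurableSet_eq_fun (by fun_prop) (by fun_prop))).2 ae2 :
      ∀ᵐ q ∂(η.prod μ), dist q.2 q.1 = dist q.2 x + dist q.1 x)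
  have : ∃ᶠ y in ae η, y ≠ x := fun hn => hne (eq_dirac_of_ae (by
    filter_upwards [hn] with y hy; simpa using hy))
  obtain ⟨y, hy, hy'⟩ := (this.and_eventually ae3).exists
  refine ⟨y, hy, ?_⟩
  filter_upwards [hy'] with z hz
  rw [dist_comm x y]; exact hz

lemma dirac_of_const {μ : Measure X} [IsProbabilityMeasure μ]
    (h : ∀ x, ∃ c, ∀ᵐ z ∂μ, dist z x = c) : ∃ y, μ = Measure.dirac y := by
  choose c hc using h
  have hX : Nonempty X := μ.nonempty_of_neZero
  obtain ⟨D, hD, hD'⟩ := TopologicalSpace.exists_countable_dense X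
  have h1 : ∀ᵐ z ∂μ, ∀ x ∈ D, dist z x = c x := (ae_ball_iff hD).2 fun x _ => hc x
  obtain ⟨y, hy⟩ := h1.exists
  refine ⟨y, eq_dirac_of_ae ?_⟩
  filter_upwards [h1] with z hz
  have := Continuous.ext_on hD' (f := fun x => dist z x) (g := fun x => dist y x) (by fun_prop)
    (by fun_prop) (fun x hx => by simp only [hz x hx, hy x hx])
  have := congrFun this y
  simpa using this

lemma dirac_of_Ext (hp : 1 < p) {μ : Measure X} (hμ : μ ∈ WSet X p) (h : Ext p μ) :
    ∃ y, μ = Measure.dirac y := by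
  have := hμ.1
  refine dirac_of_const fun x => ?_
  obtain ⟨η, hη, h1, h2⟩ := h _ (dirac_mem p hp.le x)
  exact const_of_ext hp hμ hη h1 h2

end Ext

section Plane

variable {p : ℝ}

lemma Ext_dirac (hp : 1 ≤ p) (x : ℝ × ℝ) : Ext p (Measure.dirac x) := by
  intro ν hν
  have i := hν.1
  have h0 : 0 < p := by linarith
  by_cases hne : ν = Measure.dirac x
  · subst hne
    refine ⟨Measure.dirac (x + (1, 1)), dirac_mem p hp _, ?_, ?_⟩
    · rw [Ne, dirac_eq_dirac_iff]
      intro h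
      have := congrArg Prod.fst h
      simp at this
    · rw [K_dd hp]
      simp [h0]
  have hm : Measurable fun z : ℝ × ℝ => (2 : ℝ) • z - x := by fun_prop
  have hd1 : ∀ z : ℝ × ℝ, edist ((2 : ℝ) • z - x) x = 2 * edist z x := by
    intro z
    rw [edist_dist, edist_dist, dist_eq_norm, dist_eq_norm,
      show (2 : ℝ) • z - x - x = (2 : ℝ) • (z - x) by rw [smul_sub, two_smul ℝ x]; abel, norm_smul,
      ENNReal.ofReal_mul (by simp)]
    simp
  have hd2 : ∀ z : ℝ × ℝ, edist z ((2 : ℝ) • z - x) = edist z x := by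
    intro z
    rw [edist_dist, edist_dist, dist_eq_norm, dist_eq_norm, norm_sub_rev,
      show (2 : ℝ) • z - x - z = z - x by rw [two_smul]; abel]
  have hη : ν.map (fun z => (2 : ℝ) • z - x) ∈ WSet (ℝ × ℝ) p := by
    refine ⟨Measure.isProbabilityMeasure_map hm.aemeasurable, x, ?_⟩
    rw [lintegral_map (meas_edist_left p x) hm]
    simp_rw [hd1, ENNReal.mul_rpow_of_nonneg _ _ h0.le]
    rw [lintegral_const_mul _ (meas_edist_left p x)]
    exact ENNReal.mul_lt_top (ENNReal.rpow_lt_top_of_nonneg h0.le (by simp)) (WSet.moment hp hν x)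
  have i2 := hη.1
  have k1 : K p (Measure.dirac x) (ν.map fun z => (2 : ℝ) • z - x)
      = 2 ^ p * ∫⁻ z, edist z x ^ p ∂ν := by
    rw [K_dirac', lintegral_map (meas_edist_left p x) hm]
    simp_rw [hd1, ENNReal.mul_rpow_of_nonneg _ _ h0.le]
    rw [lintegral_const_mul _ (meas_edist_left p x)]
  have k2 : K p ν (ν.map fun z => (2 : ℝ) • z - x) ≤ ∫⁻ z, edist z x ^ p ∂ν := by
    have hm2 : Measurable fun z : ℝ × ℝ => (z, (2 : ℝ) • z - x) := measurable_id.prodMk hm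
    have : Cpl (ν.map fun z => (z, (2 : ℝ) • z - x)) ν (ν.map fun z => (2 : ℝ) • z - x) := by
      constructor
      · rw [Measure.map_map measurable_fst hm2]
        exact Measure.map_id
      · rw [Measure.map_map measurable_snd hm2]; rfl
    refine (K_le this).trans_eq ?_
    rw [lintegral_map (meas_edist p) hm2]
    simp only [hd2]
  refine ⟨_, hη, fun e => ?_, ?_⟩
  · rw [e, K_dirac'] at k1
    have pos := ne_dirac_pos hp hν hne
    rw [pot_eq hp hν] at k1
    set A := ∫ z, dist z x ^ p ∂ν
    rw [show (2 : ℝ≥0∞) = ENNReal.ofReal 2 by simp, ENNReal.ofReal_rpow_of_pos (by simp),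
      ← ENNReal.ofReal_mul (by positivity), ENNReal.ofReal_eq_ofReal_iff pos.le (by positivity)] at k1
    have := Real.one_lt_rpow (x := 2) (by norm_num) h0
    nlinarith
  · rw [k1, K_dirac', ENNReal.mul_rpow_of_nonneg _ _ (by positivity), ← ENNReal.rpow_mul,
      mul_one_div_cancel h0.ne', ENNReal.rpow_one, two_mul]
    gcongr

lemma plane_pgt {Φ : Measure (ℝ × ℝ) → Measure (ℝ × ℝ)} (hp : 1 < p) (h : WI p Φ) (x : ℝ × ℝ) :
    ∃ y, Φ (Measure.dirac x) = Measure.dirac y :=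
  dirac_of_Ext hp (h.maps _ (dirac_mem p hp.le x))
    ((Ext_dirac hp.le x).image h (dirac_mem p hp.le x))

end Plane

end WR

namespace WR

open Set Filter Topology ProbabilityTheory
open scoped ENNReal NNReal

section Plane1

variable {X : Type*} [MetricSpace X] [MeasurableSpace X] [BorelSpace X]
  [SecondCountableTopology X]

variable {U V : X → ℝ} {S : Set (ℝ × ℝ)} {Φ : Measure X → Measure X}

lemma Chart.inverse (c : Chart U V univ) : ∃ E : ℝ × ℝ → X, Measurable E ∧
    (∀ q, U (E q) = q.1) ∧ (∀ q, V (E q) = q.2) ∧ ∀ x, E (U x, V x) = x := by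
  have := fun q => c.surj q (mem_univ q)
  choose E h1 h2 using this
  refine ⟨E, ?_, h1, h2, fun x => c.inj (by rw [h1]) (by rw [h2])⟩
  have hl : LipschitzWith 1 E := by
    refine LipschitzWith.of_dist_le_mul fun x y => ?_
    rw [c.d, h1, h1, h2, h2, Prod.dist_eq, Real.dist_eq, Real.dist_eq]
    have := le_max_left |x.1 - y.1| |x.2 - y.2|
    have := le_max_right |x.1 - y.1| |x.2 - y.2|
    push_cast
    linarith
  exact hl.continuous.measurable

lemma K1_lb {μ η : Measure X} {g : X → X} (hg : Measurable g) {J : X → ℝ≥0∞} (hJ : Measurable J)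
    {P Q : X → Prop} (hP : ∀ᵐ z ∂μ, P z) (hQ : ∀ᵐ z ∂η, Q z)
    (h : ∀ z w, P z → Q w → edist z (g w) + J w ≤ edist z w) :
    K 1 μ (η.map g) + ∫⁻ w, J w ∂η ≤ K 1 μ η := by
  refine le_K fun π hπ => ?_
  have hm : Measurable fun q : X × X => (q.1, g q.2) := measurable_fst.prodMk (hg.comp measurable_snd)
  have hc : Cpl (π.map fun q => (q.1, g q.2)) μ (η.map g) := by
    constructor
    · rw [Measure.map_map measurable_fst hm, ← hπ.1]; rfl
    · rw [Measure.map_map measurable_snd hm, ← hπ.2, Measure.map_map hg measurable_snd]; rfl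
  have hJ2 : Measurable fun q : X × X => J q.2 := hJ.comp measurable_snd
  refine (add_le_add_left (K_le hc) _).trans ?_
  rw [lintegral_map (meas_edist 1) hm, ← hπ.lint_snd hJ, ← lintegral_add_right _ hJ2]
  refine lintegral_mono_ae ?_
  filter_upwards [hπ.ae_fst hP, hπ.ae_snd hQ] with q h1 h2
  simpa using h _ _ h1 h2

lemma K1_graph {ν : Measure X} {F : X → X} (hF : Measurable F) {p : ℝ} :
    K p ν (ν.map F) ≤ ∫⁻ z, edist z (F z) ^ p ∂ν := by
  have hm2 : Measurable fun z : X => (z, F z) := measurable_id.prodMk hF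
  have : Cpl (ν.map fun z => (z, F z)) ν (ν.map F) := by
    constructor
    · rw [Measure.map_map measurable_fst hm2]
      exact Measure.map_id
    · rw [Measure.map_map measurable_snd hm2]; rfl
  refine (K_le this).trans_eq ?_
  rw [lintegral_map (meas_edist p) hm2]

lemma Chart.edist_eq (c : Chart U V S) (x y : X) :
    edist x y = ENNReal.ofReal ((|U x - U y| + |V x - V y|) / 2) := by
  rw [edist_dist, c.d]

lemma Chart.line_Ext (c : Chart U V univ) {μ : Measure X} (hμ : μ ∈ WSet X 1) {a : ℝ}
    (h : ∀ᵐ z ∂μ, V z = a) : Ext 1 μ := by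
  intro ν hν
  have i1 := hμ.1
  have i2 := hν.1
  obtain ⟨E, mE, e1, e2, e3⟩ := c.inverse
  have mU := c.measU
  have mV := c.measV
  have ms : MeasurableSet {z | a ≤ V z} := measurableSet_le measurable_const mV
  set F : X → X := fun z => E (U z, if a ≤ V z then V z + 1 else V z - 1) with hF
  set G : X → X := fun z => E (U z, if a ≤ V z then V z - 1 else V z + 1) with hG
  have mF : Measurable F := mE.comp (mU.prodMk (Measurable.ite ms (by fun_prop) (by fun_prop)))
  have mG : Measurable G := mE.comp (mU.prodMk (Measurable.ite ms (by fun_prop) (by fun_prop)))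
  have hGF : ∀ z, G (F z) = z := by
    intro z
    apply c.inj
    · simp only [hG, hF, e1]
    · simp only [hG, hF, e1, e2]
      by_cases hz : a ≤ V z
      · rw [if_pos hz, if_pos (by linarith)]; ring
      · rw [if_neg hz, if_neg (by linarith)]; ring
  have hd : ∀ z, edist z (F z) = ENNReal.ofReal (1 / 2) := by
    intro z
    rw [c.edist_eq, hF]
    simp only [e1, e2]
    congr 2
    split_ifs <;> simp
  have hη : ν.map F ∈ WSet X 1 := by
    obtain ⟨x, -⟩ := hν.2
    refine map_mem le_rfl hν mF (C := ENNReal.ofReal (1 / 2)) (by simp) x x fun z => ?_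
    rw [← hd z, add_comm, edist_comm z (F z)]
    exact edist_triangle _ _ _
  have lb := K1_lb (μ := μ) (η := ν.map F) mG (J := fun _ => ENNReal.ofReal (1 / 2))
    measurable_const h (Q := fun w => a + 1 ≤ V w ∨ V w < a - 1) (by
      rw [ae_map_iff mF.aemeasurable (by
        exact (measurableSet_le measurable_const mV).union (measurableSet_lt mV measurable_const))]
      refine ae_of_all _ fun z => ?_
      simp only [hF, e2]
      by_cases hz : a ≤ V z
      · rw [if_pos hz]; left; linarith
      · rw [if_neg hz]; right; linarith) (by
      intro z w hz hw
      rw [c.edist_eq, c.edist_eq, ← ENNReal.ofReal_add (by positivity) (by positivity)]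
      refine ENNReal.ofReal_le_ofReal ?_
      simp only [hG, e1, e2, hz]
      rcases hw with hw | hw
      · rw [if_pos (by linarith), abs_of_nonpos (a := a - (V w - 1)) (by linarith), abs_of_nonpos (a := a - V w) (by linarith)]
        linarith
      · rw [if_neg (by linarith), abs_of_nonneg (a := a - (V w + 1)) (by linarith), abs_of_nonneg (a := a - V w) (by linarith)]
        linarith)
  rw [Measure.map_map mG mF, show G ∘ F = id from funext hGF, Measure.map_id] at lb
  have i3 := hη.1
  rw [lintegral_const, measure_univ, mul_one] at lb
  have ub : K 1 ν (ν.map F) ≤ ENNReal.ofReal (1 / 2) := by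
    refine (K1_graph mF).trans ?_
    simp [hd]
  refine ⟨ν.map F, hη, fun e => ?_, ?_⟩
  · rw [e] at lb
    have : K 1 μ ν + ENNReal.ofReal (1 / 2) ≤ K 1 μ ν + 0 := by simpa using lb
    rw [ENNReal.add_le_add_iff_left (K_lt_top le_rfl hμ hν).ne] at this
    have h2 : (0 : ℝ≥0∞) < ENNReal.ofReal (1 / 2) := by
      rw [ENNReal.ofReal_pos]; norm_num
    exact absurd this (not_le.2 h2)
  · simp only [div_one, ENNReal.rpow_one]
    exact (add_le_add_right ub _).trans lb

lemma const_of_sides {μ : Measure X} [IsProbabilityMeasure μ] {f : X → ℝ}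
    (h : ∀ s, (∀ᵐ z ∂μ, f z ≤ s) ∨ (∀ᵐ z ∂μ, s ≤ f z)) : ∃ a, ∀ᵐ z ∂μ, f z = a := by
  have h1 : ∀ᵐ z ∂μ, ∀ s : ℚ, ((∀ᵐ z ∂μ, f z ≤ s) → f z ≤ s) ∧ ((∀ᵐ z ∂μ, s ≤ f z) → s ≤ f z) := by
    rw [ae_all_iff]
    intro s
    by_cases a1 : ∀ᵐ z ∂μ, f z ≤ s <;> by_cases a2 : ∀ᵐ z ∂μ, s ≤ f z
    · filter_upwards [a1, a2] with z b1 b2 using ⟨fun _ => b1, fun _ => b2⟩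
    · filter_upwards [a1] with z b1 using ⟨fun _ => b1, fun h => absurd h a2⟩
    · filter_upwards [a2] with z b2 using ⟨fun h => absurd h a1, fun _ => b2⟩
    · exact ae_of_all _ fun z => ⟨fun h => absurd h a1, fun h => absurd h a2⟩
  obtain ⟨y, hy⟩ := h1.exists
  have key : ∀ y z, (∀ s : ℚ, ((∀ᵐ z ∂μ, f z ≤ s) → f z ≤ s) ∧ ((∀ᵐ z ∂μ, s ≤ f z) → s ≤ f z)) →
      (∀ s : ℚ, ((∀ᵐ z ∂μ, f z ≤ s) → f y ≤ s) ∧ ((∀ᵐ z ∂μ, s ≤ f z) → s ≤ f y)) →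
      f z ≤ f y := by
    intro y z hz hy
    by_contra hn
    push Not at hn
    obtain ⟨s, s1, s2⟩ := exists_rat_btwn hn
    rcases h s with k | k
    · linarith [(hz s).1 k]
    · linarith [(hy s).2 k]
  refine ⟨f y, ?_⟩
  filter_upwards [h1] with z hz
  exact le_antisymm (key y z hz hy) (key z y hy hz)

lemma Chart.Ext_line (c : Chart U V univ) {μ : Measure X} (hμ : μ ∈ WSet X 1) (h : Ext 1 μ) :
    (∃ a, ∀ᵐ z ∂μ, V z = a) ∨ ∃ a, ∀ᵐ z ∂μ, U z = a := by
  have i := hμ.1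
  have h1 : ∀ s t, ((∀ᵐ z ∂μ, U z ≤ s) ∨ (∀ᵐ z ∂μ, s ≤ U z)) ∨
      ((∀ᵐ z ∂μ, V z ≤ t) ∨ (∀ᵐ z ∂μ, t ≤ V z)) := by
    intro s t
    obtain ⟨x, rfl, rfl⟩ := c.surj (s, t) (mem_univ _)
    obtain ⟨η, hη, hne, hK⟩ := h _ (dirac_mem 1 le_rfl x)
    simp only [div_one, ENNReal.rpow_one] at hK
    obtain ⟨y, hy, hb⟩ := between_of_ext hμ hη hne hK
    have hb' : ∀ᵐ z ∂μ, |U z - U y| = |U z - U x| + |U x - U y| ∧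
        |V z - V y| = |V z - V x| + |V x - V y| := by
      filter_upwards [hb] with z hz
      rw [c.d, c.d, c.d] at hz
      have t1 := abs_sub_le (U z) (U x) (U y)
      have t2 := abs_sub_le (V z) (V x) (V y)
      constructor <;> linarith
    have side : ∀ a b z : ℝ, b < a → |z - b| = |z - a| + |a - b| → a ≤ z := by
      intro a b z hab he
      by_contra hn
      push Not at hn
      rw [abs_of_neg (a := z - a) (by linarith), abs_of_pos (a := a - b) (by linarith)] at he
      have : |z - b| < a - z + (a - b) := abs_lt.2 ⟨by linarith, by linarith⟩
      linarith
    have side2 : ∀ a b z : ℝ, a < b → |z - b| = |z - a| + |a - b| → z ≤ a := by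
      intro a b z hab he
      have := side (-a) (-b) (-z) (by linarith) (by
        rw [show -z - -b = -(z - b) by ring, show -z - -a = -(z - a) by ring,
          show -a - -b = -(a - b) by ring, abs_neg, abs_neg, abs_neg]; exact he)
      linarith
    rcases lt_trichotomy (U x) (U y) with k | k | k
    · left; left
      filter_upwards [hb'] with z hz using side2 _ _ _ k hz.1
    · rcases lt_trichotomy (V x) (V y) with k' | k' | k'
      · right; left
        filter_upwards [hb'] with z hz using side2 _ _ _ k' hz.2
      · exact absurd (c.inj k k').symm hy
      · right; right
        filter_upwards [hb'] with z hz using side _ _ _ k' hz.2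
    · left; right
      filter_upwards [hb'] with z hz using side _ _ _ k hz.1
  by_cases hU : ∀ s, ((∀ᵐ z ∂μ, U z ≤ s) ∨ (∀ᵐ z ∂μ, s ≤ U z))
  · exact Or.inr (const_of_sides hU)
  · obtain ⟨s, hs⟩ := not_forall.1 hU
    rw [not_or] at hs
    left
    refine const_of_sides fun t => ?_
    rcases h1 s t with (k | k) | k
    · exact absurd k hs.1
    · exact absurd k hs.2
    · exact k

lemma K1_tri [StandardBorelSpace X] {μ η ν : Measure X} (hμ : μ ∈ WSet X 1) (hη : η ∈ WSet X 1)
    (hν : ν ∈ WSet X 1) : K 1 μ ν ≤ K 1 μ η + K 1 η ν := by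
  have i1 := hμ.1
  have i2 := hη.1
  have i3 := hν.1
  have hX : Nonempty X := μ.nonempty_of_neZero
  have key : ∀ π1, Cpl π1 μ η → ∀ π2, Cpl π2 η ν →
      K 1 μ ν ≤ ∫⁻ q, edist q.1 q.2 ^ (1:ℝ) ∂π1 + ∫⁻ q, edist q.1 q.2 ^ (1:ℝ) ∂π2 := by
    intro π1 h1 π2 h2
    set ρ := π1.map Prod.swap with hρ
    have h1' : Cpl ρ η μ := h1.swap
    have ip1 : IsProbabilityMeasure ρ := h1'.prob
    have ip2 : IsProbabilityMeasure π2 := h2.prob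
    have f1 : ρ.fst = η := h1'.1
    have f2 : π2.fst = η := h2.1
    have d1 := ρ.disintegrate ρ.condKernel
    have d2 := π2.disintegrate π2.condKernel
    rw [f1] at d1
    rw [f2] at d2
    set Γ := η ⊗ₘ (ρ.condKernel ×ₖ π2.condKernel) with hΓ
    have g1 : Γ.map (fun q => (q.1, q.2.1)) = ρ := by
      rw [← d1]
      conv_rhs => rw [← Kernel.fst_prod ρ.condKernel π2.condKernel]
      rw [Kernel.fst_eq, Measure.compProd_map measurable_fst]
      rfl
    have g2 : Γ.map (fun q => (q.1, q.2.2)) = π2 := by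
      rw [← d2]
      conv_rhs => rw [← Kernel.snd_prod ρ.condKernel π2.condKernel]
      rw [Kernel.snd_eq, Measure.compProd_map measurable_snd]
      rfl
    have m1 : Measurable fun q : X × X × X => (q.1, q.2.1) := by fun_prop
    have m2 : Measurable fun q : X × X × X => (q.1, q.2.2) := by fun_prop
    have hc : Cpl (Γ.map Prod.snd) μ ν := by
      constructor
      · rw [← h1'.2, ← g1, Measure.map_map measurable_snd m1,
          Measure.map_map measurable_fst measurable_snd]; rfl
      · rw [← h2.2, ← g2, Measure.map_map measurable_snd m2,
          Measure.map_map measurable_snd measurable_snd]; rfl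
    refine (K_le hc).trans ?_
    have e1 : ∫⁻ q, edist q.1 q.2 ^ (1:ℝ) ∂π1 = ∫⁻ q, edist q.2.1 q.1 ^ (1:ℝ) ∂Γ := by
      have : π1 = ρ.map Prod.swap := by
        rw [hρ, Measure.map_map measurable_swap measurable_swap]; simp
      rw [this, ← g1, lintegral_map (meas_edist 1) measurable_swap, lintegral_map _ m1]
      · rfl
      · exact (meas_edist 1).comp measurable_swap
    have e2 : ∫⁻ q, edist q.1 q.2 ^ (1:ℝ) ∂π2 = ∫⁻ q, edist q.1 q.2.2 ^ (1:ℝ) ∂Γ := by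
      rw [← g2, lintegral_map (meas_edist 1) m2]
    rw [e1, e2, lintegral_map (meas_edist 1) measurable_snd, ← lintegral_add_right]
    · refine lintegral_mono fun q => ?_
      simp only [ENNReal.rpow_one]
      exact edist_triangle _ _ _
    · exact (meas_edist 1).comp m2
  refine ENNReal.le_of_forall_pos_le_add fun ε hε _ => ?_
  have hε2 : (0 : ℝ≥0∞) < ε / 2 := ENNReal.div_pos (by simpa using hε.ne') (by simp)
  have l1 : K 1 μ η < K 1 μ η + ε / 2 := ENNReal.lt_add_right (K_lt_top le_rfl hμ hη).ne hε2.ne'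
  have l2 : K 1 η ν < K 1 η ν + ε / 2 := ENNReal.lt_add_right (K_lt_top le_rfl hη hν).ne hε2.ne'
  obtain ⟨π1, a1, b1⟩ := exists_of_K_lt l1
  obtain ⟨π2, a2, b2⟩ := exists_of_K_lt l2
  refine (key π1 a1 π2 a2).trans ((add_le_add b1.le b2.le).trans_eq ?_)
  rw [add_add_add_comm, ENNReal.add_halves]

/-- collinearity -/
def Col (μ ν : Measure X) : Prop :=
  ∀ η ∈ WSet X 1, K 1 μ η + K 1 η ν ≤ K 1 μ ν → Ext 1 η

lemma Col.image (h : WI 1 Φ) {μ ν : Measure X} (hμ : μ ∈ WSet X 1) (hν : ν ∈ WSet X 1)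
    (hc : Col μ ν) : Col (Φ μ) (Φ ν) := by
  intro η hη' hK
  obtain ⟨η, hη, rfl⟩ := h.surj η hη'
  rw [h.K _ hμ _ hη, h.K _ hη _ hν, h.K _ hμ _ hν] at hK
  exact (hc η hη hK).image h hη

lemma Col.of_image (h : WI 1 Φ) {μ ν : Measure X} (hμ : μ ∈ WSet X 1) (hν : ν ∈ WSet X 1)
    (hc : Col (Φ μ) (Φ ν)) : Col μ ν := by
  obtain ⟨Ψ, hΨ, -, h2⟩ := h.inv
  have := hc.image hΨ (h.maps _ hμ) (h.maps _ hν)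
  rwa [h2 _ hμ, h2 _ hν] at this

lemma Chart.col_of_line [StandardBorelSpace X] (c : Chart U V univ) {μ ν : Measure X}
    (hμ : μ ∈ WSet X 1) (hν : ν ∈ WSet X 1) {a : ℝ} (h1 : ∀ᵐ z ∂μ, V z = a)
    (h2 : ∀ᵐ z ∂ν, V z = a) : Col μ ν := by
  intro η hη hK
  have i1 := hη.1
  obtain ⟨E, mE, e1, e2, e3⟩ := c.inverse
  have mU := c.measU
  have mV := c.measV
  set g : X → X := fun z => E (U z, a) with hg
  have mg : Measurable g := mE.comp (mU.prodMk measurable_const)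
  set J : X → ℝ≥0∞ := fun w => ENNReal.ofReal (|a - V w| / 2) with hJ
  have mJ : Measurable J := by
    apply Measurable.ennreal_ofReal
    fun_prop
  have hd : ∀ z w, V z = a → True → edist z (g w) + J w ≤ edist z w := by
    intro z w hz _
    rw [c.edist_eq, c.edist_eq, hJ, ← ENNReal.ofReal_add (by positivity) (by positivity)]
    refine ENNReal.ofReal_le_ofReal ?_
    simp only [hg, e1, e2, hz, sub_self, abs_zero]
    linarith
  have l1 := K1_lb (μ := μ) (η := η) mg mJ h1 (ae_of_all _ fun _ => trivial) hd
  have l2 := K1_lb (μ := ν) (η := η) mg mJ h2 (ae_of_all _ fun _ => trivial) hd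
  rw [K_comm, K_comm 1 ν] at l2
  have hPm : η.map g ∈ WSet X 1 := by
    obtain ⟨x, -⟩ := hη.2
    refine map_mem le_rfl hη mg (C := 0) (by simp) x (g x) fun z => ?_
    rw [c.edist_eq, c.edist_eq, add_zero]
    refine ENNReal.ofReal_le_ofReal ?_
    simp only [hg, e1, e2, sub_self, abs_zero]
    linarith [abs_nonneg (V z - V x)]
  have tri := K1_tri hμ hPm hν
  have fin : K 1 μ (η.map g) + K 1 (η.map g) ν ≠ ⊤ :=
    (ENNReal.add_lt_top.2 ⟨K_lt_top le_rfl hμ hPm, K_lt_top le_rfl hPm hν⟩).ne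
  have hJ0 : ∫⁻ w, J w ∂η = 0 := by
    have : (K 1 μ (η.map g) + K 1 (η.map g) ν) + (∫⁻ w, J w ∂η + ∫⁻ w, J w ∂η)
        ≤ (K 1 μ (η.map g) + K 1 (η.map g) ν) + 0 := by
      rw [add_zero, add_add_add_comm]
      exact ((add_le_add l1 l2).trans hK).trans tri
    rw [ENNReal.add_le_add_iff_left fin] at this
    simpa using this
  rw [lintegral_eq_zero_iff mJ] at hJ0
  refine c.line_Ext hη (a := a) ?_
  filter_upwards [hJ0] with w hw
  simp only [hJ, Pi.zero_apply, ENNReal.ofReal_eq_zero] at hw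
  have : |a - V w| = 0 := le_antisymm (by linarith) (abs_nonneg _)
  rw [abs_eq_zero] at this
  linarith

lemma K1_half {μ ν : Measure X} [IsProbabilityMeasure μ] [IsProbabilityMeasure ν] :
    K 1 μ ((2⁻¹ : ℝ≥0∞) • μ + (2⁻¹ : ℝ≥0∞) • ν) ≤ 2⁻¹ * K 1 μ ν := by
  have key : ∀ π, Cpl π μ ν → K 1 μ ((2⁻¹ : ℝ≥0∞) • μ + (2⁻¹ : ℝ≥0∞) • ν)
      ≤ 2⁻¹ * ∫⁻ q, edist q.1 q.2 ^ (1 : ℝ) ∂π := by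
    intro π hπ
    have hdm : Measurable fun z : X => (z, z) := measurable_id.prodMk measurable_id
    have hc : Cpl ((2⁻¹ : ℝ≥0∞) • (μ.map fun z => (z, z)) + (2⁻¹ : ℝ≥0∞) • π) μ
        ((2⁻¹ : ℝ≥0∞) • μ + (2⁻¹ : ℝ≥0∞) • ν) := by
      constructor
      · rw [Measure.map_add _ _ measurable_fst, Measure.map_smul, Measure.map_smul, hπ.1,
          Measure.map_map measurable_fst hdm,
          show (Prod.fst ∘ fun z : X => (z, z)) = id from rfl, Measure.map_id, ← add_smul,
          ENNReal.inv_two_add_inv_two, one_smul]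
      · rw [Measure.map_add _ _ measurable_snd, Measure.map_smul, Measure.map_smul, hπ.2,
          Measure.map_map measurable_snd hdm,
          show (Prod.snd ∘ fun z : X => (z, z)) = id from rfl, Measure.map_id]
    refine (K_le hc).trans_eq ?_
    rw [lintegral_add_measure, lintegral_smul_measure, lintegral_smul_measure,
      lintegral_map (meas_edist 1) hdm]
    simp
  have h2 : 2 * K 1 μ ((2⁻¹ : ℝ≥0∞) • μ + (2⁻¹ : ℝ≥0∞) • ν) ≤ K 1 μ ν := by
    refine le_K fun π hπ => ?_
    refine (mul_le_mul_right (key π hπ) 2).trans_eq ?_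
    rw [← mul_assoc, ENNReal.mul_inv_cancel (by simp) (by simp), one_mul]
  refine le_trans (le_of_eq ?_) (mul_le_mul_right h2 2⁻¹)
  rw [← mul_assoc, ENNReal.inv_mul_cancel (by simp) (by simp), one_mul]

lemma Chart.line_of_col (c : Chart U V univ) {μ ν : Measure X}
    (hμ : μ ∈ WSet X 1) (hν : ν ∈ WSet X 1) (h : Col μ ν) :
    (∃ a, (∀ᵐ z ∂μ, V z = a) ∧ ∀ᵐ z ∂ν, V z = a) ∨
    (∃ a, (∀ᵐ z ∂μ, U z = a) ∧ ∀ᵐ z ∂ν, U z = a) := by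
  have i1 := hμ.1
  have i2 := hν.1
  have hm := mix_mem le_rfl hμ hν ENNReal.inv_two_add_inv_two
  have he := h _ hm (by
    have k1 := K1_half (μ := μ) (ν := ν)
    have k2 := K1_half (μ := ν) (ν := μ)
    rw [K_comm, K_comm 1 ν, add_comm] at k2
    rw [K_comm 1 μ] at k1
    rw [K_comm 1 μ]
    refine (add_le_add k1 k2).trans_eq ?_
    rw [← add_mul, ENNReal.inv_two_add_inv_two, one_mul])
  have ac1 : μ ≪ ((2⁻¹ : ℝ≥0∞) • μ + (2⁻¹ : ℝ≥0∞) • ν) := by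
    intro s hs
    simpa using (by simpa using hs : μ s = 0 ∧ ν s = 0).1
  have ac2 : ν ≪ ((2⁻¹ : ℝ≥0∞) • μ + (2⁻¹ : ℝ≥0∞) • ν) := by
    intro s hs
    simpa using (by simpa using hs : μ s = 0 ∧ ν s = 0).2
  rcases c.Ext_line hm he with ⟨a, ha⟩ | ⟨a, ha⟩
  · exact Or.inl ⟨a, ac1.ae_le ha, ac2.ae_le ha⟩
  · exact Or.inr ⟨a, ac1.ae_le ha, ac2.ae_le ha⟩

lemma Chart.plane1 [StandardBorelSpace X] (c : Chart U V univ) (h : WI 1 Φ) (x : X) :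
    ∃ y, Φ (Measure.dirac x) = Measure.dirac y := by
  have c' : Chart V U univ := c.swap
  have hx := dirac_mem 1 le_rfl x
  have i := (h.maps _ hx).1
  obtain ⟨x1, a1, b1⟩ := c.surj (U x + 1, V x) (mem_univ _)
  obtain ⟨x2, a2, b2⟩ := c.surj (U x, V x + 1) (mem_univ _)
  simp only at a1 b1 a2 b2
  have hx1 := dirac_mem 1 le_rfl x1
  have hx2 := dirac_mem 1 le_rfl x2
  have C1 : Col (Measure.dirac x) (Measure.dirac x1) := by
    refine c.col_of_line hx hx1 (a := V x) ?_ ?_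
    · filter_upwards [ae_dirac_eq' x] with z hz; rw [hz]
    · filter_upwards [ae_dirac_eq' x1] with z hz; rw [hz, b1]
  have C2 : Col (Measure.dirac x) (Measure.dirac x2) := by
    refine c'.col_of_line hx hx2 (a := U x) ?_ ?_
    · filter_upwards [ae_dirac_eq' x] with z hz; rw [hz]
    · filter_upwards [ae_dirac_eq' x2] with z hz; rw [hz, a2]
  have C3 : ¬ Col (Measure.dirac x1) (Measure.dirac x2) := by
    intro hc
    rcases c.line_of_col hx1 hx2 hc with ⟨a, h1, h2⟩ | ⟨a, h1, h2⟩
    · obtain ⟨z, hz, hz'⟩ := (h1.and (ae_dirac_eq' x1)).exists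
      obtain ⟨w, hw, hw'⟩ := (h2.and (ae_dirac_eq' x2)).exists
      rw [hz'] at hz; rw [hw'] at hw
      linarith
    · obtain ⟨z, hz, hz'⟩ := (h1.and (ae_dirac_eq' x1)).exists
      obtain ⟨w, hw, hw'⟩ := (h2.and (ae_dirac_eq' x2)).exists
      rw [hz'] at hz; rw [hw'] at hw
      linarith
  have D1 := C1.image h hx hx1
  have D2 := C2.image h hx hx2
  have D3 := fun k => C3 (Col.of_image h hx1 hx2 k)
  have pt : ∀ a b, (∀ᵐ z ∂(Φ (Measure.dirac x)), V z = a) → (∀ᵐ z ∂(Φ (Measure.dirac x)), U z = b) →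
      ∃ y, Φ (Measure.dirac x) = Measure.dirac y := by
    intro a b h1 h2
    obtain ⟨y, y1, y2⟩ := c.surj (b, a) (mem_univ _)
    refine ⟨y, eq_dirac_of_ae ?_⟩
    filter_upwards [h1, h2] with z z1 z2
    exact c.inj (by rw [y1, z2]) (by rw [y2, z1])
  rcases c.line_of_col (h.maps _ hx) (h.maps _ hx1) D1 with ⟨a, h1, h2⟩ | ⟨a, h1, h2⟩ <;>
  rcases c.line_of_col (h.maps _ hx) (h.maps _ hx2) D2 with ⟨b, h3, h4⟩ | ⟨b, h3, h4⟩
  · obtain ⟨z, hz, hz'⟩ := (h1.and h3).exists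
    have : a = b := by rw [← hz, ← hz']
    subst this
    exact absurd (c.col_of_line (h.maps _ hx1) (h.maps _ hx2) h2 h4) D3
  · exact pt _ _ h1 h3
  · exact pt _ _ h3 h1
  · obtain ⟨z, hz, hz'⟩ := (h1.and h3).exists
    have : a = b := by rw [← hz, ← hz']
    subst this
    exact absurd (c'.col_of_line (h.maps _ hx1) (h.maps _ hx2) h2 h4) D3

end Plane1

end WR

namespace WR

open Set Filter Topology ProbabilityTheory
open scoped ENNReal NNReal

section Sq

variable {X : Type*} [MetricSpace X] [MeasurableSpace X] [BorelSpace X]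
  [SecondCountableTopology X]

variable {U V : X → ℝ} {S : Set (ℝ × ℝ)} {Φ : Measure X → Measure X} {p : ℝ}

lemma two_rpow (hp : 1 ≤ p) {x y : X} (h : edist x y ^ p = 2 ^ p) : dist x y = 2 := by
  have h0 : 0 < p := by linarith
  have := (ENNReal.strictMono_rpow_of_pos h0).injective h
  rw [dist_edist, this]; simp

lemma edist_two {x y : X} (h : dist x y = 2) : edist x y = 2 := by
  rw [edist_dist, h]; simp

lemma far (hp : 1 ≤ p) (hd : ∀ x y : X, dist x y ≤ 2) {μ ν : Measure X} [IsProbabilityMeasure μ]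
    [IsProbabilityMeasure ν] (h : 2 ^ p ≤ K p μ ν) : ∀ᵐ x ∂μ, ∀ᵐ y ∂ν, dist x y = 2 := by
  have h0 : 0 < p := by linarith
  have le1 : (fun q : X × X => edist q.1 q.2 ^ p) ≤ᵐ[μ.prod ν] fun _ => 2 ^ p := by
    refine ae_of_all _ fun q => ENNReal.rpow_le_rpow ?_ h0.le
    rw [edist_dist]
    refine (ENNReal.ofReal_le_ofReal (hd _ _)).trans (by simp)
  have l2 : ∫⁻ _, (2 : ℝ≥0∞) ^ p ∂(μ.prod ν) = 2 ^ p := by simp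
  have fin : (2 : ℝ≥0∞) ^ p < ⊤ := ENNReal.rpow_lt_top_of_nonneg h0.le (by simp)
  have ae1 := ae_eq_of_ae_le_of_lintegral_le le1
    (((lintegral_mono_ae le1).trans_lt (by rw [l2]; exact fin)).ne) aemeasurable_const
    (by rw [l2]; exact h.trans (K_le (prod_cpl μ ν)))
  refine Measure.ae_ae_of_ae_prod (p := fun q : X × X => dist q.1 q.2 = 2) ?_
  filter_upwards [ae1] with q hq using two_rpow hp hq

lemma far_dirac (hp : 1 ≤ p) (hd : ∀ x y : X, dist x y ≤ 2) {μ : Measure X}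
    [IsProbabilityMeasure μ] {y : X}
    (h : 2 ^ p ≤ K p μ (Measure.dirac y)) : ∀ᵐ x ∂μ, dist x y = 2 := by
  filter_upwards [far hp hd h] with x hx
  obtain ⟨z, h1, h2⟩ := (hx.and (ae_dirac_eq' y)).exists
  rwa [h2] at h1

lemma Chart.bd (c : Chart U V Dm) (x : X) : |U x| + |V x| ≤ 2 := c.mem x

lemma Chart.diam (c : Chart U V Dm) (x y : X) : dist x y ≤ 2 := by
  rw [c.d]
  have := c.bd x
  have := c.bd y
  have := abs_sub (U x) (U y)
  have := abs_sub (V x) (V y)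
  linarith

lemma abs_tight {a b : ℝ} (h : |a - b| = |a| + |b|) : a * b ≤ 0 := by
  by_contra hn
  push Not at hn
  rcases pos_and_pos_or_neg_and_neg_of_mul_pos hn with ⟨h1, h2⟩ | ⟨h1, h2⟩
  · rw [abs_of_pos h1, abs_of_pos h2] at h
    have : |a - b| < a + b := abs_lt.2 ⟨by linarith, by linarith⟩
    linarith
  · rw [abs_of_neg h1, abs_of_neg h2] at h
    have : |a - b| < -a + -b := abs_lt.2 ⟨by linarith, by linarith⟩
    linarith

lemma Chart.tight (c : Chart U V Dm) {x y : X} (h : dist x y = 2) :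
    U x * U y ≤ 0 ∧ V x * V y ≤ 0 ∧ |U x| + |V x| = 2 ∧ |U y| + |V y| = 2 := by
  rw [c.d] at h
  have h1 := c.bd x
  have h2 := c.bd y
  have h3 := abs_sub (U x) (U y)
  have h4 := abs_sub (V x) (V y)
  refine ⟨abs_tight (by linarith), abs_tight (by linarith), by linarith, by linarith⟩

/-- corners -/
def Cor (U V : X → ℝ) (x : X) : Prop :=
  (U x = 2 ∧ V x = 0) ∨ (U x = -2 ∧ V x = 0) ∨ (U x = 0 ∧ V x = 2) ∨ (U x = 0 ∧ V x = -2)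

lemma sgn_zero {a b d : ℝ} (h : a ≠ 0) (hb : a * b ≤ 0) (hd : a * d ≤ 0) (h2 : b * d ≤ 0) :
    b = 0 ∨ d = 0 := by
  rcases lt_or_gt_of_ne h with h | h
  · have b0 : 0 ≤ b := by by_contra hn; push Not at hn; nlinarith
    have d0 : 0 ≤ d := by by_contra hn; push Not at hn; nlinarith
    have : b * d = 0 := le_antisymm h2 (by positivity)
    exact mul_eq_zero.1 this
  · have b0 : b ≤ 0 := by by_contra hn; push Not at hn; nlinarith
    have d0 : d ≤ 0 := by by_contra hn; push Not at hn; nlinarith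
    have : b * d = 0 := le_antisymm h2 (by nlinarith)
    exact mul_eq_zero.1 this

lemma Chart.cor (c : Chart U V Dm) {x y z w : X} (h1 : dist x y = 2) (h2 : dist x z = 2)
    (h3 : dist x w = 2) (h4 : dist y z = 2) (h5 : dist y w = 2) (h6 : dist z w = 2) :
    Cor U V x := by
  obtain ⟨a1, b1, e1, f1⟩ := c.tight h1
  obtain ⟨a2, b2, -, f2⟩ := c.tight h2
  obtain ⟨a3, b3, -, f3⟩ := c.tight h3
  obtain ⟨a4, b4, -, -⟩ := c.tight h4
  obtain ⟨a5, b5, -, -⟩ := c.tight h5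
  obtain ⟨a6, b6, -, -⟩ := c.tight h6
  by_cases hU : U x = 0
  · rw [hU] at e1
    simp only [abs_zero, zero_add] at e1
    rcases eq_or_eq_neg_of_abs_eq e1 with k | k
    · exact Or.inr (Or.inr (Or.inl ⟨hU, k⟩))
    · exact Or.inr (Or.inr (Or.inr ⟨hU, k⟩))
  by_cases hV : V x = 0
  · rw [hV] at e1
    simp only [abs_zero, add_zero] at e1
    rcases eq_or_eq_neg_of_abs_eq e1 with k | k
    · exact Or.inl ⟨k, hV⟩
    · exact Or.inr (Or.inl ⟨k, hV⟩)
  exfalso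
  have k1 := sgn_zero hU a1 a2 a4
  have k2 := sgn_zero hU a1 a3 a5
  have k3 := sgn_zero hU a2 a3 a6
  have l1 := sgn_zero hV b1 b2 b4
  have l2 := sgn_zero hV b1 b3 b5
  have l3 := sgn_zero hV b2 b3 b6
  have m1 : ¬ (U y = 0 ∧ V y = 0) := by rintro ⟨h, h'⟩; rw [h, h'] at f1; simp at f1
  have m2 : ¬ (U z = 0 ∧ V z = 0) := by rintro ⟨h, h'⟩; rw [h, h'] at f2; simp at f2
  have m3 : ¬ (U w = 0 ∧ V w = 0) := by rintro ⟨h, h'⟩; rw [h, h'] at f3; simp at f3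
  tauto

lemma Chart.cor_unique (c : Chart U V Dm) {x x' y z w : X} (hx : Cor U V x) (hx' : Cor U V x')
    (hy : Cor U V y) (hz : Cor U V z) (hw : Cor U V w)
    (n1 : x ≠ y) (n2 : x ≠ z) (n3 : x ≠ w) (n1' : x' ≠ y) (n2' : x' ≠ z) (n3' : x' ≠ w)
    (n4 : y ≠ z) (n5 : y ≠ w) (n6 : z ≠ w) : x = x' := by
  classical
  set f : X → ℝ × ℝ := fun x => (U x, V x) with hf
  have fi : Function.Injective f := fun a b h => c.inj (congrArg Prod.fst h) (congrArg Prod.snd h)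
  set F : Finset (ℝ × ℝ) := {(2, 0), (-2, 0), (0, 2), (0, -2)} with hF
  have mem : ∀ x, Cor U V x → f x ∈ F := by
    intro x hx
    simp only [hF, hf, Finset.mem_insert, Finset.mem_singleton, Prod.mk.injEq]
    exact hx
  have hFc : F.card ≤ 4 := Finset.card_le_four
  set G : Finset (ℝ × ℝ) := {f y, f z, f w} with hG
  have hGc : G.card = 3 := Finset.card_eq_three.2
    ⟨_, _, _, fi.ne n4, fi.ne n5, fi.ne n6, rfl⟩
  have hGF : G ⊆ F := by
    intro q hq
    simp only [hG, Finset.mem_insert, Finset.mem_singleton] at hq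
    rcases hq with rfl | rfl | rfl
    · exact mem _ hy
    · exact mem _ hz
    · exact mem _ hw
  have hc : (F \ G).card ≤ 1 := by
    rw [Finset.card_sdiff_of_subset hGF]; omega
  apply fi
  refine Finset.card_le_one.1 hc _ ?_ _ ?_
  · rw [Finset.mem_sdiff]
    refine ⟨mem _ hx, ?_⟩
    simp [hG, fi.ne n1, fi.ne n2, fi.ne n3]
  · rw [Finset.mem_sdiff]
    refine ⟨mem _ hx', ?_⟩
    simp [hG, fi.ne n1', fi.ne n2', fi.ne n3']

lemma ne_of_two {x y : X} (h : dist x y = 2) : x ≠ y := by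
  rintro rfl; simp at h

lemma Chart.clique (c : Chart U V Dm) (hp : 1 ≤ p) (m : Fin 4 → Measure X)
    (hm : ∀ i, IsProbabilityMeasure (m i))
    (h : ∀ i j, i ≠ j → 2 ^ p ≤ K p (m i) (m j)) :
    ∃ z : Fin 4 → X, (∀ i, m i = Measure.dirac (z i)) ∧ (∀ i, Cor U V (z i)) ∧
      ∀ i j, i ≠ j → dist (z i) (z j) = 2 := by
  have A : ∀ i, ∀ᵐ x ∂(m i), ∀ j, i ≠ j → ∀ᵐ y ∂(m j), dist x y = 2 := by
    intro i
    rw [ae_all_iff]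
    intro j
    by_cases hij : i = j
    · exact ae_of_all _ fun x h => absurd hij h
    · filter_upwards [far hp c.diam (h i j hij)] with x hx _ using hx
  obtain ⟨z0, a0⟩ := (A 0).exists
  obtain ⟨z1, a1, b01⟩ := ((A 1).and (a0 1 (by decide))).exists
  obtain ⟨z2, a2, b02, b12⟩ := ((A 2).and ((a0 2 (by decide)).and (a1 2 (by decide)))).exists
  obtain ⟨z3, a3, b03, b13, b23⟩ := ((A 3).and ((a0 3 (by decide)).and ((a1 3 (by decide)).and
    (a2 3 (by decide))))).exists
  have b10 := b01; rw [dist_comm] at b10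
  have b20 := b02; rw [dist_comm] at b20
  have b30 := b03; rw [dist_comm] at b30
  have b21 := b12; rw [dist_comm] at b21
  have b31 := b13; rw [dist_comm] at b31
  have b32 := b23; rw [dist_comm] at b32
  have C0 := c.cor b01 b02 b03 b12 b13 b23
  have C1 := c.cor b10 b12 b13 b02 b03 b23
  have C2 := c.cor b20 b21 b23 b01 b03 b13
  have C3 := c.cor b30 b31 b32 b01 b02 b12
  have key : ∀ x y z w : X, dist x y = 2 → dist x z = 2 → dist x w = 2 → dist y z = 2 →
      dist y w = 2 → dist z w = 2 → ∀ μ : Measure X, IsProbabilityMeasure μ →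
      (∀ᵐ a ∂μ, dist y a = 2) → (∀ᵐ a ∂μ, dist z a = 2) → (∀ᵐ a ∂μ, dist w a = 2) →
      Cor U V x → Cor U V y → Cor U V z → Cor U V w →
      μ = Measure.dirac x := by
    intro x y z w h1 h2 h3 h4 h5 h6 μ hμ k1 k2 k3 cx cy cz cw
    refine eq_dirac_of_ae ?_
    filter_upwards [k1, k2, k3] with a l1 l2 l3
    rw [dist_comm] at l1 l2 l3
    exact c.cor_unique (c.cor l1 l2 l3 h4 h5 h6) cx cy cz cw (ne_of_two l1) (ne_of_two l2)
      (ne_of_two l3) (ne_of_two h1) (ne_of_two h2) (ne_of_two h3) (ne_of_two h4) (ne_of_two h5)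
      (ne_of_two h6)
  refine ⟨![z0, z1, z2, z3], ?_, ?_, ?_⟩
  · intro i
    fin_cases i
    · exact key z0 z1 z2 z3 b01 b02 b03 b12 b13 b23 _ (hm 0) (a1 0 (by decide)) (a2 0 (by decide))
        (a3 0 (by decide)) C0 C1 C2 C3
    · exact key z1 z0 z2 z3 b10 b12 b13 b02 b03 b23 _ (hm 1) (a0 1 (by decide)) (a2 1 (by decide))
        (a3 1 (by decide)) C1 C0 C2 C3
    · exact key z2 z0 z1 z3 b20 b21 b23 b01 b03 b13 _ (hm 2) (a0 2 (by decide)) (a1 2 (by decide))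
        (a3 2 (by decide)) C2 C0 C1 C3
    · exact key z3 z0 z1 z2 b30 b31 b32 b01 b02 b12 _ (hm 3) (a0 3 (by decide)) (a1 3 (by decide))
        (a2 3 (by decide)) C3 C0 C1 C2
  · intro i
    fin_cases i
    exacts [C0, C1, C2, C3]
  · intro i j hij
    fin_cases i <;> fin_cases j <;> first | exact absurd rfl hij | assumption

lemma two_pt_int (hp : 1 ≤ p) {μ : Measure X} {x y : X} (hxy : dist x y = 2)
    (h : ∀ᵐ z ∂μ, z = x ∨ z = y) : ∫⁻ z, edist z x ^ p ∂μ = 2 ^ p * μ {y} := by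
  have h0 : 0 < p := by linarith
  rw [← lintegral_indicator_const (measurableSet_singleton y)]
  refine lintegral_congr_ae ?_
  have hne : x ≠ y := ne_of_two hxy
  filter_upwards [h] with z hz
  rcases hz with rfl | rfl
  · simp [hne, h0]
  · rw [edist_comm, edist_two hxy]; simp

lemma two_pt_eq (hp : 1 ≤ p) {μ ν : Measure X} [IsProbabilityMeasure μ] [IsProbabilityMeasure ν]
    {x y : X} (hxy : dist x y = 2)
    (h : ∀ᵐ z ∂μ, z = x ∨ z = y) (h' : ∀ᵐ z ∂ν, z = x ∨ z = y)
    (hK : K p μ (Measure.dirac x) = K p ν (Measure.dirac x)) : μ = ν := by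
  classical
  have h0 : 0 < p := by linarith
  have hne : x ≠ y := ne_of_two hxy
  rw [K_dirac, K_dirac, two_pt_int hp hxy h, two_pt_int hp hxy h'] at hK
  have ey : μ {y} = ν {y} := by
    refine (ENNReal.mul_right_inj ?_ ?_).1 hK
    · simp [h0.le]
    · exact (ENNReal.rpow_lt_top_of_nonneg h0.le (by simp)).ne
  have key : ∀ μ : Measure X, IsProbabilityMeasure μ → (∀ᵐ z ∂μ, z = x ∨ z = y) →
      μ {x} = 1 - μ {y} := by
    intro μ hμ h
    rw [← prob_compl_eq_one_sub (measurableSet_singleton y)]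
    refine measure_congr ?_
    filter_upwards [h] with z hz
    apply propext
    change z ∈ ({x} : Set X) ↔ z ∈ ({y} : Set X)ᶜ
    rcases hz with rfl | rfl
    · simp [hne]
    · simp [hne.symm]
  refine ext_fin {x, y} (by simpa using h) (by simpa using h') ?_
  intro z hz
  simp only [Finset.mem_insert, Finset.mem_singleton] at hz
  rcases hz with rfl | rfl
  · rw [key μ inferInstance h, key ν inferInstance h', ey]
  · exact ey

lemma Chart.opp (c : Chart U V Dm) {x y z : X} (hy : U y = 0 ∧ V y = 2) (hz : U z = 0 ∧ V z = -2)
    (h1 : dist x y = 2) (h2 : dist x z = 2) : V x = 0 ∧ (U x = 2 ∨ U x = -2) := by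
  obtain ⟨-, h3, h4, -⟩ := c.tight h1
  obtain ⟨-, h5, -, -⟩ := c.tight h2
  rw [hy.2] at h3
  rw [hz.2] at h5
  have : V x = 0 := by linarith
  rw [this] at h4
  simp only [abs_zero, add_zero] at h4
  exact ⟨this, eq_or_eq_neg_of_abs_eq h4⟩

/-- opposite corners go to opposite corners -/
lemma Chart.no_mid (c : Chart U V Dm) (hp : 1 ≤ p) (h : WI p Φ) {k z : Fin 4 → X}
    (k0 : U (k 0) = 2 ∧ V (k 0) = 0) (k1 : U (k 1) = -2 ∧ V (k 1) = 0)
    (k2 : U (k 2) = 0 ∧ V (k 2) = 2) (k3 : U (k 3) = 0 ∧ V (k 3) = -2)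
    (hz : ∀ i, Φ (Measure.dirac (k i)) = Measure.dirac (z i))
    (hd : ∀ i j, i ≠ j → dist (z i) (z j) = 2) {w : X} (w0 : w ≠ z 0) (w1 : w ≠ z 1)
    (w2 : dist w (z 2) = 2) (w3 : dist w (z 3) = 2) : False := by
  classical
  have h0 : 0 < p := by linarith
  have d01 : dist (k 0) (k 1) = 2 := by
    rw [c.d, k0.1, k0.2, k1.1, k1.2]; norm_num
  obtain ⟨μ, hμ, e⟩ := h.surj _ (dirac_mem p hp w)
  have i1 := hμ.1
  have supp : ∀ μ ∈ WSet X p, K p (Φ μ) (Measure.dirac (z 2)) = 2 ^ p →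
      K p (Φ μ) (Measure.dirac (z 3)) = 2 ^ p → ∀ᵐ x ∂μ, x = k 0 ∨ x = k 1 := by
    intro μ hμ h1 h2
    have i1 := hμ.1
    rw [← hz, h.K _ hμ _ (dirac_mem p hp _)] at h1 h2
    filter_upwards [far_dirac hp c.diam h1.ge, far_dirac hp c.diam h2.ge] with x x1 x2
    obtain ⟨y1, y2⟩ := c.opp k2 k3 x1 x2
    rcases y2 with y2 | y2
    · left; exact c.inj (by rw [y2, k0.1]) (by rw [y1, k0.2])
    · right; exact c.inj (by rw [y2, k1.1]) (by rw [y1, k1.2])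
  have s1 := supp μ hμ (by rw [e, K_dd hp, edist_two w2]) (by rw [e, K_dd hp, edist_two w3])
  have ab : μ {k 0} + μ {k 1} = 1 := by
    rw [← measure_union (by simp [ne_of_two d01]) (measurableSet_singleton _), ← measure_univ (μ := μ)]
    refine measure_congr ?_
    filter_upwards [s1] with x hx
    apply propext
    change x ∈ ({k 0} ∪ {k 1} : Set X) ↔ x ∈ univ
    simpa [or_comm] using hx
  have hν := tp_mem hp (z 0) (z 1) ab
  set ν := μ {k 0} • Measure.dirac (z 0) + μ {k 1} • Measure.dirac (z 1) with hνd
  have i3 := hν.1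
  have Kν : ∀ y, K p ν (Measure.dirac y) = μ {k 0} * edist (z 0) y ^ p + μ {k 1} * edist (z 1) y ^ p := by
    intro y
    rw [K_dirac, hνd, lintegral_add_measure, lintegral_smul_measure, lintegral_smul_measure,
      lintegral_dirac, lintegral_dirac]
    rfl
  obtain ⟨μ2, hμ2, e2⟩ := h.surj ν hν
  have i2 := hμ2.1
  have far2 : ∀ j, j ≠ 0 → j ≠ 1 → K p (Φ μ2) (Measure.dirac (z j)) = 2 ^ p := by
    intro j j0 j1
    rw [e2, Kν, edist_two (hd 0 j j0.symm), edist_two (hd 1 j j1.symm), ← add_mul, ab, one_mul]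
  have s2 := supp μ2 hμ2 (far2 2 (by decide) (by decide)) (far2 3 (by decide) (by decide))
  have : μ = μ2 := by
    refine two_pt_eq hp d01 s1 s2 ?_
    rw [K_dirac p μ, two_pt_int hp d01 s1, ← h.K _ hμ2 _ (dirac_mem p hp _), hz, e2, Kν,
      edist_two (hd 1 0 (by decide))]
    simp [h0, mul_comm]
  rw [← this, e] at e2
  have := congrArg (fun m => m {w}) e2
  simp [hνd, w0.symm, w1.symm] at this

lemma Chart.exists_isom {U' V' : X → ℝ} (c : Chart U V Dm) (c' : Chart U' V' Dm) :
    ∃ R : X → X, IsIsom R ∧ ∀ x, U (R x) = U' x ∧ V (R x) = V' x := by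
  have := fun x => c.surj _ (c'.mem x)
  choose R h1 h2 using this
  simp only at h1 h2
  refine ⟨R, ⟨⟨fun x y e => ?_, fun y => ?_⟩, fun x y => ?_⟩, fun x => ⟨h1 x, h2 x⟩⟩
  · exact c'.inj (by rw [← h1, e, h1]) (by rw [← h2, e, h2])
  · obtain ⟨x, a, b⟩ := c'.surj _ (c.mem y)
    exact ⟨x, c.inj (by rw [h1, a]) (by rw [h2, b])⟩
  · rw [c.d, c'.d, h1, h1, h2, h2]

lemma Chart.swapD (c : Chart U V Dm) : Chart V U Dm := by
  have := c.swap; rwa [Dm_swap] at this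

lemma Chart.negUD (c : Chart U V Dm) : Chart (fun x => - U x) V Dm := by
  have := c.negU
  have e : (fun q : ℝ × ℝ => (-q.1, q.2)) ⁻¹' Dm = Dm := by
    ext ⟨a, b⟩; simp [Dm]
  rwa [e] at this

lemma Chart.negVD (c : Chart U V Dm) : Chart U (fun x => - V x) Dm := c.swapD.negUD.swapD

/-- chart in which a given corner is `(2,0)` -/
lemma Chart.rot (c : Chart U V Dm) {x : X} (h : Cor U V x) : ∃ U' V' : X → ℝ, Chart U' V' Dm ∧
    U' x = 2 ∧ V' x = 0 ∧ ∀ y, Cor U V y → Cor U' V' y := by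
  rcases h with h | h | h | h
  · exact ⟨U, V, c, h.1, h.2, fun _ h => h⟩
  · refine ⟨_, _, c.negUD, by simp [h.1], h.2, fun y hy => ?_⟩
    rcases hy with k | k | k | k <;> simp [Cor, k]
  · refine ⟨_, _, c.swapD, h.2, h.1, fun y hy => ?_⟩
    rcases hy with k | k | k | k <;> simp [Cor, k]
  · refine ⟨_, _, c.swapD.negUD, by simp [h.2], h.1, fun y hy => ?_⟩
    rcases hy with k | k | k | k <;> simp [Cor, k]

lemma Chart.fix_corners (c : Chart U V Dm) (hp : 1 ≤ p) (h : WI p Φ) : ∃ U' V' : X → ℝ,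
    Chart U' V' Dm ∧ ∀ x y, Cor U V x → U' y = U x → V' y = V x →
      Φ (Measure.dirac x) = Measure.dirac y := by
  obtain ⟨k0, a0⟩ := c.surj (2, 0) (by simp [Dm])
  obtain ⟨k1, a1⟩ := c.surj (-2, 0) (by simp [Dm])
  obtain ⟨k2, a2⟩ := c.surj (0, 2) (by simp [Dm])
  obtain ⟨k3, a3⟩ := c.surj (0, -2) (by simp [Dm])
  simp only at a0 a1 a2 a3
  set k : Fin 4 → X := ![k0, k1, k2, k3] with hk
  have hkd : ∀ i j, i ≠ j → dist (k i) (k j) = 2 := by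
    intro i j hij
    fin_cases i <;> fin_cases j <;> first
      | exact absurd rfl hij
      | (simp only [hk, c.d]; simp [a0, a1, a2, a3]; try norm_num)
  obtain ⟨z, z1, z2, z3⟩ := c.clique hp (fun i => Φ (Measure.dirac (k i)))
    (fun i => (h.maps _ (dirac_mem p hp _)).1) (fun i j hij => by
      rw [h.K _ (dirac_mem p hp _) _ (dirac_mem p hp _), K_dd hp, edist_two (hkd i j hij)])
  have nm := fun w => c.no_mid hp h (k := k) (z := z) a0 a1 a2 a3 z1 z3 (w := w)
  obtain ⟨U1, V1, c1, u0, v0, hc⟩ := c.rot (z2 0)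
  have e1 : U1 (z 1) = -2 ∧ V1 (z 1) = 0 := by
    have C1 := hc _ (z2 1)
    have C2 := hc _ (z2 2)
    have C3 := hc _ (z2 3)
    have d01 := z3 0 1 (by decide)
    have d02 := z3 0 2 (by decide)
    have d03 := z3 0 3 (by decide)
    have d12 := z3 1 2 (by decide)
    have d13 := z3 1 3 (by decide)
    have d23 := z3 2 3 (by decide)
    obtain ⟨w, w1, w2⟩ := c1.surj (1, V1 (z 1) / 2) (by
      have := c1.bd (z 1)
      have := abs_nonneg (U1 (z 1))
      simp only [Dm, mem_ofPred_eq, abs_div, abs_one]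
      rw [abs_of_pos (a := (2 : ℝ)) (by norm_num)]
      linarith)
    simp only at w1 w2
    have n0 : w ≠ z 0 := by rintro rfl; linarith
    by_contra hne
    have n1 : w ≠ z 1 := by
      rintro rfl
      rcases C1 with k | k | k | k <;> linarith
    have key : ∀ y, Cor U1 V1 y → y ≠ z 0 → y ≠ z 1 → dist w y = 2 := by
      intro y hy y0 y1
      rw [c1.d, w1, w2]
      rcases C1 with ⟨k, l⟩ | ⟨k, l⟩ | ⟨k, l⟩ | ⟨k, l⟩
      · exact absurd (c1.inj (u0.trans k.symm) (v0.trans l.symm)) (ne_of_two d01)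
      · exact absurd ⟨k, l⟩ hne
      · rcases hy with ⟨k', l'⟩ | ⟨k', l'⟩ | ⟨k', l'⟩ | ⟨k', l'⟩
        · exact absurd (c1.inj (k'.trans u0.symm) (l'.trans v0.symm)) y0
        · rw [k', l', l]; norm_num
        · exact absurd (c1.inj (k'.trans k.symm) (l'.trans l.symm)) y1
        · rw [k', l', l]; norm_num
      · rcases hy with ⟨k', l'⟩ | ⟨k', l'⟩ | ⟨k', l'⟩ | ⟨k', l'⟩
        · exact absurd (c1.inj (k'.trans u0.symm) (l'.trans v0.symm)) y0
        · rw [k', l', l]; norm_num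
        · rw [k', l', l]; norm_num
        · exact absurd (c1.inj (k'.trans k.symm) (l'.trans l.symm)) y1
    exact nm w n0 n1 (key _ C2 (ne_of_two d02).symm (ne_of_two d12).symm)
      (key _ C3 (ne_of_two d03).symm (ne_of_two d13).symm)
  have fin : ∀ U' V' : X → ℝ, Chart U' V' Dm → U' (z 0) = 2 → V' (z 0) = 0 → U' (z 1) = -2 →
      V' (z 1) = 0 → U' (z 2) = 0 → V' (z 2) = 2 → U' (z 3) = 0 → V' (z 3) = -2 →
      ∃ U' V' : X → ℝ,
    Chart U' V' Dm ∧ ∀ x y, Cor U V x → U' y = U x → V' y = V x →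
      Φ (Measure.dirac x) = Measure.dirac y := by
    intro U' V' c' b1 b2 b3 b4 b5 b6 b7 b8
    refine ⟨U', V', c', fun x y hx h1 h2 => ?_⟩
    rcases hx with ⟨l, l'⟩ | ⟨l, l'⟩ | ⟨l, l'⟩ | ⟨l, l'⟩
    · rw [c.inj (l.trans a0.1.symm) (l'.trans a0.2.symm), 
        c'.inj (h1.trans (l.trans b1.symm)) (h2.trans (l'.trans b2.symm))]
      exact z1 0
    · rw [c.inj (l.trans a1.1.symm) (l'.trans a1.2.symm), 
        c'.inj (h1.trans (l.trans b3.symm)) (h2.trans (l'.trans b4.symm))]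
      exact z1 1
    · rw [c.inj (l.trans a2.1.symm) (l'.trans a2.2.symm), 
        c'.inj (h1.trans (l.trans b5.symm)) (h2.trans (l'.trans b6.symm))]
      exact z1 2
    · rw [c.inj (l.trans a3.1.symm) (l'.trans a3.2.symm), 
        c'.inj (h1.trans (l.trans b7.symm)) (h2.trans (l'.trans b8.symm))]
      exact z1 3
  have C2 := hc _ (z2 2)
  have C3 := hc _ (z2 3)
  have n02 := ne_of_two (z3 0 2 (by decide))
  have n03 := ne_of_two (z3 0 3 (by decide))
  have n12 := ne_of_two (z3 1 2 (by decide))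
  have n13 := ne_of_two (z3 1 3 (by decide))
  have n23 := ne_of_two (z3 2 3 (by decide))
  have inj := fun {a b : X} (h1 : U1 a = U1 b) (h2 : V1 a = V1 b) => c1.inj h1 h2
  rcases C2 with ⟨k', l'⟩ | ⟨k', l'⟩ | ⟨k', l'⟩ | ⟨k', l'⟩
  · exact absurd (inj (by rw [u0, k']) (by rw [v0, l'])) n02
  · exact absurd (inj (by rw [e1.1, k']) (by rw [e1.2, l'])) n12
  · rcases C3 with ⟨k, l⟩ | ⟨k, l⟩ | ⟨k, l⟩ | ⟨k, l⟩
    · exact absurd (inj (by rw [u0, k]) (by rw [v0, l])) n03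
    · exact absurd (inj (by rw [e1.1, k]) (by rw [e1.2, l])) n13
    · exact absurd (inj (by rw [k', k]) (by rw [l', l])) n23
    · exact fin U1 V1 c1 u0 v0 e1.1 e1.2 k' l' k l
  · rcases C3 with ⟨k, l⟩ | ⟨k, l⟩ | ⟨k, l⟩ | ⟨k, l⟩
    · exact absurd (inj (by rw [u0, k]) (by rw [v0, l])) n03
    · exact absurd (inj (by rw [e1.1, k]) (by rw [e1.2, l])) n13
    · exact fin U1 _ c1.negVD u0 (by simp [v0]) e1.1 (by simp [e1.2]) k' (by simp [l']) k (by simp [l])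
    · exact absurd (inj (by rw [k', k]) (by rw [l', l])) n23

end Sq

end WR

namespace WR

open Set Filter Topology ProbabilityTheory
open scoped ENNReal NNReal

section Sq2

variable {X : Type*} [MetricSpace X] [MeasurableSpace X] [BorelSpace X]
  [SecondCountableTopology X]

variable {U V : X → ℝ} {S : Set (ℝ × ℝ)} {Φ : Measure X → Measure X} {p : ℝ}

lemma K_wt {μ : Measure X} {w1 w2 : X → ℝ≥0∞} (m1 : Measurable w1) (m2 : Measurable w2)
    (hw : ∀ z, w1 z + w2 z = 1) (x y : X) :
    K p μ ((∫⁻ z, w1 z ∂μ) • Measure.dirac x + (∫⁻ z, w2 z ∂μ) • Measure.dirac y)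
      ≤ ∫⁻ z, (w1 z * edist z x ^ p + w2 z * edist z y ^ p) ∂μ := by
  have f1 : Measurable fun z : X => (z, x) := by fun_prop
  have f2 : Measurable fun z : X => (z, y) := by fun_prop
  have hc : Cpl ((μ.withDensity w1).map (fun z => (z, x)) + (μ.withDensity w2).map (fun z => (z, y)))
      μ ((∫⁻ z, w1 z ∂μ) • Measure.dirac x + (∫⁻ z, w2 z ∂μ) • Measure.dirac y) := by
    constructor
    · rw [Measure.map_add _ _ measurable_fst, Measure.map_map measurable_fst f1,
        Measure.map_map measurable_fst f2]
      change (μ.withDensity w1).map id + (μ.withDensity w2).map id = μ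
      rw [Measure.map_id, Measure.map_id, ← withDensity_add_left m1]
      have : w1 + w2 = 1 := funext hw
      rw [this, withDensity_one]
    · rw [Measure.map_add _ _ measurable_snd, Measure.map_map measurable_snd f1,
        Measure.map_map measurable_snd f2]
      change (μ.withDensity w1).map (fun _ => x) + (μ.withDensity w2).map (fun _ => y) = _
      rw [Measure.map_const, Measure.map_const]
      simp
  refine (K_le hc).trans ?_
  rw [lintegral_add_measure, lintegral_map (meas_edist p) f1, lintegral_map (meas_edist p) f2,
    lintegral_withDensity_eq_lintegral_mul _ m1 (meas_edist_left p x),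
    lintegral_withDensity_eq_lintegral_mul _ m2 (meas_edist_left p y),
    ← lintegral_add_left (m1.mul (meas_edist_left p x))]
  rfl

lemma jensen (hp : 1 ≤ p) {μ : Measure X} [IsProbabilityMeasure μ] {f : X → ℝ} {a : ℝ}
    (h0 : ∀ z, 0 ≤ f z) (ha : 0 ≤ a) (i1 : Integrable f μ) (i2 : Integrable (fun z => f z ^ p) μ)
    (h : ∫ z, f z ^ p ∂μ = a ^ p) : ∫ z, f z ∂μ ≤ a := by
  have hp0 : 0 < p := by linarith
  have := (convexOn_rpow hp).map_integral_le (μ := μ) (f := f)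
    (Real.continuous_rpow_const hp0.le).continuousOn isClosed_Ici (ae_of_all _ h0) i1 i2
  rw [h] at this
  exact (Real.rpow_le_rpow_iff (integral_nonneg h0) ha hp0).1 this

lemma bint {μ : Measure X} [IsProbabilityMeasure μ] {f : X → ℝ} (hf : Measurable f) (C : ℝ)
    (h : ∀ z, |f z| ≤ C) : Integrable f μ :=
  Integrable.of_bound hf.aestronglyMeasurable C (ae_of_all _ h)

lemma Chart.fix_half (c : Chart U V Dm) (hp : 1 ≤ p) (h : WI p Φ)
    (hc : ∀ x, Cor U V x → Φ (Measure.dirac x) = Measure.dirac x) {x y : X}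
    (hx : U x = 2 ∧ V x = 0) (hy : U y = -2 ∧ V y = 0) :
    Φ ((2⁻¹ : ℝ≥0∞) • Measure.dirac x + (2⁻¹ : ℝ≥0∞) • Measure.dirac y) =
      (2⁻¹ : ℝ≥0∞) • Measure.dirac x + (2⁻¹ : ℝ≥0∞) • Measure.dirac y := by
  have hab : (2⁻¹ : ℝ≥0∞) + 2⁻¹ = 1 := ENNReal.inv_two_add_inv_two
  have hν := tp_mem hp x y hab
  set ν := (2⁻¹ : ℝ≥0∞) • Measure.dirac x + (2⁻¹ : ℝ≥0∞) • Measure.dirac y with hνd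
  have i1 := hν.1
  have i2 := (h.maps _ hν).1
  obtain ⟨k2, a2⟩ := c.surj (0, 2) (by simp [Dm])
  obtain ⟨k3, a3⟩ := c.surj (0, -2) (by simp [Dm])
  simp only at a2 a3
  have Kν : ∀ z, dist x z = 2 → dist y z = 2 → K p ν (Measure.dirac z) = 2 ^ p := by
    intro z h1 h2
    rw [K_dirac, hνd, lintegral_add_measure, lintegral_smul_measure, lintegral_smul_measure,
      lintegral_dirac, lintegral_dirac, edist_two h1, edist_two h2, ← add_smul, hab, one_smul]
  have s1 : ∀ᵐ z ∂(Φ ν), z = x ∨ z = y := by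
    have h1 := Kν k2 (by rw [c.d, hx.1, hx.2, a2.1, a2.2]; norm_num)
      (by rw [c.d, hy.1, hy.2, a2.1, a2.2]; norm_num)
    have h2 := Kν k3 (by rw [c.d, hx.1, hx.2, a3.1, a3.2]; norm_num)
      (by rw [c.d, hy.1, hy.2, a3.1, a3.2]; norm_num)
    rw [← h.K _ hν _ (dirac_mem p hp _), hc] at h1 h2
    · filter_upwards [far_dirac hp c.diam h1.ge, far_dirac hp c.diam h2.ge] with z x1 x2
      obtain ⟨y1, y2⟩ := c.opp a2 a3 x1 x2
      rcases y2 with y2 | y2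
      · left; exact c.inj (by rw [y2, hx.1]) (by rw [y1, hx.2])
      · right; exact c.inj (by rw [y2, hy.1]) (by rw [y1, hy.2])
    · simp [Cor, a3]
    · simp [Cor, a2]
  refine two_pt_eq hp (x := x) (y := y) (by rw [c.d, hx.1, hx.2, hy.1, hy.2]; norm_num) s1
    (tp_ae _ _ _ _) ?_
  rw [← h.K _ hν _ (dirac_mem p hp _), hc _ (by simp [Cor, hx])]

lemma Chart.axis (c : Chart U V Dm) (hp : 1 ≤ p) (h : WI p Φ)
    (hc : ∀ x, Cor U V x → Φ (Measure.dirac x) = Measure.dirac x) {x : X} (hV : V x = 0) :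
    Φ (Measure.dirac x) = Measure.dirac x := by
  have hp0 : 0 < p := by linarith
  have hδ := dirac_mem p hp x
  have hμ := h.maps _ hδ
  set μ := Φ (Measure.dirac x) with hμd
  have i0 := hμ.1
  obtain ⟨k0, a0⟩ := c.surj (2, 0) (by simp [Dm])
  obtain ⟨k1, a1⟩ := c.surj (-2, 0) (by simp [Dm])
  simp only at a0 a1
  have bd : ∀ z, |U z| ≤ 2 := fun z => by have := c.bd z; have := abs_nonneg (V z); linarith
  have bdV : ∀ z, |V z| ≤ 2 := fun z => by have := c.bd z; have := abs_nonneg (U z); linarith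
  have dA : ∀ z, dist z k0 = (2 - U z + |V z|) / 2 := by
    intro z
    have := abs_le.1 (bd z)
    rw [c.d, a0.1, a0.2, abs_of_nonpos (by linarith), sub_zero]; ring
  have dB : ∀ z, dist z k1 = (2 + U z + |V z|) / 2 := by
    intro z
    have := abs_le.1 (bd z)
    rw [c.d, a1.1, a1.2, abs_of_nonneg (by linarith), sub_zero]; ring
  have hA := h.potR hp (hc k0 (by simp [Cor, a0])) hδ
  have hB := h.potR hp (hc k1 (by simp [Cor, a1])) hδ
  rw [integral_dirac, ← hμd] at hA hB
  have mU := c.measU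
  have mV := c.measV
  have iU : Integrable U μ := bint mU 2 bd
  have iV : Integrable (fun z => |V z|) μ := bint mV.abs 2 (fun z => by simpa using bdV z)
  have iA : Integrable (fun z => dist z k0) μ :=
    bint (by fun_prop) 2 (fun z => by rw [abs_of_nonneg dist_nonneg]; exact c.diam _ _)
  have iB : Integrable (fun z => dist z k1) μ :=
    bint (by fun_prop) 2 (fun z => by rw [abs_of_nonneg dist_nonneg]; exact c.diam _ _)
  have pA : Integrable (fun z => dist z k0 ^ p) μ := integrable_pot hp hμ k0
  have pB : Integrable (fun z => dist z k1 ^ p) μ := integrable_pot hp hμ k1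
  have JA := jensen hp (fun z => dist_nonneg) dist_nonneg iA pA hA
  have JB := jensen hp (fun z => dist_nonneg) dist_nonneg iB pB hB
  have i2U : Integrable (fun z => 2 - U z) μ := (integrable_const _).sub iU
  have i2U' : Integrable (fun z => 2 + U z) μ := (integrable_const _).add iU
  have iUx : Integrable (fun z => U z - U x) μ := iU.sub (integrable_const _)
  have iUx8 : Integrable (fun z => (U z - U x) / 8) μ := iUx.div_const _
  have eA : ∫ z, dist z k0 ∂μ = (2 - ∫ z, U z ∂μ + ∫ z, |V z| ∂μ) / 2 := by
    simp_rw [dA]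
    rw [integral_div, integral_add i2U iV,
      integral_sub (integrable_const _) iU]
    simp
  have eB : ∫ z, dist z k1 ∂μ = (2 + ∫ z, U z ∂μ + ∫ z, |V z| ∂μ) / 2 := by
    simp_rw [dB]
    rw [integral_div, integral_add i2U' iV,
      integral_add (integrable_const _) iU]
    simp
  rw [eA, dA, hV, abs_zero] at JA
  rw [eB, dB, hV, abs_zero] at JB
  have V0 : 0 ≤ ∫ z, |V z| ∂μ := integral_nonneg fun z => abs_nonneg _
  have V00 : ∫ z, |V z| ∂μ = 0 := by linarith
  have EU : ∫ z, U z ∂μ = U x := by linarith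
  have aV : ∀ᵐ z ∂μ, V z = 0 := by
    have := (integral_eq_zero_iff_of_nonneg (fun z => abs_nonneg _) iV).1 V00
    filter_upwards [this] with z hz
    simpa using hz
  -- weights
  set w : X → ℝ := fun z => 1 / 2 + (U z - U x) / 8 with hw
  have w0 : ∀ z, 0 ≤ w z := by
    intro z
    have := abs_le.1 (bd z)
    have := abs_le.1 (bd x)
    simp only [hw]; linarith
  have w1 : ∀ z, w z ≤ 1 := by
    intro z
    have := abs_le.1 (bd z)
    have := abs_le.1 (bd x)
    simp only [hw]; linarith
  have mw : Measurable w := by simp only [hw]; fun_prop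
  have iw : Integrable w μ := bint mw 1 (fun z => by rw [abs_of_nonneg (w0 z)]; exact w1 z)
  have Ew : ∫ z, w z ∂μ = 1 / 2 := by
    simp only [hw]
    rw [integral_add (integrable_const _) iUx8, integral_div 8,
      integral_sub iU (integrable_const _), EU]
    simp
  have lw1 : ∫⁻ z, ENNReal.ofReal (w z) ∂μ = 2⁻¹ := by
    rw [← ofReal_integral_eq_lintegral_ofReal iw (ae_of_all _ w0), Ew]
    rw [one_div, ENNReal.ofReal_inv_of_pos (by norm_num)]; simp
  have iw' : Integrable (fun z => 1 - w z) μ := (integrable_const _).sub iw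
  have lw2 : ∫⁻ z, ENNReal.ofReal (1 - w z) ∂μ = 2⁻¹ := by
    rw [← ofReal_integral_eq_lintegral_ofReal iw'
      (ae_of_all _ fun z => sub_nonneg.2 (w1 z)), integral_sub (integrable_const _) iw, Ew]
    have : ∫ _ : X, (1 : ℝ) ∂μ - 1 / 2 = 2⁻¹ := by simp; norm_num
    rw [this, ENNReal.ofReal_inv_of_pos (by norm_num)]; simp
  have i5 := (tp_mem hp k0 k1 ENNReal.inv_two_add_inv_two).1
  have kk := K_wt (p := p) (μ := μ) (w1 := fun z => ENNReal.ofReal (w z))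
    (w2 := fun z => ENNReal.ofReal (1 - w z)) (by fun_prop) (by fun_prop) (fun z => by
      rw [← ENNReal.ofReal_add (w0 z) (sub_nonneg.2 (w1 z))]; simp) k0 k1
  rw [lw1, lw2, ← c.fix_half hp h hc a0 a1, hμd,
    h.K _ hδ _ (tp_mem hp k0 k1 ENNReal.inv_two_add_inv_two), ← hμd, K_dirac',
    lintegral_add_measure, lintegral_smul_measure, lintegral_smul_measure,
      lintegral_dirac, lintegral_dirac] at kk
  have ed : ∀ z k : X, edist z k ^ p = ENNReal.ofReal (dist z k ^ p) := fun z k => by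
    rw [edist_dist, ENNReal.ofReal_rpow_of_nonneg dist_nonneg hp0.le]
  have iwA : Integrable (fun z => w z * dist z k0 ^ p) μ :=
    pA.bdd_mul (c := 1) mw.aestronglyMeasurable (ae_of_all _ fun z => by
      rw [Real.norm_eq_abs, abs_of_nonneg (w0 z)]; exact w1 z)
  have iwB : Integrable (fun z => (1 - w z) * dist z k1 ^ p) μ :=
    pB.bdd_mul (c := 1) (by fun_prop) (ae_of_all _ fun z => by
      rw [Real.norm_eq_abs, abs_of_nonneg (sub_nonneg.2 (w1 z))]; linarith [w0 z])
  have iwAB : Integrable (fun z => w z * dist z k0 ^ p + (1 - w z) * dist z k1 ^ p) μ := iwA.add iwB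
  have iAB : Integrable (fun z => 2⁻¹ * dist z k0 ^ p + 2⁻¹ * dist z k1 ^ p) μ :=
    (pA.const_mul _).add (pB.const_mul _)
  have eR : ∫⁻ z, (ENNReal.ofReal (w z) * edist z k0 ^ p + ENNReal.ofReal (1 - w z) * edist z k1 ^ p) ∂μ
      = ENNReal.ofReal (∫ z, (w z * dist z k0 ^ p + (1 - w z) * dist z k1 ^ p) ∂μ) := by
    rw [ofReal_integral_eq_lintegral_ofReal iwAB (ae_of_all _ fun z => by
      have := w0 z
      have := sub_nonneg.2 (w1 z)
      simp only [Pi.zero_apply, Pi.add_apply]; positivity)]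
    refine lintegral_congr fun z => ?_
    have := w0 z
    have := sub_nonneg.2 (w1 z)
    rw [ENNReal.ofReal_add (p := w z * dist z k0 ^ p) (by positivity) (by positivity),
      ENNReal.ofReal_mul (w0 z),
      ENNReal.ofReal_mul (sub_nonneg.2 (w1 z)), ed, ed]
  have eL : (2⁻¹ : ℝ≥0∞) • edist k0 x ^ p + (2⁻¹ : ℝ≥0∞) • edist k1 x ^ p
      = ENNReal.ofReal (2⁻¹ * dist x k0 ^ p + 2⁻¹ * dist x k1 ^ p) := by
    rw [edist_comm k0, edist_comm k1, ed, ed, ENNReal.ofReal_add (by positivity) (by positivity),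
      ENNReal.ofReal_mul (by norm_num), ENNReal.ofReal_mul (by norm_num),
      ENNReal.ofReal_inv_of_pos (by norm_num)]
    simp
  rw [eR, eL, ENNReal.ofReal_le_ofReal_iff (integral_nonneg fun z => by
      have := w0 z
      have := sub_nonneg.2 (w1 z)
      simp only [Pi.zero_apply]; positivity)] at kk
  set F : X → ℝ := fun z => (U z - U x) * ((dist z k1 ^ p - dist z k0 ^ p)
    - (dist x k1 ^ p - dist x k0 ^ p)) with hF
  have iD : Integrable (fun z => (U z - U x) * (dist z k1 ^ p - dist z k0 ^ p)) μ :=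
    (pB.sub pA).bdd_mul (c := 4) (by fun_prop) (ae_of_all _ fun z => by
      have := abs_le.1 (bd z)
      have := abs_le.1 (bd x)
      rw [Real.norm_eq_abs, abs_le]; constructor <;> linarith)
  have iC : Integrable (fun z => (U z - U x) * (dist x k1 ^ p - dist x k0 ^ p)) μ :=
    (iU.sub (integrable_const _)).mul_const _
  have e0 : ∫ z, (U z - U x) * (dist x k1 ^ p - dist x k0 ^ p) ∂μ = 0 := by
    rw [integral_mul_const, integral_sub iU (integrable_const _), EU]; simp
  have eF : ∫ z, F z ∂μ = ∫ z, (U z - U x) * (dist z k1 ^ p - dist z k0 ^ p) ∂μ := by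
    have : F = fun z => (U z - U x) * (dist z k1 ^ p - dist z k0 ^ p) -
      (U z - U x) * (dist x k1 ^ p - dist x k0 ^ p) := by funext z; simp only [hF]; ring
    rw [this, integral_sub iD iC, e0, sub_zero]
  have iF : Integrable F μ := by
    have : F = fun z => (U z - U x) * (dist z k1 ^ p - dist z k0 ^ p) -
      (U z - U x) * (dist x k1 ^ p - dist x k0 ^ p) := by funext z; simp only [hF]; ring
    rw [this]; exact iD.sub iC
  have eG : ∫ z, (w z * dist z k0 ^ p + (1 - w z) * dist z k1 ^ p) ∂μ =
      2⁻¹ * dist x k0 ^ p + 2⁻¹ * dist x k1 ^ p - 8⁻¹ * ∫ z, F z ∂μ := by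
    rw [eF, ← hA, ← hB, ← integral_const_mul, ← integral_const_mul, ← integral_const_mul,
      ← integral_add (pA.const_mul _) (pB.const_mul _),
      ← integral_sub iAB (iD.const_mul _)]
    refine integral_congr_ae (ae_of_all _ fun z => ?_)
    simp only [hw]; ring
  have F0 : ∀ z, V z = 0 → 0 ≤ F z ∧ (F z = 0 → U z = U x) := by
    intro z hz
    have bz := abs_le.1 (bd z)
    have bx := abs_le.1 (bd x)
    have e1 : ∀ z, V z = 0 → dist z k0 = (2 - U z) / 2 := fun z h => by simp [dA, h]
    have e2 : ∀ z, V z = 0 → dist z k1 = (2 + U z) / 2 := fun z h => by simp [dB, h]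
    simp only [hF]
    rw [e1 z hz, e2 z hz, e1 x hV, e2 x hV]
    rcases lt_trichotomy (U z) (U x) with l | l | l
    · have m1 := Real.rpow_lt_rpow (x := (2 + U z) / 2) (y := (2 + U x) / 2) (by linarith)
        (by linarith) hp0
      have m2 := Real.rpow_lt_rpow (x := (2 - U x) / 2) (y := (2 - U z) / 2) (by linarith)
        (by linarith) hp0
      have := mul_pos_of_neg_of_neg (sub_neg.2 l) (b := ((2 + U z) / 2) ^ p - ((2 - U z) / 2) ^ p
        - (((2 + U x) / 2) ^ p - ((2 - U x) / 2) ^ p)) (by linarith)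
      exact ⟨this.le, fun h => absurd h this.ne'⟩
    · simp [l]
    · have m1 := Real.rpow_lt_rpow (x := (2 + U x) / 2) (y := (2 + U z) / 2) (by linarith)
        (by linarith) hp0
      have m2 := Real.rpow_lt_rpow (x := (2 - U z) / 2) (y := (2 - U x) / 2) (by linarith)
        (by linarith) hp0
      have := mul_pos (sub_pos.2 l) (b := ((2 + U z) / 2) ^ p - ((2 - U z) / 2) ^ p
        - (((2 + U x) / 2) ^ p - ((2 - U x) / 2) ^ p)) (by linarith)
      exact ⟨this.le, fun h => absurd h this.ne'⟩
  have Fae : 0 ≤ᵐ[μ] F := by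
    filter_upwards [aV] with z hz using (F0 z hz).1
  have F1 : ∫ z, F z ∂μ = 0 := by
    have := integral_nonneg_of_ae Fae
    rw [eG] at kk
    linarith
  have := (integral_eq_zero_iff_of_nonneg_ae Fae iF).1 F1
  refine eq_dirac_of_ae ?_
  filter_upwards [this, aV] with z h1 h2
  exact c.inj ((F0 z h2).2 h1) (by rw [h2, hV])

lemma lp_tight (hp : 1 ≤ p) {μ : Measure X} {A B C D : X → ℝ≥0∞} (mA : Measurable A)
    (mB : Measurable B) (mC : Measurable C) {α β : ℝ≥0∞} (hα : α ≠ ⊤)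
    (hβ : β ≠ ⊤)
    (h1 : ∫⁻ z, (C z + B z) ^ p ∂μ = β ^ p) (h2 : ∫⁻ z, (A z + D z) ^ p ∂μ = α ^ p)
    (h3 : ∫⁻ z, (A z + B z) ^ p ∂μ = (α + β) ^ p) : ∀ᵐ z ∂μ, C z = 0 := by
  have hp0 : 0 < p := by linarith
  have M := ENNReal.lintegral_Lp_add_le (μ := μ) mA.aemeasurable mB.aemeasurable hp
  simp only [Pi.add_apply] at M
  have rr : ∀ a : ℝ≥0∞, (a ^ p) ^ (1 / p) = a := fun a => by
    rw [← ENNReal.rpow_mul, mul_one_div_cancel hp0.ne', ENNReal.rpow_one]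
  have sr : ∀ a : ℝ≥0∞, (a ^ (1 / p)) ^ p = a := fun a => by
    rw [← ENNReal.rpow_mul, one_div_mul_cancel hp0.ne', ENNReal.rpow_one]
  rw [h3, rr] at M
  have hA : (∫⁻ z, A z ^ p ∂μ) ^ (1 / p) ≤ α := by
    rw [← rr α, ← h2]
    gcongr with z
    exact le_self_add
  have hB : β ≤ (∫⁻ z, B z ^ p ∂μ) ^ (1 / p) := by
    have := M.trans (add_le_add_left hA _)
    exact (ENNReal.add_le_add_iff_left hα).1 this
  have hB' : β ^ p ≤ ∫⁻ z, B z ^ p ∂μ := by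
    rw [← sr (∫⁻ z, B z ^ p ∂μ)]
    exact ENNReal.rpow_le_rpow hB hp0.le
  have le1 : (fun z => B z ^ p) ≤ᵐ[μ] fun z => (C z + B z) ^ p :=
    ae_of_all _ fun z => ENNReal.rpow_le_rpow le_add_self hp0.le
  have fin : β ^ p < ⊤ := ENNReal.rpow_lt_top_of_nonneg hp0.le hβ
  have f2 : ∫⁻ z, B z ^ p ∂μ ≠ ⊤ := ((lintegral_mono_ae le1).trans_lt (by rw [h1]; exact fin)).ne
  have ae1 := ae_eq_of_ae_le_of_lintegral_le le1 f2 (by fun_prop) (by rw [h1]; exact hB')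
  have ae2 := ae_lt_top' (by fun_prop) f2
  filter_upwards [ae1, ae2] with z h1 h2
  have h3 := (ENNReal.strictMono_rpow_of_pos hp0).injective h1
  have h4 : B z ≠ ⊤ := by
    intro hb
    rw [hb, ENNReal.top_rpow_of_pos hp0] at h2
    exact lt_irrefl _ h2
  have : 0 + B z = C z + B z := by rw [zero_add]; exact h3
  exact ((ENNReal.add_left_inj h4).1 this).symm

lemma Chart.fix_all (c : Chart U V Dm) (hp : 1 ≤ p) (h : WI p Φ)
    (hc : ∀ x, Cor U V x → Φ (Measure.dirac x) = Measure.dirac x) (x : X) :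
    Φ (Measure.dirac x) = Measure.dirac x := by
  have hp0 : 0 < p := by linarith
  have hδ := dirac_mem p hp x
  have hμ := h.maps _ hδ
  have i0 := hμ.1
  have bx := c.bd x
  have nU := abs_nonneg (U x)
  have nV := abs_nonneg (V x)
  obtain ⟨y1, a1⟩ := c.surj (U x, 0) (by simp [Dm]; linarith)
  obtain ⟨y2, a2⟩ := c.surj (0, V x) (by simp [Dm]; linarith)
  obtain ⟨y0, a0⟩ := c.surj (0, 0) (by simp [Dm])
  simp only at a0 a1 a2
  have f1 := c.axis hp h hc a1.2
  have f0 := c.axis hp h hc a0.2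
  have f2 := c.swapD.axis hp h (fun x hx => hc x (by
    rcases hx with k | k | k | k <;> simp [Cor, k])) a2.1
  have g1 := h.pot hp f1 hδ
  have g2 := h.pot hp f2 hδ
  have g0 := h.pot hp f0 hδ
  rw [lintegral_dirac] at g0 g1 g2
  have ed : ∀ z y, edist z y = ENNReal.ofReal (|U z - U y| / 2) + ENNReal.ofReal (|V z - V y| / 2) := by
    intro z y
    rw [← ENNReal.ofReal_add (by positivity) (by positivity), edist_dist, c.d, add_div]
  simp only [ed, a1, a2, a0, sub_zero, sub_self, abs_zero, zero_div, ENNReal.ofReal_zero, zero_add,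
    add_zero] at g0 g1 g2
  have mU := c.measU
  have mV := c.measV
  have t1 := lp_tight hp (by fun_prop) (by fun_prop) (by fun_prop) ENNReal.ofReal_ne_top
    ENNReal.ofReal_ne_top g1 g2 g0
  have t2 := lp_tight hp (A := fun z => ENNReal.ofReal (|V z| / 2))
    (B := fun z => ENNReal.ofReal (|U z| / 2)) (C := fun z => ENNReal.ofReal (|V z - V x| / 2))
    (D := fun z => ENNReal.ofReal (|U z - U x| / 2))
    (by fun_prop) (by fun_prop) (by fun_prop)
    (ENNReal.ofReal_ne_top (r := |V x| / 2))
    (ENNReal.ofReal_ne_top (r := |U x| / 2)) (by simpa only [add_comm] using g2)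
    (by simpa only [add_comm] using g1) (by simpa only [add_comm] using g0)
  refine eq_dirac_of_ae ?_
  filter_upwards [t1, t2] with z h1 h2
  have q : ∀ r : ℝ, ENNReal.ofReal (|r| / 2) = 0 → r = 0 := fun r hr => by
    rw [ENNReal.ofReal_eq_zero] at hr
    exact abs_eq_zero.1 (le_antisymm (by linarith) (abs_nonneg _))
  exact c.inj (sub_eq_zero.1 (q _ h1)) (sub_eq_zero.1 (q _ h2))

lemma Chart.square (c : Chart U V Dm) (hp : 1 ≤ p) (h : WI p Φ) (x : X) :
    ∃ y, Φ (Measure.dirac x) = Measure.dirac y := by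
  obtain ⟨U', V', c', hc⟩ := c.fix_corners hp h
  obtain ⟨R, hR, e⟩ := c'.exists_isom c
  obtain ⟨R', hR', r1, r2⟩ := isom_inv hR
  have hΨ := (WI.isom hp hR').comp h
  have key := c.fix_all hp hΨ (fun y hy => by
    rw [hc y (R y) hy (e y).1 (e y).2, Measure.map_dirac' (isom_meas hR'), r1]) x
  refine ⟨R x, ?_⟩
  have := congrArg (fun m => Measure.map R m) key
  rw [Measure.map_dirac' (isom_meas hR), map_inv (isom_meas hR') (isom_meas hR) r2] at this
  exact this

end Sq2

end WR

namespace WR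

open Set Filter Topology
open scoped ENNReal NNReal

lemma max_abs (a b : ℝ) : max |a| |b| = (|a + b| + |a - b|) / 2 := by
  rcases le_total 0 (a + b) with h1 | h1 <;> rcases le_total 0 (a - b) with h2 | h2
  · rw [abs_of_nonneg h1, abs_of_nonneg h2, max_eq_left, abs_of_nonneg (a := a)]
    · ring
    · linarith
    · rw [abs_of_nonneg (a := a) (by linarith)]
      exact abs_le.2 ⟨by linarith, by linarith⟩
  · rw [abs_of_nonneg h1, abs_of_nonpos h2, max_eq_right, abs_of_nonneg (a := b)]
    · ring
    · linarith
    · rw [abs_of_nonneg (a := b) (by linarith)]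
      exact abs_le.2 ⟨by linarith, by linarith⟩
  · rw [abs_of_nonpos h1, abs_of_nonneg h2, max_eq_right, abs_of_nonpos (a := b)]
    · ring
    · linarith
    · rw [abs_of_nonpos (a := b) (by linarith)]
      exact abs_le.2 ⟨by linarith, by linarith⟩
  · rw [abs_of_nonpos h1, abs_of_nonpos h2, max_eq_left, abs_of_nonpos (a := a)]
    · ring
    · linarith
    · rw [abs_of_nonpos (a := a) (by linarith)]
      exact abs_le.2 ⟨by linarith, by linarith⟩

lemma dist_plane (x y : ℝ × ℝ) : dist x y =
    (|(x.1 + x.2) - (y.1 + y.2)| + |(x.1 - x.2) - (y.1 - y.2)|) / 2 := by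
  rw [Prod.dist_eq, Real.dist_eq, Real.dist_eq, max_abs]
  congr 3 <;> ring_nf

lemma chart_plane : Chart (fun x : ℝ × ℝ => x.1 + x.2) (fun x => x.1 - x.2) univ where
  d := dist_plane
  mem := fun _ => mem_univ _
  surj := fun q _ => ⟨((q.1 + q.2) / 2, (q.1 - q.2) / 2), by ring, by ring⟩
  conv := convex_univ

lemma Dm_convex : Convex ℝ Dm := by
  intro a ha b hb s t hs ht hst
  simp only [Dm, mem_ofPred_eq, Prod.fst_add, Prod.snd_add, Prod.smul_fst, Prod.smul_snd,
    smul_eq_mul] at *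
  have h1 := abs_add_le (s * a.1) (t * b.1)
  have h2 := abs_add_le (s * a.2) (t * b.2)
  rw [abs_mul, abs_mul, abs_of_nonneg hs, abs_of_nonneg ht] at h1 h2
  have := mul_le_mul_of_nonneg_left ha hs
  have := mul_le_mul_of_nonneg_left hb ht
  nlinarith

lemma mem_Qs (x : ℝ × ℝ) : x ∈ Qs ↔ max |x.1| |x.2| ≤ 1 := by
  simp only [Qs, mem_Icc, Prod.le_def, max_le_iff, abs_le]
  tauto

lemma chart_square : Chart (fun x : ↥Qs => (x : ℝ × ℝ).1 + (x : ℝ × ℝ).2)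
    (fun x => (x : ℝ × ℝ).1 - (x : ℝ × ℝ).2) Dm where
  d := fun x y => dist_plane x y
  mem := fun x => by
    have := (mem_Qs _).1 x.2
    rw [max_abs] at this
    simp only [Dm, mem_ofPred_eq]; linarith
  surj := fun q hq => ⟨⟨((q.1 + q.2) / 2, (q.1 - q.2) / 2), by
    rw [mem_Qs, max_abs]
    simp only [Dm, mem_ofPred_eq] at hq
    rw [show (q.1 + q.2) / 2 + (q.1 - q.2) / 2 = q.1 by ring,
      show (q.1 + q.2) / 2 - (q.1 - q.2) / 2 = q.2 by ring]
    linarith⟩, by simp only; ring, by simp only; ring⟩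
  conv := Dm_convex

end WR

/-- Isometric rigidity of `𝒲_p(ℝ², d_m)` and `𝒲_p([-1,1]², d_m)` for `p ≥ 1`:
every isometry of the Wasserstein space is induced by a unique isometry of the
underlying space via push-forward. -/
theorem wasserstein_isometric_rigidity (p : ℝ) (hp : 1 ≤ p) :
    (∀ Φ : Measure (ℝ × ℝ) → Measure (ℝ × ℝ), IsWIsometry (ℝ × ℝ) p Φ →
      ∃! T : ℝ × ℝ → ℝ × ℝ, IsIsom T ∧ ∀ μ ∈ WSet (ℝ × ℝ) p, Φ μ = μ.map T) ∧
    (∀ Φ : Measure ↥Qs → Measure ↥Qs, IsWIsometry ↥Qs p Φ →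
      ∃! T : ↥Qs → ↥Qs, IsIsom T ∧ ∀ μ ∈ WSet ↥Qs p, Φ μ = μ.map T) := by
  constructor
  · intro Φ hΦ
    refine WR.rigid hp (fun Ψ h μ hμ => WR.chart_plane.core_univ hp h hμ) (fun Ψ h x => ?_) hΦ
    rcases hp.eq_or_lt with rfl | hp1
    · exact WR.chart_plane.plane1 h x
    · exact WR.plane_pgt hp1 h x
  · intro Φ hΦ
    exact WR.rigid hp (fun Ψ h μ hμ => WR.chart_square.core_Dm hp h hμ)
      (fun Ψ h x => WR.chart_square.square hp h x) hΦ
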